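/- arXiv:2502.09727 — 3 statements merged into one kernel-verified Lean document; each statement's English description precedes it below -/
import Mathlib

section
/- Let M be a connected, noncompact topological manifold without boundary with dim M ≥ 2. If M is contractible, then M has exactly one end. -/
/-- `M` has exactly one end: for every compact `K ⊆ M`, exactly one connected component of
`M \ K` has noncompact closure. -/
def HasOneEnd (M : Type*) [TopologicalSpace M] : Prop :=
  ∀ K : Set M, IsCompact K →
    ∃! C : Set M, (∃ x ∈ Kᶜ, C = connectedComponentIn Kᶜ x) ∧ ¬ IsCompact (closure C)

section Part1

open Set Filter Topology MeasureTheory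
open scoped ContDiff

namespace OneEnd

/-- Standard volume form. -/
noncomputable def vol (n : ℕ) : EuclideanSpace ℝ (Fin n) [⋀^Fin n]→L[ℝ] ℝ :=
  { (EuclideanSpace.basisFun (Fin n) ℝ).toBasis.det with
    cont := by
      have : Continuous fun v : Fin n → EuclideanSpace ℝ (Fin n) =>
          ((EuclideanSpace.basisFun (Fin n) ℝ).toBasis.toMatrix v).det := by
        apply Continuous.matrix_det
        refine continuous_pi fun i => continuous_pi fun j => ?_
        simp only [Module.Basis.toMatrix_apply, OrthonormalBasis.coe_toBasis_repr_apply,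
          EuclideanSpace.basisFun_repr]
        fun_prop
      exact this }

lemma vol_apply (n : ℕ) (v : Fin n → EuclideanSpace ℝ (Fin n)) :
    vol n v = (EuclideanSpace.basisFun (Fin n) ℝ).toBasis.det v := rfl

lemma vol_map_basis (n : ℕ) (f : EuclideanSpace ℝ (Fin n) →L[ℝ] EuclideanSpace ℝ (Fin n)) :
    vol n (fun j => f (EuclideanSpace.basisFun (Fin n) ℝ j)) = f.det := by
  rw [vol_apply]
  have := (EuclideanSpace.basisFun (Fin n) ℝ).toBasis.det_comp (f : _ →ₗ[ℝ] _)
    (EuclideanSpace.basisFun (Fin n) ℝ).toBasis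
  rw [Module.Basis.det_self, mul_one] at this
  rw [ContinuousLinearMap.det, ← this]
  congr 1

section
variable {n : ℕ} (χ ρ : EuclideanSpace ℝ (Fin n) → ℝ)
  (H : ℝ × EuclideanSpace ℝ (Fin n) → EuclideanSpace ℝ (Fin n))

/-- components -/
noncomputable def comp (w : Fin n → ℝ × EuclideanSpace ℝ (Fin n))
    (q : ℝ × EuclideanSpace ℝ (Fin n)) : ℝ :=
  χ q.2 * (ρ (H q) * vol n (fun j => fderiv ℝ H q (w j)))

lemma vol_contDiff : ContDiff ℝ ∞ (fun v : Fin n → EuclideanSpace ℝ (Fin n) => vol n v) :=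
  ContinuousMultilinearMap.contDiff (vol n).toContinuousMultilinearMap

variable {χ ρ H}
lemma comp_contDiff (hχ : ContDiff ℝ ∞ χ) (hρ : ContDiff ℝ ∞ ρ) (hH : ContDiff ℝ ∞ H)
    (w : Fin n → ℝ × EuclideanSpace ℝ (Fin n)) : ContDiff ℝ ∞ (comp χ ρ H w) := by
  unfold comp
  refine (hχ.comp contDiff_snd).mul ((hρ.comp hH).mul (vol_contDiff.comp ?_))
  refine contDiff_pi.2 fun j => ?_
  exact (hH.fderiv_right (m := ∞) (by simp)).clm_apply contDiff_const

lemma sum_comp_eq_zero (hχ : ContDiff ℝ ∞ χ) (hρ : ContDiff ℝ ∞ ρ) (hH : ContDiff ℝ ∞ H)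
    (hcond : ∀ q, fderiv ℝ χ q.2 ≠ 0 → ρ (H q) = 0)
    (v : Fin (n + 1) → ℝ × EuclideanSpace ℝ (Fin n)) (q : ℝ × EuclideanSpace ℝ (Fin n)) :
    ∑ i : Fin (n+1), (-1 : ℝ) ^ i.val * fderiv ℝ (comp χ ρ H (i.removeNth v)) q (v i) = 0 := by
  let η : EuclideanSpace ℝ (Fin n) → EuclideanSpace ℝ (Fin n) [⋀^Fin n]→L[ℝ] ℝ :=
    fun y => ρ y • vol n
  have hη : Differentiable ℝ η :=
    (hρ.differentiable (by simp)).smul_const _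
  let om : ℝ × EuclideanSpace ℝ (Fin n) → (ℝ × EuclideanSpace ℝ (Fin n)) [⋀^Fin n]→L[ℝ] ℝ :=
    fun q => (η (H q)).compContinuousLinearMap (fderiv ℝ H q)
  have hHd : Differentiable ℝ H := hH.differentiable (by simp)
  have hH2 : Differentiable ℝ (fderiv ℝ H) :=
    (hH.fderiv_right (m := ∞) (by simp)).differentiable (by simp)
  have hom : DifferentiableAt ℝ om q := by
    have := (hη.comp hHd) q
    exact DifferentiableAt.continuousAlternatingMapCompContinuousLinearMap this (hH2 q)
  have hz : extDeriv om q = 0 := by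
    rw [extDeriv_pullback (r := 2) (hη _) (hH.contDiffAt.of_le ENat.LEInfty.out) (by simp)]
    ext v
    change _ = (0 : ℝ)
    rw [ContinuousAlternatingMap.compContinuousLinearMap_apply]
    refine AlternatingMap.map_linearDependent (extDeriv η (H q)).toAlternatingMap _ ?_
    intro hl
    have := hl.fintype_card_le_finrank
    simp at this
  have h1 : ∑ i : Fin (n+1), (-1 : ℝ) ^ i.val * fderiv ℝ (om · (i.removeNth v)) q (v i) = 0 := by
    have := extDeriv_apply hom v
    rw [hz] at this
    simpa using this.symm
  have h2 : ∀ i : Fin (n+1), fderiv ℝ (comp χ ρ H (i.removeNth v)) q (v i) =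
      χ q.2 * fderiv ℝ (om · (i.removeNth v)) q (v i) := by
    intro i
    have e : comp χ ρ H (i.removeNth v) = fun q => (χ q.2) * om q (i.removeNth v) := by
      ext q'
      simp [comp, om, η, Function.comp_def]
    have hd : DifferentiableAt ℝ (fun q => om q (i.removeNth v)) q :=
      hom.continuousAlternatingMap_apply_const _
    have hχd : DifferentiableAt ℝ (fun q : ℝ × EuclideanSpace ℝ (Fin n) => χ q.2) q :=
      ((hχ.differentiable (by simp)) q.2).comp q differentiableAt_snd
    rw [e, fderiv_fun_mul hχd hd]
    simp only [add_apply, smul_apply, smul_eq_mul]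
    by_cases h : fderiv ℝ χ q.2 = 0
    · have : fderiv ℝ (fun q : ℝ × EuclideanSpace ℝ (Fin n) => χ q.2) q = 0 := by
        have h3 := fderiv_comp (𝕜 := ℝ) q ((hχ.differentiable (by simp)) q.2) (differentiableAt_snd (𝕜 := ℝ) (p := q))
        rw [h] at h3
        simpa [Function.comp_def] using h3
      rw [this]; simp
    · have : om q (i.removeNth v) = 0 := by simp [om, η, hcond q h]
      rw [this]; simp
  simp_rw [h2]
  rw [← mul_zero (χ q.2), ← h1, Finset.mul_sum]
  exact Finset.sum_congr rfl fun i _ => by ring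

end

lemma integral_fderiv_eq_zero {n : ℕ} {g : EuclideanSpace ℝ (Fin n) → ℝ}
    (hg : ContDiff ℝ ∞ g) (hc : HasCompactSupport g) (v : EuclideanSpace ℝ (Fin n)) :
    ∫ x, fderiv ℝ g x v = 0 := by
  have h := integral_mul_fderiv_eq_neg_fderiv_mul_of_integrable (μ := volume)
    (f := fun _ : EuclideanSpace ℝ (Fin n) => (1:ℝ)) (g := g) (v := v) (by simp) ?_ ?_
    (fun x _ => by fun_prop) (fun x _ => (hg.differentiable (by simp)) x)
  · simpa using h
  · simp only [one_mul]
    exact ((hg.continuous_fderiv (by simp)).clm_apply continuous_const).integrable_of_hasCompactSupport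
      (hc.fderiv_apply ℝ v)
  · simpa using hg.continuous.integrable_of_hasCompactSupport hc

lemma hasDerivAt_integral_compact {n : ℕ} {a : ℝ × EuclideanSpace ℝ (Fin n) → ℝ}
    (ha : ContDiff ℝ ∞ a) {C : Set (EuclideanSpace ℝ (Fin n))} (hC : IsCompact C)
    (hs : ∀ t x, x ∉ C → a (t, x) = 0) (t : ℝ) :
    HasDerivAt (fun t => ∫ x, a (t, x)) (∫ x, fderiv ℝ a (t, x) (1, 0)) t := by
  have hd : Continuous fun q => fderiv ℝ a q (1, 0) :=
    (ha.continuous_fderiv (by simp)).clm_apply continuous_const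
  have hF' : ∀ t x, HasDerivAt (fun t => a (t, x)) (fderiv ℝ a (t, x) (1, 0)) t := by
    intro t x
    have h1 : HasDerivAt (fun t : ℝ => (t, x)) ((1 : ℝ), (0 : EuclideanSpace ℝ (Fin n))) t :=
      (hasDerivAt_id t).prodMk (hasDerivAt_const t x)
    exact ((ha.differentiable (by simp)) (t, x)).hasFDerivAt.comp_hasDerivAt t h1
  have hz : ∀ t x, x ∉ C → fderiv ℝ a (t, x) (1, 0) = 0 := by
    intro t x hx
    have h1 := hF' t x
    have h2 : HasDerivAt (fun t => a (t, x)) 0 t := by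
      have : (fun t => a (t, x)) = fun _ => 0 := funext fun t => hs t x hx
      rw [this]; exact hasDerivAt_const _ _
    exact h1.unique h2
  obtain ⟨B, hB⟩ := ((isCompact_Icc (a := t - 1) (b := t + 1)).prod hC).exists_bound_of_continuousOn
    hd.continuousOn
  have hinn : ∀ {b : EuclideanSpace ℝ (Fin n) → ℝ}, Continuous b → (∀ x, x ∉ C → b x = 0) →
      Integrable b := fun hb h0 => hb.integrable_of_hasCompactSupport
        (HasCompactSupport.intro hC h0)
  refine (hasDerivAt_integral_of_dominated_loc_of_deriv_le (μ := volume)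
    (F := fun t x => a (t, x)) (F' := fun t x => fderiv ℝ a (t, x) (1, 0))
    (bound := C.indicator fun _ => B)
    (Icc_mem_nhds (by linarith : t - 1 < t) (by linarith : t < t + 1)) ?_ ?_ ?_ ?_ ?_ ?_).2
  · refine Eventually.of_forall fun s => ?_
    exact (ha.continuous.comp (by fun_prop : Continuous fun x => (s, x))).aestronglyMeasurable
  · exact hinn (ha.continuous.comp (by fun_prop : Continuous fun x => (t, x))) (hs t)
  · exact (hd.comp (by fun_prop : Continuous fun x => (t, x))).aestronglyMeasurable
  · refine Eventually.of_forall fun x s hsI => ?_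
    by_cases hx : x ∈ C
    · simp only [indicator_of_mem hx]; exact hB (s, x) ⟨hsI, hx⟩
    · simp [indicator_of_notMem hx, hz s x hx]
  · exact (integrable_indicator_iff hC.measurableSet).2
      (integrableOn_const hC.measure_lt_top.ne)
  · exact Eventually.of_forall fun x s _ => hF' s x

theorem integral_eq {n : ℕ} {χ ρ : EuclideanSpace ℝ (Fin n) → ℝ}
    {G₀ G₁ : EuclideanSpace ℝ (Fin n) → EuclideanSpace ℝ (Fin n)}
    (hχ : ContDiff ℝ ∞ χ) (hχc : HasCompactSupport χ) (hρ : ContDiff ℝ ∞ ρ)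
    (h₀ : ContDiff ℝ ∞ G₀) (h₁ : ContDiff ℝ ∞ G₁)
    (hcond : ∀ x, fderiv ℝ χ x ≠ 0 → ∀ s ∈ Icc (0:ℝ) 1, ρ (G₀ x + s • (G₁ x - G₀ x)) = 0) :
    ∫ x, χ x * (ρ (G₀ x) * (fderiv ℝ G₀ x).det) = ∫ x, χ x * (ρ (G₁ x) * (fderiv ℝ G₁ x).det) := by
  let H : ℝ × EuclideanSpace ℝ (Fin n) → EuclideanSpace ℝ (Fin n) :=
    fun q => G₀ q.2 + Real.smoothTransition q.1 • (G₁ q.2 - G₀ q.2)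
  have hH : ContDiff ℝ ∞ H :=
    (h₀.comp contDiff_snd).add ((Real.smoothTransition.contDiff.comp contDiff_fst).smul
      ((h₁.comp contDiff_snd).sub (h₀.comp contDiff_snd)))
  have hc : ∀ q : ℝ × EuclideanSpace ℝ (Fin n), fderiv ℝ χ q.2 ≠ 0 → ρ (H q) = 0 := fun q hq =>
    hcond _ hq _ ⟨Real.smoothTransition.nonneg _, Real.smoothTransition.le_one _⟩
  let e := EuclideanSpace.basisFun (Fin n) ℝ
  let v : Fin (n + 1) → ℝ × EuclideanSpace ℝ (Fin n) :=
    Fin.cons (1, 0) (fun j => (0, e j))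
  let I : ℝ → ℝ := fun t => ∫ x, comp χ ρ H (Fin.removeNth 0 v) (t, x)
  have hsupp : ∀ w t x, x ∉ tsupport χ → comp χ ρ H w (t, x) = 0 := by
    intro w t x hx
    simp [comp, image_eq_zero_of_notMem_tsupport hx]
  have hI : ∀ t, HasDerivAt I 0 t := by
    intro t
    have h := hasDerivAt_integral_compact (comp_contDiff hχ hρ hH (Fin.removeNth 0 v)) hχc
      (hsupp _) t
    convert h using 1
    have h3 : ∀ x, fderiv ℝ (comp χ ρ H (Fin.removeNth 0 v)) (t, x) (1, 0) =
        ∑ j : Fin n, (-(-1 : ℝ) ^ (j.succ).val) *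
          fderiv ℝ (fun x => comp χ ρ H (j.succ.removeNth v) (t, x)) x (e j) := by
      intro x
      have h4 := sum_comp_eq_zero hχ hρ hH hc v (t, x)
      rw [Fin.sum_univ_succ] at h4
      simp only [Fin.val_zero, pow_zero, one_mul] at h4
      have h5 : ∀ j : Fin n, fderiv ℝ (fun x => comp χ ρ H (j.succ.removeNth v) (t, x)) x (e j)
          = fderiv ℝ (comp χ ρ H (j.succ.removeNth v)) (t, x) (v j.succ) := by
        intro j
        have h6 : HasFDerivAt (fun x : EuclideanSpace ℝ (Fin n) => (t, x))
          (ContinuousLinearMap.inr ℝ ℝ (EuclideanSpace ℝ (Fin n))) x := hasFDerivAt_prodMk_right t x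
        have h7 := (((comp_contDiff hχ hρ hH (j.succ.removeNth v)).differentiable
          (by simp)) (t, x)).hasFDerivAt.comp x h6
        have h8 := h7.fderiv
        simp only [Function.comp_def] at h8
        rw [h8]
        simp [v]
      have h9 : v 0 = (1, 0) := rfl
      rw [h9] at h4
      rw [eq_neg_of_add_eq_zero_left h4, ← Finset.sum_neg_distrib]
      refine Finset.sum_congr rfl fun j _ => ?_
      rw [h5 j]; ring
    simp_rw [h3]
    have hsm : ∀ j : Fin n, ContDiff ℝ ∞ fun x => comp χ ρ H (j.succ.removeNth v) (t, x) :=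
      fun j => (comp_contDiff hχ hρ hH _).comp (contDiff_prodMk_right t)
    have hcs : ∀ j : Fin n, HasCompactSupport fun x => comp χ ρ H (j.succ.removeNth v) (t, x) :=
      fun j => HasCompactSupport.intro hχc (hsupp _ t)
    rw [integral_finsetSum]
    · symm
      refine Finset.sum_eq_zero fun j _ => ?_
      rw [integral_const_mul, integral_fderiv_eq_zero (hsm j) (hcs j), mul_zero]
    · intro j _
      refine Integrable.const_mul ?_ _
      exact (((hsm j).continuous_fderiv (by simp)).clm_apply
        continuous_const).integrable_of_hasCompactSupport ((hcs j).fderiv_apply ℝ _)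
  have hconst : I 0 = I 1 :=
    is_const_of_deriv_eq_zero (fun t => (hI t).differentiableAt) (fun t => (hI t).deriv) 0 1
  have hval : ∀ (t : ℝ) (G : EuclideanSpace ℝ (Fin n) → EuclideanSpace ℝ (Fin n)),
      (∀ x, H (t, x) = G x) → I t = ∫ x, χ x * (ρ (G x) * (fderiv ℝ G x).det) := by
    intro t G hG
    refine integral_congr_ae (Eventually.of_forall fun x => ?_)
    simp only [comp, hG]
    congr 2
    rw [← vol_map_basis]
    congr 1
    ext1 j
    have h6 : HasFDerivAt (fun x : EuclideanSpace ℝ (Fin n) => (t, x))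
          (ContinuousLinearMap.inr ℝ ℝ (EuclideanSpace ℝ (Fin n))) x := hasFDerivAt_prodMk_right t x
    have h7 := ((hH.differentiable (by simp)) (t, x)).hasFDerivAt.comp x h6
    have h8 : H ∘ (fun x : EuclideanSpace ℝ (Fin n) => (t, x)) = G := funext hG
    rw [h8] at h7
    rw [h7.fderiv]
    simp [v, Fin.removeNth, e]
  rw [hval 0 G₀ (by simp [H]), hval 1 G₁ (by simp [H])] at hconst
  exact hconst

end OneEnd

end Part1

section Part2

open Set Filter Topology MeasureTheory
open scoped ContDiff
namespace OneEnd

theorem local_homeo {n : ℕ} {G : EuclideanSpace ℝ (Fin n) → EuclideanSpace ℝ (Fin n)}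
    (hG : ContDiff ℝ ∞ G) {z : EuclideanSpace ℝ (Fin n)} (hz : (fderiv ℝ G z).det ≠ 0) :
    ∃ e : OpenPartialHomeomorph (EuclideanSpace ℝ (Fin n)) (EuclideanSpace ℝ (Fin n)),
      z ∈ e.source ∧ ∀ x, e x = G x := by
  have h1 : HasStrictFDerivAt G (fderiv ℝ G z) z :=
    (hG.contDiffAt).hasStrictFDerivAt (by simp)
  have h2 : ((fderiv ℝ G z).toContinuousLinearEquivOfDetNeZero hz :
    EuclideanSpace ℝ (Fin n) →L[ℝ] EuclideanSpace ℝ (Fin n)) = fderiv ℝ G z :=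
    ContinuousLinearMap.coe_toContinuousLinearEquivOfDetNeZero _ _
  rw [← h2] at h1
  exact ⟨h1.toOpenPartialHomeomorph G, h1.mem_toOpenPartialHomeomorph_source, fun x => rfl⟩

theorem finite_zeros_of_isolated {X : Type*} [TopologicalSpace X]
    {Z : Set X} (hZC : IsCompact Z)
    (h : ∀ z ∈ Z, ∃ U ∈ 𝓝 z, ∀ x ∈ U, x ∈ Z → x = z) : Z.Finite := by
  choose! U hU hU2 using h
  obtain ⟨t, ht, hcov⟩ := hZC.elim_nhds_subcover U hU
  refine t.finite_toSet.subset fun x hx => ?_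
  obtain ⟨z, hz, hxz⟩ := mem_iUnion₂.1 (hcov hx)
  rw [hU2 z (ht z hz) x hxz hx]
  exact hz

theorem det_continuous {n : ℕ} {G : EuclideanSpace ℝ (Fin n) → EuclideanSpace ℝ (Fin n)}
    (hG : ContDiff ℝ ∞ G) : Continuous fun x => (fderiv ℝ G x).det :=
  ContinuousLinearMap.continuous_det.comp (hG.continuous_fderiv (by simp))

theorem zeros_finite {n : ℕ} {C : Set (EuclideanSpace ℝ (Fin n))} (hC : IsCompact C)
    {G : EuclideanSpace ℝ (Fin n) → EuclideanSpace ℝ (Fin n)}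
    (hG : ContDiff ℝ ∞ G) (hreg : ∀ x ∈ C, G x = 0 → (fderiv ℝ G x).det ≠ 0) :
    {x ∈ C | G x = 0}.Finite := by
  refine finite_zeros_of_isolated (hC.inter_right (isClosed_eq hG.continuous continuous_const))
    fun z hz => ?_
  obtain ⟨e, he, hee⟩ := local_homeo hG (hreg z hz.1 hz.2)
  refine ⟨e.source, e.open_source.mem_nhds he, fun x hx hxZ => ?_⟩
  exact e.injOn hx he (by rw [hee, hee, hxZ.2, hz.2])

theorem local_count {n : ℕ} {C : Set (EuclideanSpace ℝ (Fin n))} (hC : IsCompact C)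
    {G : EuclideanSpace ℝ (Fin n) → EuclideanSpace ℝ (Fin n)}
    (hG : ContDiff ℝ ∞ G) (hreg : ∀ x ∈ C, G x = 0 → (fderiv ℝ G x).det ≠ 0)
    (hinn : ∀ x ∈ C, G x = 0 → x ∈ interior C) :
    ∃ ε₀ > 0, ∃ m : ℤ, (m : ZMod 2) = ({x ∈ C | G x = 0}.ncard : ZMod 2) ∧
      ∀ χ ρ : EuclideanSpace ℝ (Fin n) → ℝ, Continuous χ → Continuous ρ →
        (∀ x ∉ C, χ x = 0) → (∀ y, ε₀ ≤ ‖y‖ → ρ y = 0) → ∫ y, ρ y = 1 →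
        (∀ x ∈ C, ρ (G x) ≠ 0 → χ x = 1) →
        ∫ x, χ x * (ρ (G x) * (fderiv ℝ G x).det) = m := by
  set Z : Set (EuclideanSpace ℝ (Fin n)) := {x ∈ C | G x = 0} with hZ
  have hfin : Z.Finite := zeros_finite hC hG hreg
  have hdet := det_continuous hG
  have hex : ∀ z, ∃ e : OpenPartialHomeomorph (EuclideanSpace ℝ (Fin n))
      (EuclideanSpace ℝ (Fin n)), z ∈ Z → (z ∈ e.source ∧ ∀ x, e x = G x) := by
    intro z
    by_cases hz : z ∈ Z
    · obtain ⟨e, he⟩ := local_homeo hG (hreg z hz.1 hz.2)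
      exact ⟨e, fun _ => he⟩
    · exact ⟨OpenPartialHomeomorph.refl _, fun h => absurd h hz⟩
  choose e he using hex
  obtain ⟨U, hU, hdisj⟩ := hfin.t2_separation
  set V : EuclideanSpace ℝ (Fin n) → Set (EuclideanSpace ℝ (Fin n)) := fun z =>
    U z ∩ (e z).source ∩ interior C ∩ {x | 0 < (fderiv ℝ G z).det * (fderiv ℝ G x).det} with hV
  have hVo : ∀ z, IsOpen (V z) := fun z =>
    (((hU z).2.inter (e z).open_source).inter isOpen_interior).inter
      (isOpen_lt continuous_const (continuous_const.mul hdet))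
  have hzV : ∀ z ∈ Z, z ∈ V z := fun z hz =>
    ⟨⟨⟨(hU z).1, (he z hz).1⟩, hinn z hz.1 hz.2⟩, mul_self_pos.2 (hreg z hz.1 hz.2)⟩
  have hVdisj : Z.PairwiseDisjoint V := fun a ha b hb hab =>
    (hdisj ha hb hab).mono (fun x hx => hx.1.1.1) (fun x hx => hx.1.1.1)
  have hinj : ∀ z ∈ Z, InjOn G (V z) := fun z hz x hx y hy hxy =>
    (e z).injOn hx.1.1.2 hy.1.1.2 (by rw [(he z hz).2, (he z hz).2, hxy])
  have himo : ∀ z ∈ Z, IsOpen (G '' V z) := fun z hz => by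
    have := (e z).isOpen_image_of_subset_source (hVo z) (fun x hx => hx.1.1.2)
    rwa [image_congr (fun x _ => (he z hz).2 x)] at this
  have hballs : ∀ z, ∃ ε > 0, z ∈ Z → Metric.ball (0 : EuclideanSpace ℝ (Fin n)) ε ⊆ G '' V z := by
    intro z
    by_cases hz : z ∈ Z
    · obtain ⟨ε, hε, h⟩ := Metric.isOpen_iff.1 (himo z hz) 0 ⟨z, hzV z hz, hz.2⟩
      exact ⟨ε, hε, fun _ => h⟩
    · exact ⟨1, one_pos, fun h => absurd h hz⟩
  choose ε hε hball using hballs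
  have hout : ∃ δ > 0, ∀ x ∈ C, (∀ z ∈ Z, x ∉ V z) → δ ≤ ‖G x‖ := by
    have hcpt : IsCompact (C \ ⋃ z ∈ Z, V z) :=
      hC.diff (isOpen_biUnion fun z _ => hVo z)
    rcases (C \ ⋃ z ∈ Z, V z).eq_empty_or_nonempty with h0 | h0
    · refine ⟨1, one_pos, fun x hx hxV => ?_⟩
      have : x ∈ C \ ⋃ z ∈ Z, V z := ⟨hx, by simpa using hxV⟩
      simp [h0] at this
    · obtain ⟨x0, hx0, hmin⟩ := hcpt.exists_isMinOn h0 (hG.continuous.norm.continuousOn)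
      refine ⟨‖G x0‖, ?_, fun x hx hxV => hmin ⟨hx, by simpa using hxV⟩⟩
      refine norm_pos_iff.2 fun h => hx0.2 (mem_biUnion (x := x0) ⟨hx0.1, h⟩ (hzV _ ⟨hx0.1, h⟩))
  obtain ⟨δ, hδ, hδ2⟩ := hout
  have hmin : ∃ ε₀ > 0, ε₀ ≤ δ ∧ ∀ z ∈ Z, ε₀ ≤ ε z := by
    have : ∀ᶠ t in 𝓝[>] (0:ℝ), ∀ z ∈ Z, t ≤ ε z := by
      rw [hfin.eventually_all]
      exact fun z _ => (eventually_le_nhds (hε z)).filter_mono nhdsWithin_le_nhds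
    obtain ⟨t, ht⟩ := ((this.and ((eventually_le_nhds hδ).filter_mono
      nhdsWithin_le_nhds)).and self_mem_nhdsWithin).exists
    exact ⟨t, ht.2, ht.1.2, ht.1.1⟩
  obtain ⟨ε₀, hε₀, hεδ, hεz⟩ := hmin
  refine ⟨ε₀, hε₀, ∑ z ∈ hfin.toFinset, (SignType.sign (fderiv ℝ G z).det : ℤ), ?_, ?_⟩
  · rw [ncard_eq_toFinset_card Z hfin, Int.cast_sum, Finset.cast_card]
    refine Finset.sum_congr rfl fun z hz => ?_
    have hz : z ∈ Z := by simpa using hz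
    rcases lt_or_gt_of_ne (hreg z hz.1 hz.2) with h | h
    · rw [sign_neg h]; decide
    · rw [sign_pos h]; decide
  · intro χ ρ hχ hρ hχC hρ0 hρ1 hχρ
    set f : EuclideanSpace ℝ (Fin n) → ℝ := fun x => χ x * (ρ (G x) * (fderiv ℝ G x).det) with hf
    have hfc : Continuous f := hχ.mul ((hρ.comp hG.continuous).mul hdet)
    have hfi : Integrable f := hfc.integrable_of_hasCompactSupport
      (HasCompactSupport.intro hC fun x hx => by simp [hf, hχC x hx])
    have h0 : ∀ x, x ∉ ⋃ z ∈ hfin.toFinset, V z → f x = 0 := by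
      intro x hx
      by_cases hxC : x ∈ C
      · have : ε₀ ≤ ‖G x‖ := hεδ.trans (hδ2 x hxC (by simpa using hx))
        simp [hf, hρ0 _ this]
      · simp [hf, hχC x hxC]
    rw [← setIntegral_eq_integral_of_forall_compl_eq_zero h0]
    rw [integral_biUnion_finset _ (fun z _ => (hVo z).measurableSet)
      (by rw [Finite.coe_toFinset]; exact hVdisj) (fun z _ => hfi.integrableOn)]
    rw [Int.cast_sum]
    refine Finset.sum_congr rfl fun z hz => ?_
    have hz : z ∈ Z := by simpa using hz
    have h1 : ∫ x in V z, f x = ∫ x in V z,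
        ((SignType.sign (fderiv ℝ G z).det : ℤ) : ℝ) * (|(fderiv ℝ G x).det| • ρ (G x)) := by
      refine setIntegral_congr_fun (hVo z).measurableSet fun x hx => ?_
      have hx4 : 0 < (fderiv ℝ G z).det * (fderiv ℝ G x).det := hx.2
      have hsg : ((SignType.sign (fderiv ℝ G z).det : ℤ) : ℝ) * |(fderiv ℝ G x).det| =
          (fderiv ℝ G x).det := by
        rcases lt_or_gt_of_ne (hreg z hz.1 hz.2) with h | h
        · have : (fderiv ℝ G x).det < 0 := by
            by_contra hh; push Not at hh; nlinarith
          rw [sign_neg h, abs_of_neg this]; simp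
        · have : 0 < (fderiv ℝ G x).det := by
            by_contra hh; push Not at hh; nlinarith
          rw [sign_pos h, abs_of_pos this]; simp
      simp only [hf]
      by_cases hρx : ρ (G x) = 0
      · simp [hρx]
      · rw [hχρ x (interior_subset hx.1.2) hρx, smul_eq_mul]
        calc _ = (fderiv ℝ G x).det * ρ (G x) := by ring
          _ = _ := by rw [← mul_assoc, hsg]
    rw [h1, integral_const_mul, ← integral_image_eq_integral_abs_det_fderiv_smul volume
      (hVo z).measurableSet (fun x _ => ((hG.differentiable (by simp)) x).hasFDerivAt.hasFDerivWithinAt)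
      (hinj z hz), setIntegral_eq_integral_of_forall_compl_eq_zero, hρ1, mul_one]
    intro y hy
    apply hρ0
    by_contra hlt
    push Not at hlt
    exact hy (hball z hz (by simpa using hlt.trans_le (hεz z hz)))

/-- Smooth parity invariance. -/
theorem smooth_parity {n : ℕ} {C : Set (EuclideanSpace ℝ (Fin n))} (hC : IsCompact C)
    {G₀ G₁ : EuclideanSpace ℝ (Fin n) → EuclideanSpace ℝ (Fin n)}
    (h₀ : ContDiff ℝ ∞ G₀) (h₁ : ContDiff ℝ ∞ G₁)
    (hreg₀ : ∀ x ∈ C, G₀ x = 0 → (fderiv ℝ G₀ x).det ≠ 0)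
    (hreg₁ : ∀ x ∈ C, G₁ x = 0 → (fderiv ℝ G₁ x).det ≠ 0)
    (hseg : ∀ x ∈ frontier C, ∀ s ∈ Icc (0:ℝ) 1, G₀ x + s • (G₁ x - G₀ x) ≠ 0) :
    ({x ∈ C | G₀ x = 0}.ncard : ZMod 2) = ({x ∈ C | G₁ x = 0}.ncard : ZMod 2) := by
  have hinn : ∀ x ∈ C, x ∉ interior C → x ∈ frontier C := fun x hx hx2 =>
    ⟨subset_closure hx, hx2⟩
  obtain ⟨ε₀, hε₀, m₀, hm₀, H₀⟩ := local_count hC h₀ hreg₀ (fun x hx h => by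
    by_contra hh; exact hseg x (hinn x hx hh) 0 (by simp) (by simp [h]))
  obtain ⟨ε₁, hε₁, m₁, hm₁, H₁⟩ := local_count hC h₁ hreg₁ (fun x hx h => by
    by_contra hh; exact hseg x (hinn x hx hh) 1 (by simp) (by simp [h]))
  set Φ : EuclideanSpace ℝ (Fin n) × ℝ → EuclideanSpace ℝ (Fin n) :=
    fun q => G₀ q.1 + q.2 • (G₁ q.1 - G₀ q.1) with hΦ
  have hΦc : Continuous Φ := by
    have := h₀.continuous; have := h₁.continuous; fun_prop
  have hfr : ∃ δ > 0, ∀ x ∈ frontier C, ∀ s ∈ Icc (0:ℝ) 1, δ ≤ ‖Φ (x, s)‖ := by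
    have hcpt : IsCompact (frontier C ×ˢ Icc (0:ℝ) 1) :=
      (hC.of_isClosed_subset isClosed_frontier hC.isClosed.frontier_subset).prod isCompact_Icc
    rcases (frontier C ×ˢ Icc (0:ℝ) 1).eq_empty_or_nonempty with h | h
    · refine ⟨1, one_pos, fun x hx s hs => ?_⟩
      have : (x, s) ∈ frontier C ×ˢ Icc (0:ℝ) 1 := ⟨hx, hs⟩
      simp only [h, mem_empty_iff_false] at this
    · obtain ⟨q, hq, hmin⟩ := hcpt.exists_isMinOn h hΦc.norm.continuousOn
      exact ⟨‖Φ q‖, norm_pos_iff.2 (hseg q.1 hq.1 q.2 hq.2), fun x hx s hs => hmin ⟨hx, hs⟩⟩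
  obtain ⟨δ, hδ, hδ2⟩ := hfr
  set ε := min (min ε₀ ε₁) (δ / 2) with hε
  have hεpos : 0 < ε := lt_min (lt_min hε₀ hε₁) (by linarith)
  have hεδ : ε < δ := (min_le_right _ _).trans_lt (by linarith)
  set N : Set (EuclideanSpace ℝ (Fin n)) :=
    Prod.fst '' ((C ×ˢ Icc (0:ℝ) 1) ∩ {q | ‖Φ q‖ ≤ ε}) with hN
  have hNc : IsCompact N := ((hC.prod isCompact_Icc).inter_right
    (isClosed_le hΦc.norm continuous_const)).image continuous_fst
  have hNi : N ⊆ interior C := by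
    rintro x ⟨q, ⟨hq, hq2⟩, rfl⟩
    by_contra hh
    exact absurd ((hδ2 _ (hinn _ hq.1 hh) _ hq.2).trans hq2) (not_le.2 hεδ)
  obtain ⟨χ, hχ1, hχ0, -⟩ := exists_contMDiffMap_one_nhds_of_subset_interior
    (n := (⊤ : ℕ∞)) (modelWithCornersSelf ℝ (EuclideanSpace ℝ (Fin n))) hNc.isClosed hNi
  have hχs : ContDiff ℝ ∞ χ := χ.contMDiff.contDiff
  have hχc : HasCompactSupport χ := HasCompactSupport.intro hC hχ0
  let b : ContDiffBump (0 : EuclideanSpace ℝ (Fin n)) := ⟨ε / 2, ε, by linarith, by linarith⟩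
  have hρs : ContDiff ℝ ∞ (b.normed volume) := b.contDiff_normed
  have hρ0 : ∀ y, ε ≤ ‖y‖ → b.normed volume y = 0 := by
    intro y hy
    by_contra h
    have : y ∈ Function.support (b.normed volume) := h
    rw [b.support_normed_eq] at this
    have : ‖y‖ < ε := by simpa using this
    linarith
  have hχN : ∀ x ∈ C, ∀ s ∈ Icc (0:ℝ) 1, b.normed volume (Φ (x, s)) ≠ 0 → x ∈ N := by
    intro x hx s hs h
    exact ⟨(x, s), ⟨⟨hx, hs⟩, by by_contra hh; exact h (hρ0 _ (not_le.1 hh).le)⟩, rfl⟩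
  have hχN1 : ∀ x ∈ N, χ x = 1 := fun x hx => hχ1.self_of_nhdsSet x hx
  have key := integral_eq hχs hχc hρs h₀ h₁ (by
    intro x hx s hs
    by_contra h
    by_cases hxC : x ∈ C
    · have hxN := hχN x hxC s hs h
      have : χ =ᶠ[𝓝 x] fun _ => (1:ℝ) := hχ1.filter_mono (nhds_le_nhdsSet hxN)
      exact hx (by rw [this.fderiv_eq]; simp)
    · have : χ =ᶠ[𝓝 x] fun _ => (0:ℝ) := by
        filter_upwards [hC.isClosed.isOpen_compl.mem_nhds hxC] with y hy using hχ0 y hy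
      exact hx (by rw [this.fderiv_eq]; simp))
  rw [H₀ χ _ hχs.continuous hρs.continuous hχ0 (fun y hy => hρ0 y
      (((min_le_left _ _).trans (min_le_left _ _)).trans hy)) b.integral_normed
      (fun x hx h => hχN1 x (hχN x hx 0 (by simp) (by simpa [hΦ] using h))),
    H₁ χ _ hχs.continuous hρs.continuous hχ0 (fun y hy => hρ0 y
      (((min_le_left _ _).trans (min_le_right _ _)).trans hy)) b.integral_normed
      (fun x hx h => hχN1 x (hχN x hx 1 (by simp) (by simpa [hΦ] using h)))] at key
  rw [← hm₀, ← hm₁, Int.cast_injective key]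

theorem segment_ne {E : Type*} [NormedAddCommGroup E] [NormedSpace ℝ E] {a b v : E}
    (ha : ‖a - v‖ < ‖v‖) (hb : ‖b - v‖ < ‖v‖) {s : ℝ} (hs : s ∈ Icc (0:ℝ) 1) :
    ‖a + s • (b - a) - v‖ < ‖v‖ := by
  have := (convex_ball v ‖v‖).add_smul_sub_mem (x := a) (y := b) (by simpa [dist_eq_norm] using ha)
    (by simpa [dist_eq_norm] using hb) hs
  simpa [dist_eq_norm] using this

theorem ne_zero_of_close {E : Type*} [NormedAddCommGroup E] {a v : E}
    (ha : ‖a - v‖ < ‖v‖) : a ≠ 0 := by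
  rintro rfl
  simp at ha

end OneEnd

end Part2

section Part3

open Set Filter Topology MeasureTheory
open scoped ContDiff
namespace OneEnd

/-- Smooth approximation with prescribed regular values. -/
theorem approx_regular {n : ℕ} {C : Set (EuclideanSpace ℝ (Fin n))} (hC : IsCompact C)
    {F : EuclideanSpace ℝ (Fin n) → EuclideanSpace ℝ (Fin n)} (hF : ContinuousOn F C)
    {δ : ℝ} (hδ : 0 < δ) {Y : Set (EuclideanSpace ℝ (Fin n))} (hY : Y.Countable) :
    ∃ G : EuclideanSpace ℝ (Fin n) → EuclideanSpace ℝ (Fin n), ContDiff ℝ ∞ G ∧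
      (∀ x ∈ C, ‖G x - F x‖ < δ) ∧ ∀ x, G x ∈ Y → (fderiv ℝ G x).det ≠ 0 := by
  obtain ⟨Fe, hFe⟩ := ContinuousMap.exists_restrict_eq (Y := EuclideanSpace ℝ (Fin n))
    hC.isClosed ⟨_, hF.restrict⟩
  have hFe' : ∀ x ∈ C, Fe x = F x := fun x hx => by
    have := congrArg (fun f => f ⟨x, hx⟩) hFe
    simpa using this
  obtain ⟨S, hS, hSC⟩ : ∃ S : EuclideanSpace ℝ (Fin n) → EuclideanSpace ℝ (Fin n),
      ContDiff ℝ ∞ S ∧ ∀ x ∈ C, ‖S x - Fe x‖ < δ / 2 := by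
    obtain ⟨R, hR⟩ := hC.isBounded.subset_closedBall (0 : EuclideanSpace ℝ (Fin n))
    have hunif := (isCompact_closedBall (0 : EuclideanSpace ℝ (Fin n)) (R + 1)).uniformContinuousOn_of_continuous
      Fe.continuous.continuousOn
    obtain ⟨η, hη, hη2⟩ := Metric.uniformContinuousOn_iff.1 hunif (δ / 3) (by positivity)
    obtain ⟨g, hg, hg2⟩ := Fe.continuous.exists_contDiff_dist_le_of_forall_mem_ball_dist_le
      (lt_min hη one_pos)
    refine ⟨g, hg, fun x hx => ?_⟩
    rw [← dist_eq_norm]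
    have hx0 := hR hx
    simp only [Metric.mem_closedBall] at hx0
    refine (hg2 x (δ / 3) fun y hy => ?_).trans_lt (by linarith)
    have hy1 : dist y x < η := (Metric.mem_ball.1 hy).trans_le (min_le_left _ _)
    have hy2 : dist y x < 1 := (Metric.mem_ball.1 hy).trans_le (min_le_right _ _)
    refine (hη2 y ?_ x ?_ hy1).le
    · simp only [Metric.mem_closedBall]
      linarith [dist_triangle y x 0]
    · simp only [Metric.mem_closedBall]; linarith
  set crit : Set (EuclideanSpace ℝ (Fin n)) := {x | (fderiv ℝ S x).det = 0} with hcrit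
  have hnull : volume (S '' crit) = 0 := addHaar_image_eq_zero_of_det_fderivWithin_eq_zero volume
    (fun x _ => ((hS.differentiable (by simp)) x).hasFDerivAt.hasFDerivWithinAt) (fun x hx => hx)
  have hnull2 : volume (⋃ y ∈ Y, (fun v => v - y) '' (S '' crit)) = 0 := by
    rw [measure_biUnion_null_iff hY]
    intro y _
    have : (fun v : EuclideanSpace ℝ (Fin n) => v - y) '' (S '' crit) =
      (fun v => v + y) ⁻¹' (S '' crit) := by
      ext v; constructor
      · rintro ⟨w, hw, rfl⟩; simpa using hw
      · intro h; exact ⟨v + y, h, by simp⟩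
    rw [this, measure_preimage_add_right, hnull]
  obtain ⟨w, hw, hwN⟩ : ∃ w ∈ Metric.ball (0 : EuclideanSpace ℝ (Fin n)) (δ / 2),
      w ∉ ⋃ y ∈ Y, (fun v => v - y) '' (S '' crit) := by
    by_contra h
    push Not at h
    have h1 := measure_mono_null (μ := volume) h hnull2
    exact (Metric.measure_ball_pos volume (0 : EuclideanSpace ℝ (Fin n)) (by positivity)).ne' h1
  refine ⟨fun x => S x - w, hS.sub contDiff_const, fun x hx => ?_, fun x hx hdet => ?_⟩
  · have h1 := hSC x hx
    have h2 : ‖w‖ < δ / 2 := by simpa using hw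
    rw [← hFe' x hx]
    calc ‖S x - w - Fe x‖ = ‖(S x - Fe x) - w‖ := by congr 1; abel
      _ ≤ ‖S x - Fe x‖ + ‖w‖ := norm_sub_le _ _
      _ < δ := by linarith
  · rw [fderiv_sub_const] at hdet
    refine hwN (mem_biUnion hx ⟨S x, ⟨x, hdet, rfl⟩, by simp⟩)

/-- Mod 2 degree as a relation. -/
def IsDeg {n : ℕ} (F : EuclideanSpace ℝ (Fin n) → EuclideanSpace ℝ (Fin n))
    (C : Set (EuclideanSpace ℝ (Fin n))) (d : ZMod 2) : Prop :=
  ∃ G : EuclideanSpace ℝ (Fin n) → EuclideanSpace ℝ (Fin n), ContDiff ℝ ∞ G ∧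
    (∀ x ∈ frontier C, ‖G x - F x‖ < ‖F x‖) ∧
    (∀ x ∈ C, G x = 0 → (fderiv ℝ G x).det ≠ 0) ∧ ({x ∈ C | G x = 0}.ncard : ZMod 2) = d

theorem IsDeg.congr {n : ℕ} {F F' : EuclideanSpace ℝ (Fin n) → EuclideanSpace ℝ (Fin n)}
    {C : Set (EuclideanSpace ℝ (Fin n))} {d : ZMod 2} (h : IsDeg F C d)
    (hFF : ∀ x ∈ frontier C, F x = F' x) : IsDeg F' C d := by
  obtain ⟨G, h1, h2, h3⟩ := h
  exact ⟨G, h1, fun x hx => by rw [← hFF x hx]; exact h2 x hx, h3⟩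

theorem IsDeg.unique {n : ℕ} {F : EuclideanSpace ℝ (Fin n) → EuclideanSpace ℝ (Fin n)}
    {C : Set (EuclideanSpace ℝ (Fin n))} (hC : IsCompact C) {d d' : ZMod 2} (h : IsDeg F C d)
    (h' : IsDeg F C d') : d = d' := by
  obtain ⟨G, h1, h2, h3, h4⟩ := h
  obtain ⟨G', h1', h2', h3', h4'⟩ := h'
  rw [← h4, ← h4']
  exact smooth_parity hC h1 h1' h3 h3' fun x hx s hs =>
    ne_zero_of_close (segment_ne (h2 x hx) (h2' x hx) hs)

theorem exists_lower_bound {X E : Type*} [TopologicalSpace X] [NormedAddCommGroup E] {C : Set X}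
    (hC : IsCompact C) {F : X → E} (hF : ContinuousOn F C) (h0 : ∀ x ∈ C, F x ≠ 0) :
    ∃ δ > 0, ∀ x ∈ C, δ ≤ ‖F x‖ := by
  rcases C.eq_empty_or_nonempty with h | h
  · exact ⟨1, one_pos, by simp [h]⟩
  · obtain ⟨x0, hx0, hm⟩ := hC.exists_isMinOn h hF.norm
    exact ⟨‖F x0‖, norm_pos_iff.2 (h0 x0 hx0), fun x hx => hm hx⟩

theorem isDeg_of_approx {n : ℕ} {F G : EuclideanSpace ℝ (Fin n) → EuclideanSpace ℝ (Fin n)}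
    {C : Set (EuclideanSpace ℝ (Fin n))} (hG : ContDiff ℝ ∞ G)
    (h : ∀ x ∈ frontier C, ‖G x - F x‖ < ‖F x‖)
    (h' : ∀ x ∈ C, G x = 0 → (fderiv ℝ G x).det ≠ 0) :
    IsDeg F C ({x ∈ C | G x = 0}.ncard : ZMod 2) := ⟨G, hG, h, h', rfl⟩

theorem frontier_compact {X : Type*} [TopologicalSpace X] [T2Space X] {C : Set X}
    (hC : IsCompact C) : IsCompact (frontier C) :=
  hC.of_isClosed_subset isClosed_frontier hC.isClosed.frontier_subset

theorem frontier_sub {X : Type*} [TopologicalSpace X] [T2Space X] {C : Set X}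
    (hC : IsCompact C) : frontier C ⊆ C := hC.isClosed.frontier_subset

theorem zmod2_cases (d : ZMod 2) : d = 0 ∨ d = 1 := by
  revert d; decide

theorem isDeg_homeo {n : ℕ}
    (e : OpenPartialHomeomorph (EuclideanSpace ℝ (Fin n)) (EuclideanSpace ℝ (Fin n)))
    {z : EuclideanSpace ℝ (Fin n)} {r : ℝ} (hr : 0 < r) (hs : Metric.closedBall z r ⊆ e.source)
    (hz : e z = 0) : IsDeg e (Metric.closedBall z r) 1 := by
  set C := Metric.closedBall z r with hCdef
  have hC : IsCompact C := isCompact_closedBall z r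
  have hzC : z ∈ C := Metric.mem_closedBall_self hr.le
  have heC : ContinuousOn e C := e.continuousOn.mono hs
  have hfr : ∀ x ∈ frontier C, ‖x - z‖ = r := fun x hx => by
    have := Metric.frontier_closedBall_subset_sphere hx
    rwa [mem_sphere_iff_norm] at this
  obtain ⟨m, hm, hm2⟩ := exists_lower_bound (frontier_compact hC)
    (heC.mono (frontier_sub hC)) (fun x hx h => by
      have h1 : x = z := e.injOn (hs (frontier_sub hC hx)) (hs hzC) (by rw [h, hz])
      have := hfr x hx
      rw [h1] at this
      simp at this; linarith)
  obtain ⟨κ, hκ, hκr, hκ2⟩ : ∃ κ > 0, κ ≤ r ∧ ∀ x, ‖x - z‖ < κ → ‖e x‖ < m / 2 := by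
    have := (e.continuousAt (hs hzC)).norm.eventually_lt
      (continuousAt_const (y := m / 2)) (by simp [hz]; linarith)
    obtain ⟨κ, hκ, h⟩ := Metric.eventually_nhds_iff.1 this
    exact ⟨min κ r, lt_min hκ hr, min_le_right _ _, fun x hx =>
      h (by rw [dist_eq_norm]; exact hx.trans_le (min_le_left _ _))⟩
  have hC' : IsCompact (e '' C) := hC.image_of_continuousOn heC
  obtain ⟨K, hK, hKC, hKreg⟩ := approx_regular hC' (F := fun y => e.symm y - z)
    ((e.continuousOn_symm.mono (by rintro _ ⟨x, hx, rfl⟩; exact e.map_source (hs hx))).sub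
      continuousOn_const) (half_pos hκ) (countable_singleton (0 : EuclideanSpace ℝ (Fin n)))
  have hKreg' : ∀ x, K x = 0 → (fderiv ℝ K x).det ≠ 0 := fun x hx => hKreg x (by simp [hx])
  have hcount : {y | K y = 0}.Countable := by
    have : {y | K y = 0} ⊆ ⋃ k : ℕ, {y ∈ Metric.closedBall (0 : EuclideanSpace ℝ (Fin n)) k | K y = 0} := by
      intro y hy
      obtain ⟨k, hk⟩ := exists_nat_ge ‖y‖
      exact mem_iUnion.2 ⟨k, by simpa using hk, hy⟩
    refine (countable_iUnion fun k => ?_).mono this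
    exact (zeros_finite (isCompact_closedBall _ _) hK fun x _ h => hKreg' x h).countable
  obtain ⟨η, hη, hη2⟩ : ∃ η > 0, ∀ x ∈ C, ∀ y, ‖y - e x‖ < η → ‖K y - K (e x)‖ < κ / 2 := by
    have hu : {p : EuclideanSpace ℝ (Fin n) × EuclideanSpace ℝ (Fin n) | dist p.1 p.2 < κ / 2}
      ∈ uniformity _ := Metric.dist_mem_uniformity (half_pos hκ)
    have := hC'.uniformContinuousAt_of_continuousAt K (fun a _ => hK.continuous.continuousAt) hu
    obtain ⟨η, hη, h⟩ := Metric.mem_uniformity_dist.1 this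
    refine ⟨η, hη, fun x hx y hy => ?_⟩
    have := h (a := e x) (b := y) (by rw [dist_comm, dist_eq_norm]; exact hy) ⟨x, hx, rfl⟩
    rw [← dist_eq_norm, dist_comm]; exact this
  obtain ⟨G, hG, hGC, hGreg⟩ := approx_regular hC heC (lt_min hη (by positivity : 0 < m / 4)) hcount
  have hGη : ∀ x ∈ C, ‖G x - e x‖ < η := fun x hx => (hGC x hx).trans_le (min_le_left _ _)
  have hGm : ∀ x ∈ C, ‖G x - e x‖ < m / 4 := fun x hx => (hGC x hx).trans_le (min_le_right _ _)
  have hKG : ∀ x ∈ C, ‖K (G x) - (x - z)‖ < κ := by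
    intro x hx
    have h1 := hη2 x hx (G x) (hGη x hx)
    have h2 := hKC (e x) ⟨x, hx, rfl⟩
    simp only [e.left_inv (hs hx)] at h2
    calc ‖K (G x) - (x - z)‖ = ‖(K (G x) - K (e x)) + (K (e x) - (x - z))‖ := by congr 1; abel
      _ ≤ _ := norm_add_le _ _
      _ < κ := by linarith
  have hKGs : ContDiff ℝ ∞ (fun x => K (G x)) := hK.comp hG
  have hdetKG : ∀ x, K (G x) = 0 → (fderiv ℝ (fun x => K (G x)) x).det ≠ 0 := by
    intro x hx
    have : fderiv ℝ (fun x => K (G x)) x = (fderiv ℝ K (G x)).comp (fderiv ℝ G x) :=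
      fderiv_comp x ((hK.differentiable (by simp)) _) ((hG.differentiable (by simp)) _)
    rw [this]
    have h2 : ((fderiv ℝ K (G x)).comp (fderiv ℝ G x)).det =
        (fderiv ℝ K (G x)).det * (fderiv ℝ G x).det := by
      simp only [ContinuousLinearMap.det, ContinuousLinearMap.toLinearMap_comp, LinearMap.det_comp]
    rw [h2]
    exact mul_ne_zero (hKreg' _ hx) (hGreg x hx)
  have hone : ({x ∈ C | K (G x) = 0}.ncard : ZMod 2) = 1 := by
    rw [smooth_parity (G₁ := fun x => x - z) hC hKGs (contDiff_id.sub contDiff_const)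
      (fun x _ h => hdetKG x h) (fun x _ _ => by
        rw [fderiv_sub_const, fderiv_id']
        simp [ContinuousLinearMap.det]) ?_]
    · have : {x | x ∈ C ∧ x - z = 0} = {z} := by
        ext x; simp only [mem_setOf_eq, sub_eq_zero, mem_singleton_iff]
        exact ⟨fun h => h.2, fun h => ⟨h ▸ hzC, h⟩⟩
      rw [this]; simp
    · intro x hx s hs
      refine ne_zero_of_close (v := x - z) (segment_ne ?_ ?_ hs)
      · rw [hfr x hx]; exact (hKG x (frontier_sub hC hx)).trans_le hκr
      · rw [hfr x hx]; simpa using hr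
  have hfin : {x ∈ C | K (G x) = 0}.Finite := zeros_finite hC hKGs fun x _ h => hdetKG x h
  have hsmall : ∀ x ∈ C, K (G x) = 0 → IsDeg e C ({x' ∈ C | G x' - G x = 0}.ncard : ZMod 2) := by
    intro x hx hKx
    have h1 := hKG x hx
    rw [hKx, zero_sub, norm_neg] at h1
    have h2 := hκ2 x h1
    have h3 := hGm x hx
    have h4 : ‖G x‖ < 3 * m / 4 := by
      calc ‖G x‖ = ‖(G x - e x) + e x‖ := by congr 1; abel
        _ ≤ _ := norm_add_le _ _
        _ < _ := by linarith
    refine isDeg_of_approx (G := fun x' => G x' - G x) (hG.sub contDiff_const) ?_ ?_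
    · intro x' hx'
      have h5 := hGm x' (frontier_sub hC hx')
      calc ‖G x' - G x - e x'‖ = ‖(G x' - e x') - G x‖ := by congr 1; abel
        _ ≤ ‖G x' - e x'‖ + ‖G x‖ := norm_sub_le _ _
        _ < m := by linarith
        _ ≤ _ := hm2 x' hx'
    · intro x' _ hx'
      rw [fderiv_sub_const]
      exact hGreg x' (by rw [mem_setOf_eq, sub_eq_zero.1 hx', hKx])
  have hne : {x ∈ C | K (G x) = 0}.Nonempty := by
    by_contra h
    rw [not_nonempty_iff_eq_empty] at h
    rw [h] at hone
    simp at hone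
  obtain ⟨x₀, hx₀⟩ := hne
  set d : ZMod 2 := ({x' ∈ C | G x' - G x₀ = 0}.ncard : ZMod 2) with hd
  have hdeg : IsDeg e C d := hsmall x₀ hx₀.1 hx₀.2
  have hall : ∀ x ∈ C, K (G x) = 0 → ({x' ∈ C | G x' - G x = 0}.ncard : ZMod 2) = d :=
    fun x hx h => (hsmall x hx h).unique hC hdeg
  rcases zmod2_cases d with h0 | h1
  · exfalso
    classical
    rw [ncard_eq_toFinset_card _ hfin, Finset.card_eq_sum_card_image G, Nat.cast_sum,
      Finset.sum_eq_zero] at hone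
    · simp at hone
    · intro y hy
      simp only [Finset.mem_image, Finite.mem_toFinset, mem_setOf_eq] at hy
      obtain ⟨x, hx, rfl⟩ := hy
      have := hall x hx.1 hx.2
      rw [h0] at this
      rw [← this, ← ncard_coe_finset]
      congr 2
      ext x'
      simp only [Finset.coe_filter, Finite.mem_toFinset, mem_setOf_eq, sub_eq_zero]
      exact ⟨fun h => ⟨h.1.1, h.2⟩, fun h => ⟨⟨h.1, by rw [h.2]; exact hx.2⟩, h.2⟩⟩
  · rw [← h1]; exact hdeg

end OneEnd

end Part3

section Part4

open Set Filter Topology MeasureTheory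
open scoped ContDiff
namespace OneEnd

/-- `F` is locally a homeomorphism at `z`. -/
def LH {X Y : Type*} [TopologicalSpace X] [TopologicalSpace Y] (F : X → Y) (z : X) : Prop :=
  ∃ e : OpenPartialHomeomorph X Y, z ∈ e.source ∧ F =ᶠ[𝓝 z] e

theorem LH.congr {X Y : Type*} [TopologicalSpace X] [TopologicalSpace Y] {F F' : X → Y} {z : X}
    (h : LH F z) (hF : F' =ᶠ[𝓝 z] F) : LH F' z := by
  obtain ⟨e, h1, h2⟩ := h
  exact ⟨e, h1, hF.trans h2⟩

theorem LH.comp {X Y Z : Type*} [TopologicalSpace X] [TopologicalSpace Y] [TopologicalSpace Z]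
    {F : X → Y} {G : Y → Z} {z : X} (h : LH F z) (hG : LH G (F z)) : LH (fun x => G (F x)) z := by
  obtain ⟨e, h1, h2⟩ := h
  obtain ⟨e', h1', h2'⟩ := hG
  have hz : F z = e z := h2.self_of_nhds
  rw [hz] at h1' h2'
  refine ⟨e.trans e', by simp [h1, h1'], ?_⟩
  filter_upwards [h2, (e.continuousAt h1).eventually h2'] with x hx hx'
  simp [hx, hx']

theorem LH.of_openPartialHomeomorph {X Y : Type*} [TopologicalSpace X] [TopologicalSpace Y]
    (e : OpenPartialHomeomorph X Y) {z : X} (hz : z ∈ e.source) : LH e z :=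
  ⟨e, hz, EventuallyEq.rfl⟩

/-- Zeros off `T` are finite in number, interior and locally homeomorphic. -/
def NiceOff {X E : Type*} [TopologicalSpace X] [TopologicalSpace E] [Zero E]
    (F : X → E) (P T : Set X) : Prop :=
  {z ∈ P \ T | F z = 0}.Finite ∧ ∀ z ∈ P \ T, F z = 0 → z ∈ interior P ∧ LH F z

theorem NiceOff.mono {X E : Type*} [TopologicalSpace X] [TopologicalSpace E] [Zero E]
    {F : X → E} {P T T' : Set X} (h : NiceOff F P T) (hT : T ⊆ T') : NiceOff F P T' :=
  ⟨h.1.subset fun _ hx => ⟨⟨hx.1.1, fun h => hx.1.2 (hT h)⟩, hx.2⟩,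
    fun z hz => h.2 z ⟨hz.1, fun h => hz.2 (hT h)⟩⟩

/-- Number of zeros mod 2. -/
noncomputable def cnt {X E : Type*} [Zero E] (F : X → E) (P : Set X) : ZMod 2 :=
  ({x ∈ P | F x = 0}.ncard : ZMod 2)

theorem isDeg_of_nice {n : ℕ} {C : Set (EuclideanSpace ℝ (Fin n))} (hC : IsCompact C)
    {F : EuclideanSpace ℝ (Fin n) → EuclideanSpace ℝ (Fin n)} (hF : ContinuousOn F C)
    (hN : NiceOff F C ∅) : IsDeg F C (cnt F C) := by
  set Z : Set (EuclideanSpace ℝ (Fin n)) := {x ∈ C | F x = 0} with hZ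
  have hfin : Z.Finite := hN.1.subset fun x hx => ⟨⟨hx.1, fun h => h⟩, hx.2⟩
  obtain ⟨U, hU, hdisj⟩ := hfin.t2_separation
  have hex : ∀ z, ∃ r > 0, z ∈ Z → Metric.closedBall z r ⊆ interior C ∩ U z ∧
      IsDeg F (Metric.closedBall z r) 1 := by
    intro z
    by_cases hz : z ∈ Z
    · obtain ⟨hzi, e, hze, heq⟩ := hN.2 z ⟨hz.1, fun h => h⟩ hz.2
      have : (interior C ∩ U z) ∩ (e.source ∩ {x | F x = e x}) ∈ 𝓝 z :=
        inter_mem (inter_mem (isOpen_interior.mem_nhds hzi) ((hU z).2.mem_nhds (hU z).1))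
          (inter_mem (e.open_source.mem_nhds hze) heq)
      obtain ⟨r, hr, hsub⟩ := Metric.nhds_basis_closedBall.mem_iff.1 this
      refine ⟨r, hr, fun _ => ⟨fun x hx => (hsub hx).1, ?_⟩⟩
      refine (isDeg_homeo e hr (fun x hx => (hsub hx).2.1) ?_).congr ?_
      · rw [← hz.2]; exact (hsub (Metric.mem_closedBall_self hr.le)).2.2.symm
      · intro x hx
        exact (hsub (Metric.isClosed_closedBall.frontier_subset hx)).2.2.symm
    · exact ⟨1, one_pos, fun h => absurd h hz⟩
  choose r hr hB using hex
  have hCo : IsCompact (C \ ⋃ z ∈ Z, Metric.ball z (r z)) :=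
    hC.diff (isOpen_biUnion fun z _ => Metric.isOpen_ball)
  obtain ⟨m, hm, hm2⟩ := exists_lower_bound hCo (hF.mono sdiff_subset) (fun x hx h =>
    hx.2 (mem_biUnion (x := x) ⟨hx.1, h⟩ (Metric.mem_ball_self (hr x))))
  obtain ⟨G, hG, hGC, hGreg⟩ := approx_regular hC hF hm
    (countable_singleton (0 : EuclideanSpace ℝ (Fin n)))
  have hGreg' : ∀ x, G x = 0 → (fderiv ℝ G x).det ≠ 0 := fun x hx => hGreg x (by simp [hx])
  have hclose : ∀ x ∈ C, (∀ z ∈ Z, x ∉ Metric.ball z (r z)) → ‖G x - F x‖ < ‖F x‖ :=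
    fun x hx hxb => (hGC x hx).trans_le (hm2 x ⟨hx, by simpa using hxb⟩)
  have h1 : IsDeg F C ({x ∈ C | G x = 0}.ncard : ZMod 2) := by
    refine isDeg_of_approx hG (fun x hx => hclose x (frontier_sub hC hx) fun z hz hxz => ?_)
      (fun x _ h => hGreg' x h)
    exact hx.2 ((hB z hz).1 (Metric.ball_subset_closedBall hxz)).1
  have h2 : ∀ z ∈ Z, ({x ∈ Metric.closedBall z (r z) | G x = 0}.ncard : ZMod 2) = 1 := by
    intro z hz
    refine (isDeg_of_approx (F := F) hG (fun x hx => ?_) (fun x _ h => hGreg' x h)).unique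
      (isCompact_closedBall _ _) (hB z hz).2
    have hxB := Metric.isClosed_closedBall.frontier_subset hx
    have hxs := Metric.frontier_closedBall_subset_sphere hx
    refine hclose x (interior_subset ((hB z hz).1 hxB).1) fun z' hz' hxz' => ?_
    by_cases hzz : z' = z
    · subst hzz
      rw [Metric.mem_ball] at hxz'
      rw [Metric.mem_sphere] at hxs
      linarith
    · exact disjoint_left.1 (hdisj hz' hz hzz)
        ((hB z' hz').1 (Metric.ball_subset_closedBall hxz')).2 ((hB z hz).1 hxB).2
  have h3 : {x ∈ C | G x = 0} = ⋃ z ∈ Z, {x ∈ Metric.closedBall z (r z) | G x = 0} := by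
    ext x
    simp only [mem_ofPred_eq, mem_iUnion, exists_prop]
    constructor
    · rintro ⟨hx, hG0⟩
      by_contra hcon
      push Not at hcon
      refine ne_zero_of_close (hclose x hx fun z hz hxz => ?_) hG0
      exact hcon z hz (Metric.ball_subset_closedBall hxz) hG0
    · rintro ⟨z, hz, hx, hG0⟩
      exact ⟨interior_subset ((hB z hz).1 hx).1, hG0⟩
  have h4 : ({x ∈ C | G x = 0}.ncard : ZMod 2) = cnt F C := by
    rw [h3, hfin.ncard_biUnion, finsum_mem_eq_finite_toFinset_sum _ hfin, Nat.cast_sum]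
    · rw [cnt, ncard_eq_toFinset_card _ hfin, Finset.cast_card]
      exact Finset.sum_congr rfl fun z hz => h2 z (by simpa using hz)
    · exact fun z _ => zeros_finite (isCompact_closedBall _ _) hG fun x _ h => hGreg' x h
    · intro a ha b hb hab
      exact (hdisj ha hb hab).mono (fun x hx => ((hB a ha).1 hx.1).2)
        (fun x hx => ((hB b hb).1 hx.1).2)
  rw [← h4]; exact h1

theorem cnt_eq_euclidean {n : ℕ} {C : Set (EuclideanSpace ℝ (Fin n))} (hC : IsCompact C)
    {F₀ F₁ : EuclideanSpace ℝ (Fin n) → EuclideanSpace ℝ (Fin n)} (h₀ : ContinuousOn F₀ C)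
    (h₁ : ContinuousOn F₁ C) (hN₀ : NiceOff F₀ C ∅) (hN₁ : NiceOff F₁ C ∅)
    (hfr : ∀ x ∈ frontier C, F₀ x = F₁ x) : cnt F₀ C = cnt F₁ C :=
  ((isDeg_of_nice hC h₀ hN₀).congr hfr).unique hC (isDeg_of_nice hC h₁ hN₁)

theorem exists_bump {X : Type*} [TopologicalSpace X] [T2Space X] [LocallyCompactSpace X]
    {K U : Set X} (hK : IsCompact K) (hU : IsOpen U) (hKU : K ⊆ U) :
    ∃ μ : X → ℝ, Continuous μ ∧ (∀ x ∈ K, μ x = 1) ∧ (∀ x ∉ U, μ x = 0) ∧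
      ∀ x, μ x ∈ Icc (0:ℝ) 1 := by
  obtain ⟨f, h1, h2, -, h3⟩ := exists_continuous_one_zero_of_isCompact hK hU.isClosed_compl
    (disjoint_compl_right_iff_subset.2 hKU)
  exact ⟨f, f.continuous, fun x hx => h1 hx, fun x hx => h2 hx, h3⟩

section Manifold
variable {n : ℕ} {M : Type*} [TopologicalSpace M] [T2Space M] [LocallyCompactSpace M]

theorem cnt_eq_chart {P T : Set M} {F₀ F₁ : M → EuclideanSpace ℝ (Fin n)}
    (h₀ : ContinuousOn F₀ P) (h₁ : ContinuousOn F₁ P) (hN₀ : NiceOff F₀ P ∅)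
    (hN₁ : NiceOff F₁ P ∅) (e : OpenPartialHomeomorph M (EuclideanSpace ℝ (Fin n)))
    (hT : IsCompact T) (hTs : T ⊆ e.source) (hTP : T ⊆ interior P)
    (heq : ∀ x ∈ P \ T, F₀ x = F₁ x) : cnt F₀ P = cnt F₁ P := by
  set Z : Set M := ({x ∈ P | F₀ x = 0} ∪ {x ∈ P | F₁ x = 0}) \ T with hZ
  have hf₀ : {x ∈ P | F₀ x = 0}.Finite := hN₀.1.subset fun x hx => ⟨⟨hx.1, fun h => h⟩, hx.2⟩
  have hf₁ : {x ∈ P | F₁ x = 0}.Finite := hN₁.1.subset fun x hx => ⟨⟨hx.1, fun h => h⟩, hx.2⟩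
  have hZf : Z.Finite := (hf₀.union hf₁).subset sdiff_subset
  set O : Set M := e.source ∩ (interior P ∩ Zᶜ) with hO
  have hOo : IsOpen O := e.open_source.inter (isOpen_interior.inter hZf.isClosed.isOpen_compl)
  have hTO : T ⊆ O := fun x hx => ⟨hTs hx, hTP hx, fun h => h.2 hx⟩
  have hOs : O ⊆ e.source := fun x hx => hx.1
  obtain ⟨C, hC, hTC, hCO⟩ := exists_compact_between
    (hT.image_of_continuousOn (e.continuousOn.mono hTs))
    (e.isOpen_image_of_subset_source hOo hOs) (image_mono hTO)
  have hCt : ∀ y ∈ C, y ∈ e.target ∧ e.symm y ∈ O := by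
    intro y hy
    obtain ⟨x, hx, rfl⟩ := hCO hy
    exact ⟨e.map_source (hOs hx), by rw [e.left_inv (hOs hx)]; exact hx⟩
  have hCP : ∀ y ∈ C, e.symm y ∈ P := fun y hy => interior_subset (hCt y hy).2.2.1
  have hcont : ∀ F : M → EuclideanSpace ℝ (Fin n), ContinuousOn F P →
      ContinuousOn (fun y => F (e.symm y)) C := fun F hF =>
    hF.comp (e.continuousOn_symm.mono fun y hy => (hCt y hy).1) hCP
  have hzT : ∀ F : M → EuclideanSpace ℝ (Fin n), (F = F₀ ∨ F = F₁) → ∀ y ∈ C, F (e.symm y) = 0 →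
      e.symm y ∈ T := by
    rintro F hF y hy h0
    by_contra hyT
    refine (hCt y hy).2.2.2 ⟨?_, hyT⟩
    rcases hF with rfl | rfl
    · exact Or.inl ⟨hCP y hy, h0⟩
    · exact Or.inr ⟨hCP y hy, h0⟩
  have hTin : ∀ y ∈ C, e.symm y ∈ T → y ∈ interior C := fun y hy h =>
    hTC ⟨e.symm y, h, e.right_inv (hCt y hy).1⟩
  have hnice : ∀ F : M → EuclideanSpace ℝ (Fin n), (F = F₀ ∨ F = F₁) → NiceOff F P ∅ →
      NiceOff (fun y => F (e.symm y)) C ∅ := by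
    intro F hF hN
    refine ⟨?_, fun y hy h0 => ⟨hTin y hy.1 (hzT F hF y hy.1 h0), ?_⟩⟩
    · refine Finite.of_finite_image (f := e.symm) (hN.1.subset ?_) ?_
      · rintro _ ⟨y, hy, rfl⟩
        exact ⟨⟨hCP y hy.1.1, fun h => h⟩, hy.2⟩
      · exact e.symm.injOn.mono fun y hy => (hCt y hy.1.1).1
    · exact LH.comp (F := e.symm) (G := F) (LH.of_openPartialHomeomorph e.symm (hCt y hy.1).1)
        (hN.2 _ ⟨hCP y hy.1, fun h => h⟩ h0).2
  have hsplit : ∀ F : M → EuclideanSpace ℝ (Fin n), (F = F₀ ∨ F = F₁) →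
      {x ∈ P | F x = 0}.Finite →
      cnt F P = cnt (fun y => F (e.symm y)) C + ({x ∈ P \ T | F x = 0}.ncard : ZMod 2) := by
    intro F hF hfin
    have h1 : {x ∈ P | F x = 0} = e.symm '' {y ∈ C | F (e.symm y) = 0} ∪ {x ∈ P \ T | F x = 0} := by
      ext x
      constructor
      · rintro ⟨hx, h0⟩
        by_cases hxT : x ∈ T
        · refine Or.inl ⟨e x, ⟨interior_subset (hTC ⟨x, hxT, rfl⟩), ?_⟩, e.left_inv (hTs hxT)⟩
          rw [e.left_inv (hTs hxT)]; exact h0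
        · exact Or.inr ⟨⟨hx, hxT⟩, h0⟩
      · rintro (⟨y, hy, rfl⟩ | h)
        · exact ⟨hCP y hy.1, hy.2⟩
        · exact ⟨h.1.1, h.2⟩
    have hd : Disjoint (e.symm '' {y ∈ C | F (e.symm y) = 0}) {x ∈ P \ T | F x = 0} := by
      rw [disjoint_left]
      rintro _ ⟨y, hy, rfl⟩ h
      exact h.1.2 (hzT F hF y hy.1 hy.2)
    rw [cnt, cnt, h1, ncard_union_eq hd (hfin.subset (by rw [h1]; exact subset_union_left))
      (hfin.subset (by rw [h1]; exact subset_union_right)), InjOn.ncard_image, Nat.cast_add]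
    exact e.symm.injOn.mono fun y hy => (hCt y hy.1).1
  rw [hsplit F₀ (Or.inl rfl) hf₀, hsplit F₁ (Or.inr rfl) hf₁]
  congr 1
  · refine cnt_eq_euclidean hC (hcont _ h₀) (hcont _ h₁) (hnice _ (Or.inl rfl) hN₀)
      (hnice _ (Or.inr rfl) hN₁) fun y hy => ?_
    have hyC := frontier_sub hC hy
    exact heq _ ⟨hCP y hyC, fun h => hy.2 (hTin y hyC h)⟩
  · congr 2
    ext x
    simp only [mem_ofPred_eq]
    exact and_congr_right fun hx => by rw [heq x hx]

/-- Perturbation inside a chart. -/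
theorem perturb {P Q N W : Set M} {F : M → EuclideanSpace ℝ (Fin n)}
    (hF : ContinuousOn F P) (e : OpenPartialHomeomorph M (EuclideanSpace ℝ (Fin n)))
    (hQ : IsCompact Q) (hQs : Q ⊆ e.source) (hQP : Q ⊆ interior P)
    (hN : NiceOff F P (Q ∪ interior N)) (hW : IsOpen W) (hQW : Q ⊆ W) {ε : ℝ} (hε : 0 < ε) :
    ∃ F' : M → EuclideanSpace ℝ (Fin n), ContinuousOn F' P ∧ (∀ x ∉ W, F' x = F x) ∧
      (∀ x, ‖F' x - F x‖ < ε) ∧ NiceOff F' P N := by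
  set Z : Set M := {z ∈ P \ (Q ∪ interior N) | F z = 0} with hZ
  have hZf : Z.Finite := hN.1
  set O : Set M := (W ∩ e.source) ∩ (interior P ∩ Zᶜ) with hO
  have hOo : IsOpen O := (hW.inter e.open_source).inter
    (isOpen_interior.inter hZf.isClosed.isOpen_compl)
  have hQO : Q ⊆ O := fun x hx => ⟨⟨hQW hx, hQs hx⟩, hQP hx, fun h => h.1.2 (Or.inl hx)⟩
  obtain ⟨K₁, hK₁, hQK, hK₁O⟩ := exists_compact_between hQ hOo hQO
  obtain ⟨K₂, hK₂, hK₁₂, hK₂O⟩ := exists_compact_between hK₁ hOo hK₁O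
  have hK₂s : K₂ ⊆ e.source := fun x hx => (hK₂O hx).1.2
  have hK₂P : K₂ ⊆ P := fun x hx => interior_subset (hK₂O hx).2.1
  obtain ⟨m, hm, hm2⟩ := exists_lower_bound (hK₂.diff (isOpen_interior (s := K₁) |>.union
    (isOpen_interior (s := N)))) (hF.mono (sdiff_subset.trans hK₂P)) (fun x hx h0 => by
      refine (hK₂O hx.1).2.2 ⟨⟨hK₂P hx.1, ?_⟩, h0⟩
      rintro (h | h)
      · exact hx.2 (Or.inl (hQK h))
      · exact hx.2 (Or.inr h))
  obtain ⟨μ, hμ, hμ1, hμ0, hμI⟩ := exists_bump hK₁ isOpen_interior hK₁₂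
  have hE : IsCompact (e '' K₂) := hK₂.image_of_continuousOn (e.continuousOn.mono hK₂s)
  obtain ⟨S, hS, hSC, hSreg⟩ := approx_regular hE (F := fun y => F (e.symm y))
    (hF.comp (e.continuousOn_symm.mono (by rintro _ ⟨x, hx, rfl⟩; exact e.map_source (hK₂s hx)))
      (by rintro _ ⟨x, hx, rfl⟩; rw [e.left_inv (hK₂s hx)]; exact hK₂P hx))
    (lt_min hm hε) (countable_singleton (0 : EuclideanSpace ℝ (Fin n)))
  have hSF : ∀ x ∈ K₂, ‖S (e x) - F x‖ < min m ε := by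
    intro x hx
    have := hSC (e x) ⟨x, hx, rfl⟩
    simpa only [e.left_inv (hK₂s hx)] using this
  set F' : M → EuclideanSpace ℝ (Fin n) := fun x => F x + μ x • (S (e x) - F x) with hF'
  have hoff : ∀ x ∉ interior K₂, F' x = F x := fun x hx => by simp [hF', hμ0 x hx]
  have hclose : ∀ x ∈ K₂, ‖F' x - F x‖ < min m ε := by
    intro x hx
    have h1 := hSF x hx
    have h2 : F' x - F x = μ x • (S (e x) - F x) := by simp [hF']
    rw [h2, norm_smul, Real.norm_of_nonneg (hμI x).1]
    calc μ x * ‖S (e x) - F x‖ ≤ 1 * ‖S (e x) - F x‖ :=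
          mul_le_mul_of_nonneg_right (hμI x).2 (norm_nonneg _)
      _ < _ := by rw [one_mul]; exact h1
  have hin : ∀ x ∈ P \ N, F' x = 0 → x ∈ K₂ → x ∈ interior K₁ := by
    intro x hx h0 hxK
    by_contra hcon
    have h1 : m ≤ ‖F x‖ := hm2 x ⟨hxK, by
      rintro (h | h)
      · exact hcon h
      · exact hx.2 (interior_subset h)⟩
    exact ne_zero_of_close (((hclose x hxK).trans_le (min_le_left _ _)).trans_le h1) h0
  have hout : ∀ x ∈ P \ N, F' x = 0 → x ∉ K₂ → x ∈ P \ (Q ∪ interior N) ∧ F x = 0 := by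
    intro x hx h0 hxK
    rw [hoff x fun h => hxK (interior_subset h)] at h0
    refine ⟨⟨hx.1, ?_⟩, h0⟩
    rintro (h | h)
    · exact hxK (interior_subset (hK₁₂ (interior_subset (hQK h))))
    · exact hx.2 (interior_subset h)
  have hF'S : ∀ x ∈ K₁, F' x = S (e x) := fun x hx => by simp [hF', hμ1 x hx]
  have hK₁s : K₁ ⊆ e.source := fun x hx => hK₂s (interior_subset (hK₁₂ hx))
  refine ⟨F', ?_, ?_, ?_, ?_, ?_⟩
  · intro x hx
    by_cases hxK : x ∈ K₂
    · have hSe : ContinuousAt (fun x => S (e x)) x :=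
        ContinuousAt.comp (hS.continuous.continuousAt) (e.continuousAt (hK₂s hxK))
      exact (hF x hx).add (hμ.continuousWithinAt.smul (hSe.continuousWithinAt.sub (hF x hx)))
    · refine (hF x hx).congr_of_eventuallyEq ?_ (hoff x fun h => hxK (interior_subset h))
      filter_upwards [nhdsWithin_le_nhds (hK₂.isClosed.isOpen_compl.mem_nhds hxK)] with y hy
      exact hoff y fun h => hy (interior_subset h)
  · intro x hx
    exact hoff x fun h => hx (hK₂O (interior_subset h)).1.1
  · intro x
    by_cases hxK : x ∈ K₂
    · exact (hclose x hxK).trans_le (min_le_right _ _)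
    · rw [hoff x fun h => hxK (interior_subset h)]; simpa using hε
  · have hfS : {x ∈ K₁ | S (e x) = 0}.Finite := by
      refine Finite.of_finite_image (f := e) ((zeros_finite (hK₁.image_of_continuousOn
        (e.continuousOn.mono hK₁s)) hS fun x _ h => hSreg x (by simp [h])).subset ?_)
        (e.injOn.mono fun x hx => hK₁s hx.1)
      rintro _ ⟨x, hx, rfl⟩
      exact ⟨⟨x, hx.1, rfl⟩, hx.2⟩
    refine (hZf.union hfS).subset fun x hx => ?_
    by_cases hxK : x ∈ K₂
    · have := interior_subset (hin x hx.1 hx.2 hxK)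
      exact Or.inr ⟨this, by rw [← hF'S x this]; exact hx.2⟩
    · exact Or.inl (hout x hx.1 hx.2 hxK)
  · intro x hx h0
    by_cases hxK : x ∈ K₂
    · have hxi := hin x hx h0 hxK
      have hx1 := interior_subset hxi
      refine ⟨(hK₂O hxK).2.1, ?_⟩
      obtain ⟨e', he', hee⟩ := local_homeo hS (hSreg (e x) (by rw [← hF'S x hx1]; simp [h0]))
      have : LH (fun x => S (e x)) x := LH.comp (LH.of_openPartialHomeomorph e (hK₂s hxK))
        ⟨e', he', Eventually.of_forall fun y => (hee y).symm⟩
      refine this.congr ?_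
      filter_upwards [isOpen_interior.mem_nhds hxi] with y hy using hF'S y (interior_subset hy)
    · obtain ⟨h1, h2⟩ := hout x hx h0 hxK
      refine ⟨(hN.2 x h1 h2).1, (hN.2 x h1 h2).2.congr ?_⟩
      filter_upwards [hK₂.isClosed.isOpen_compl.mem_nhds hxK] with y hy
      exact hoff y fun h => hy (interior_subset h)

end Manifold
end OneEnd

end Part4

section Part5

open Set Filter Topology MeasureTheory
open scoped ContDiff
namespace OneEnd

section Manifold
variable {n : ℕ} {M : Type*} [TopologicalSpace M] [T2Space M] [LocallyCompactSpace M]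

theorem cnt_congr {P : Set M} {F F' : M → EuclideanSpace ℝ (Fin n)}
    (h : ∀ x ∈ P, F x = 0 ↔ F' x = 0) : cnt F P = cnt F' P := by
  unfold cnt
  congr 2
  ext x
  exact and_congr_right fun hx => h x hx

theorem cnt_eq_list {P : Set M} (l : List (OpenPartialHomeomorph M (EuclideanSpace ℝ (Fin n)))) :
    ∀ (T : Set M) (F₀ F₁ : M → EuclideanSpace ℝ (Fin n)), ContinuousOn F₀ P → ContinuousOn F₁ P →
      NiceOff F₀ P ∅ → NiceOff F₁ P ∅ → IsCompact T → T ⊆ interior P →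
      (∀ x ∈ T, ∃ e ∈ l, x ∈ e.source) → (∀ x ∈ P \ T, F₀ x = F₁ x) → cnt F₀ P = cnt F₁ P := by
  induction l with
  | nil =>
    intro T F₀ F₁ _ _ _ _ _ _ hcov heq
    exact cnt_congr fun x hx => by rw [heq x ⟨hx, fun h => by simpa using hcov x h⟩]
  | cons a l ih =>
    intro T F₀ F₁ h₀ h₁ hN₀ hN₁ hT hTP hcov heq
    set U : Set M := ⋃ e ∈ l, e.source with hU
    have hUo : IsOpen U := isOpen_iUnion fun e => isOpen_iUnion fun _ => e.open_source
    have hUmem : ∀ x ∈ U, ∃ e ∈ l, x ∈ e.source := fun x hx => by simpa [hU] using hx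
    have hTa : ∀ x ∈ T, x ∉ U → x ∈ a.source := by
      intro x hx hxU
      obtain ⟨e, he, hxe⟩ := hcov x hx
      rcases List.mem_cons.1 he with rfl | he
      · exact hxe
      · exact absurd (by simpa [hU] using ⟨e, he, hxe⟩) hxU
    have hAo : IsOpen (a.source ∩ interior P) := a.open_source.inter isOpen_interior
    obtain ⟨K₁, hK₁, hTK, hK₁O⟩ := exists_compact_between (hT.diff hUo) hAo
      (fun x hx => ⟨hTa x hx.1 hx.2, hTP hx.1⟩)
    obtain ⟨K₂, hK₂, hK₁₂, hK₂O⟩ := exists_compact_between hK₁ hAo hK₁O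
    obtain ⟨μ, hμ, hμ1, hμ0, hμI⟩ := exists_bump hK₁ isOpen_interior hK₁₂
    set G : M → EuclideanSpace ℝ (Fin n) := fun x => F₀ x + μ x • (F₁ x - F₀ x) with hG
    have hGc : ContinuousOn G P := h₀.add (hμ.continuousOn.smul (h₁.sub h₀))
    set Q : Set M := (T ∩ K₂) \ interior K₁ with hQ
    have hQc : IsCompact Q := (hT.inter hK₂).diff isOpen_interior
    have hQU : Q ⊆ U := by
      intro x hx
      by_contra h
      exact hx.2 (hTK ⟨hx.1.1, h⟩)
    have hGN : NiceOff G P (Q ∪ interior ∅) := by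
      have key : ∀ x ∈ P \ (Q ∪ interior ∅), x ∈ interior P → G =ᶠ[𝓝 x] F₀ ∨ G =ᶠ[𝓝 x] F₁ := by
        intro x hx hxP
        by_cases hxT : x ∈ T
        · by_cases hxK : x ∈ K₂
          · right
            have : x ∈ interior K₁ := by
              by_contra h; exact hx.2 (Or.inl ⟨⟨hxT, hxK⟩, h⟩)
            filter_upwards [isOpen_interior.mem_nhds this] with y hy
            simp [hG, hμ1 y (interior_subset hy)]
          · left
            filter_upwards [hK₂.isClosed.isOpen_compl.mem_nhds hxK] with y hy
            simp [hG, hμ0 y fun h => hy (interior_subset h)]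
        · left
          filter_upwards [hT.isClosed.isOpen_compl.mem_nhds hxT, isOpen_interior.mem_nhds hxP]
            with y hy hyP
          simp [hG, heq y ⟨interior_subset hyP, hy⟩]
      have key2 : ∀ x ∈ P \ (Q ∪ interior ∅), G x = F₀ x ∨ G x = F₁ x := by
        intro x hx
        by_cases hxP : x ∈ interior P
        · exact (key x hx hxP).imp (fun h => h.self_of_nhds) (fun h => h.self_of_nhds)
        · left; simp [hG, heq x ⟨hx.1, fun h => hxP (hTP h)⟩]
      refine ⟨(hN₀.1.union hN₁.1).subset fun x hx => ?_, fun x hx h0 => ?_⟩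
      · rcases key2 x hx.1 with h | h
        · exact Or.inl ⟨⟨hx.1.1, fun h => h⟩, by rw [← h]; exact hx.2⟩
        · exact Or.inr ⟨⟨hx.1.1, fun h => h⟩, by rw [← h]; exact hx.2⟩
      · have hxP : x ∈ interior P := by
          rcases key2 x hx with h | h
          · exact (hN₀.2 x ⟨hx.1, fun h => h⟩ (by rw [← h]; exact h0)).1
          · exact (hN₁.2 x ⟨hx.1, fun h => h⟩ (by rw [← h]; exact h0)).1
        refine ⟨hxP, ?_⟩
        rcases key x hx hxP with h | h
        · exact (hN₀.2 x ⟨hx.1, fun h => h⟩ (by rw [← h.self_of_nhds]; exact h0)).2.congr h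
        · exact (hN₁.2 x ⟨hx.1, fun h => h⟩ (by rw [← h.self_of_nhds]; exact h0)).2.congr h
    obtain ⟨K₃, hK₃, hQK, hK₃O⟩ := exists_compact_between hQc (hAo.inter hUo)
      (fun x hx => ⟨hK₂O hx.1.2, hQU hx⟩)
    obtain ⟨G', hG'c, hG'G, -, hG'N⟩ := perturb hGc a hQc (fun x hx => (hK₂O hx.1.2).1)
      (fun x hx => (hK₂O hx.1.2).2) hGN isOpen_interior hQK one_pos
    have e1 : cnt G' P = cnt F₀ P := by
      refine cnt_eq_chart hG'c h₀ hG'N hN₀ a (hK₂.union hK₃) ?_ ?_ ?_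
      · rintro x (hx | hx)
        · exact (hK₂O hx).1
        · exact (hK₃O hx).1.1
      · rintro x (hx | hx)
        · exact (hK₂O hx).2
        · exact (hK₃O hx).1.2
      · intro x hx
        rw [hG'G x fun h => hx.2 (Or.inr (interior_subset h))]
        simp [hG, hμ0 x fun h => hx.2 (Or.inl (interior_subset h))]
    have e2 : cnt G' P = cnt F₁ P := by
      refine ih ((T \ interior K₁) ∪ K₃) G' F₁ hG'c h₁ hG'N hN₁
        ((hT.diff isOpen_interior).union hK₃) ?_ ?_ ?_
      · rintro x (hx | hx)
        · exact hTP hx.1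
        · exact (hK₃O hx).1.2
      · rintro x (hx | hx)
        · apply hUmem
          by_contra h
          exact hx.2 (hTK ⟨hx.1, h⟩)
        · exact hUmem x (hK₃O hx).2
      · intro x hx
        rw [hG'G x fun h => hx.2 (Or.inr (interior_subset h))]
        by_cases hxK : x ∈ interior K₁
        · simp [hG, hμ1 x (interior_subset hxK)]
        · have hxT : x ∉ T := fun h => hx.2 (Or.inl ⟨h, hxK⟩)
          simp [hG, heq x ⟨hx.1, hxT⟩]
    rw [← e1, e2]

theorem exists_nice_list {P : Set M} (l : List (OpenPartialHomeomorph M (EuclideanSpace ℝ (Fin n)))) :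
    ∀ (T : Set M) (F : M → EuclideanSpace ℝ (Fin n)) (ε : ℝ), 0 < ε → ContinuousOn F P →
      NiceOff F P T → IsCompact T → T ⊆ interior P →
      (∀ x ∈ T, ∃ e ∈ l, x ∈ e.source) → ∃ F' : M → EuclideanSpace ℝ (Fin n),
        ContinuousOn F' P ∧ NiceOff F' P ∅ ∧ (∀ x ∉ interior P, F' x = F x) ∧
        ∀ x, ‖F' x - F x‖ < ε := by
  induction l with
  | nil =>
    intro T F ε hε hF hN _ _ hcov
    refine ⟨F, hF, hN.mono fun x hx => by simpa using hcov x hx, fun _ _ => rfl, fun x => by simpa⟩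
  | cons a l ih =>
    intro T F ε hε hF hN hT hTP hcov
    set U : Set M := ⋃ e ∈ l, e.source with hU
    have hUo : IsOpen U := isOpen_iUnion fun e => isOpen_iUnion fun _ => e.open_source
    have hUmem : ∀ x ∈ U, ∃ e ∈ l, x ∈ e.source := fun x hx => by simpa [hU] using hx
    have hTa : ∀ x ∈ T, x ∉ U → x ∈ a.source := by
      intro x hx hxU
      obtain ⟨e, he, hxe⟩ := hcov x hx
      rcases List.mem_cons.1 he with rfl | he
      · exact hxe
      · exact absurd (by simpa [hU] using ⟨e, he, hxe⟩) hxU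
    obtain ⟨K, hK, hTK, hKa⟩ := exists_compact_between (hT.diff hUo) a.open_source
      (fun x hx => hTa x hx.1 hx.2)
    obtain ⟨N, hNc, hTN, hNU⟩ := exists_compact_between (hT.diff (isOpen_interior (s := K)))
      (hUo.inter (isOpen_interior (s := P))) (fun x hx => ⟨by
        by_contra h; exact hx.2 (hTK ⟨hx.1, h⟩), hTP hx.1⟩)
    obtain ⟨F', hF'c, hF'W, hF'ε, hF'N⟩ := perturb (N := N) hF a (hT.inter hK)
      (fun x hx => hKa hx.2) (fun x hx => hTP hx.1) (hN.mono fun x hx => by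
        by_cases hxK : x ∈ interior K
        · exact Or.inl ⟨hx, interior_subset hxK⟩
        · exact Or.inr (hTN ⟨hx, hxK⟩)) isOpen_interior (fun x hx => hTP hx.1) (half_pos hε)
    obtain ⟨F'', h1, h2, h3, h4⟩ := ih N F' (ε / 2) (half_pos hε) hF'c hF'N hNc
      (fun x hx => (hNU hx).2) (fun x hx => hUmem x (hNU hx).1)
    refine ⟨F'', h1, h2, fun x hx => (h3 x hx).trans (hF'W x hx), fun x => ?_⟩
    calc ‖F'' x - F x‖ = ‖(F'' x - F' x) + (F' x - F x)‖ := by congr 1; abel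
      _ ≤ _ := norm_add_le _ _
      _ < ε := by linarith [h4 x, hF'ε x]

variable [ChartedSpace (EuclideanSpace ℝ (Fin n)) M]

theorem exists_chart_list {T : Set M} (hT : IsCompact T) :
    ∃ l : List (OpenPartialHomeomorph M (EuclideanSpace ℝ (Fin n))),
      ∀ x ∈ T, ∃ e ∈ l, x ∈ e.source := by
  classical
  obtain ⟨t, -, ht⟩ := hT.elim_nhds_subcover
    (fun x => (chartAt (EuclideanSpace ℝ (Fin n)) x).source)
    (fun x _ => (chartAt _ x).open_source.mem_nhds (mem_chart_source _ x))
  refine ⟨t.toList.map fun x => chartAt _ x, fun x hx => ?_⟩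
  obtain ⟨y, hy, hxy⟩ := mem_iUnion₂.1 (ht hx)
  exact ⟨chartAt _ y, List.mem_map.2 ⟨y, by simpa using hy, rfl⟩, hxy⟩

theorem exists_nice {P : Set M} (hP : IsCompact P) {F : M → EuclideanSpace ℝ (Fin n)}
    (hF : ContinuousOn F P) (h0 : ∀ x ∈ P, F x = 0 → x ∈ interior P) {ε : ℝ} (hε : 0 < ε) :
    ∃ F' : M → EuclideanSpace ℝ (Fin n), ContinuousOn F' P ∧ NiceOff F' P ∅ ∧
      (∀ x ∉ interior P, F' x = F x) ∧ ∀ x, ‖F' x - F x‖ < ε := by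
  have hT : IsCompact (P ∩ F ⁻¹' {0}) :=
    hP.of_isClosed_subset (hF.preimage_isClosed_of_isClosed hP.isClosed isClosed_singleton)
      inter_subset_left
  obtain ⟨l, hl⟩ := exists_chart_list (n := n) hT
  have hemp : ∀ z ∈ P \ (P ∩ F ⁻¹' {0}), F z ≠ 0 := fun z hz h => hz.2 ⟨hz.1, h⟩
  refine exists_nice_list l _ F ε hε hF ⟨?_, fun z hz h => absurd h (hemp z hz)⟩ hT
    (fun x hx => h0 x hx.1 hx.2) hl
  convert finite_empty
  exact eq_empty_of_forall_notMem fun z hz => hemp z hz.1 hz.2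

theorem cnt_eq_of_close {P : Set M} (hP : IsCompact P) {F₀ F₁ : M → EuclideanSpace ℝ (Fin n)}
    (h₀ : ContinuousOn F₀ P) (h₁ : ContinuousOn F₁ P) (hN₀ : NiceOff F₀ P ∅)
    (hN₁ : NiceOff F₁ P ∅) (hfr : ∀ x ∈ frontier P, ‖F₁ x - F₀ x‖ < ‖F₀ x‖) :
    cnt F₀ P = cnt F₁ P := by
  set T : Set M := {x ∈ P | ‖F₀ x‖ ≤ ‖F₁ x - F₀ x‖} with hTdef
  have hT : IsCompact T := hP.of_isClosed_subset
    (hP.isClosed.isClosed_le h₀.norm (h₁.sub h₀).norm) (fun x hx => hx.1)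
  have hTi : T ⊆ interior P := by
    intro x hx
    by_contra h
    exact absurd hx.2 (not_le.2 (hfr x ⟨subset_closure hx.1, h⟩))
  obtain ⟨K₁, hK₁, hTK, hK₁P⟩ := exists_compact_between hT isOpen_interior hTi
  obtain ⟨K₂, hK₂, hK₁₂, hK₂P⟩ := exists_compact_between hK₁ isOpen_interior hK₁P
  obtain ⟨μ, hμ, hμ1, hμ0, hμI⟩ := exists_bump hK₁ isOpen_interior hK₁₂
  set G : M → EuclideanSpace ℝ (Fin n) := fun x => F₀ x + μ x • (F₁ x - F₀ x) with hG
  have hGc : ContinuousOn G P := h₀.add (hμ.continuousOn.smul (h₁.sub h₀))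
  have hG1 : ∀ x ∈ K₁, G x = F₁ x := fun x hx => by simp [hG, hμ1 x hx]
  have hGT : ∀ x ∈ P, G x = 0 → x ∈ T := by
    intro x hx h0
    by_contra hxT
    have hlt : ‖F₁ x - F₀ x‖ < ‖F₀ x‖ := by
      by_contra h; exact hxT ⟨hx, not_lt.1 h⟩
    refine ne_zero_of_close (segment_ne (a := F₀ x) (v := F₀ x) ?_ hlt (hμI x)) h0
    simpa using (norm_nonneg _).trans_lt hlt
  have hFT : ∀ x ∈ P, F₁ x = 0 → x ∈ T := fun x hx h => ⟨hx, by simp [h]⟩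
  have hiff : ∀ x ∈ P, G x = 0 ↔ F₁ x = 0 := by
    intro x hx
    constructor
    · intro h
      rw [← hG1 x (interior_subset (hTK (hGT x hx h)))]; exact h
    · intro h
      rw [hG1 x (interior_subset (hTK (hFT x hx h)))]; exact h
  have hGN : NiceOff G P ∅ := by
    refine ⟨hN₁.1.subset fun x hx => ⟨hx.1, (hiff x hx.1.1).1 hx.2⟩, fun x hx h => ?_⟩
    have h1 := hN₁.2 x hx ((hiff x hx.1).1 h)
    refine ⟨h1.1, h1.2.congr ?_⟩
    filter_upwards [isOpen_interior.mem_nhds (hTK (hGT x hx.1 h))] with y hy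
      using hG1 y (interior_subset hy)
  rw [← cnt_congr hiff]
  obtain ⟨l, hl⟩ := exists_chart_list (n := n) hK₂
  refine cnt_eq_list l K₂ F₀ G h₀ hGc hN₀ hGN hK₂ hK₂P hl fun x hx => ?_
  simp [hG, hμ0 x fun h => hx.2 (interior_subset h)]

end Manifold
end OneEnd

end Part5

section Part6

open Set Filter Topology MeasureTheory
open scoped ContDiff
namespace OneEnd

/-- The second map is an admissible modification of `g` over `D` with values in `O`, which is locally a
homeomorphism over `y`, with `d` preimages of `y` mod 2. -/
structure Adm {M : Type*} [TopologicalSpace M] (g : M → M) (O D : Set M) (y : M) (g' : M → M)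
    (d : ZMod 2) : Prop where
  cont : Continuous g'
  off : ∀ x ∉ interior (g ⁻¹' D), g' x = g x
  maps : ∀ x, g x ∈ D → g' x ∈ O
  lh : ∀ x, g' x = y → LH g' x
  fin : {x | g' x = y}.Finite
  card : ({x | g' x = y}.ncard : ZMod 2) = d

theorem Adm.mono {M : Type*} [TopologicalSpace M] {g g' : M → M} {O D O' D' : Set M} {y : M}
    {d : ZMod 2} (h : Adm g O D y g' d) (hO : O ⊆ O') (hD : D ⊆ D') (hDO : D' ⊆ O') :
    Adm g O' D' y g' d where
  cont := h.cont
  off := fun x hx => h.off x fun h => hx (interior_mono (preimage_mono hD) h)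
  maps := fun x hx => by
    by_cases hxD : g x ∈ D
    · exact hO (h.maps x hxD)
    · have hx2 : x ∉ interior (g ⁻¹' D) := fun hh =>
        hxD (show x ∈ g ⁻¹' D from interior_subset hh)
      rw [h.off x hx2]; exact hDO hx
  lh := h.lh
  fin := h.fin
  card := h.card

theorem Adm.mem_interior {M : Type*} [TopologicalSpace M] {g g' : M → M} {D : Set M} {y : M}
    (hg : Continuous g) (off : ∀ x ∉ interior (g ⁻¹' D), g' x = g x)
    (hy : y ∈ interior D) {x : M} (hx : g' x = y) :
    x ∈ interior (g ⁻¹' D) := by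
  by_contra hcon
  rw [off x hcon] at hx
  refine hcon (preimage_interior_subset_interior_preimage hg ?_)
  rw [mem_preimage, hx]; exact hy

theorem LH.add_const {X E : Type*} [TopologicalSpace X] [AddGroup E] [TopologicalSpace E]
    [IsTopologicalAddGroup E] {F : X → E} {x : X} (h : LH F x) (c : E) :
    LH (fun x => F x + c) x := by
  refine LH.comp (G := fun v => v + c) h ?_
  exact LH.of_openPartialHomeomorph (Homeomorph.addRight c).toOpenPartialHomeomorph (by simp)

section Manifold
variable {n : ℕ} {M : Type*} [TopologicalSpace M] [T2Space M] [LocallyCompactSpace M]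
  [ChartedSpace (EuclideanSpace ℝ (Fin n)) M]

theorem Adm.nice {g g' : M → M} {D : Set M} {y : M} {d : ZMod 2} (hg : Continuous g)
    (ψ : OpenPartialHomeomorph M (EuclideanSpace ℝ (Fin n))) (hD : D ⊆ ψ.source)
    (hy : y ∈ interior D) (h : Adm g ψ.source D y g' d) :
    ContinuousOn (fun x => ψ (g' x) + -ψ y) (g ⁻¹' D) ∧
    NiceOff (fun x => ψ (g' x) + -ψ y) (g ⁻¹' D) ∅ ∧
    cnt (fun x => ψ (g' x) + -ψ y) (g ⁻¹' D) = d := by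
  have hys : y ∈ ψ.source := hD (interior_subset hy)
  have hz : ∀ x ∈ g ⁻¹' D, ψ (g' x) + -ψ y = 0 ↔ g' x = y := by
    intro x hx
    rw [← sub_eq_add_neg, sub_eq_zero]
    exact ⟨fun h' => ψ.injOn (h.maps x hx) hys h', fun h => by rw [h]⟩
  refine ⟨?_, ⟨?_, ?_⟩, ?_⟩
  · exact (ψ.continuousOn.comp h.cont.continuousOn fun x hx => h.maps x hx).add continuousOn_const
  · exact h.fin.subset fun x hx => (hz x hx.1.1).1 hx.2
  · intro x hx h0
    have h1 := (hz x hx.1).1 h0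
    refine ⟨Adm.mem_interior hg h.off hy h1, ?_⟩
    refine LH.add_const (LH.comp (h.lh x h1) (LH.of_openPartialHomeomorph ψ ?_)) _
    rw [h1]; exact hys
  · rw [← h.card, cnt]
    congr 2
    ext x
    constructor
    · exact fun hx => (hz x hx.1).1 hx.2
    · intro hx
      have h1 := interior_subset (Adm.mem_interior hg h.off hy hx)
      exact ⟨h1, (hz x h1).2 hx⟩

theorem Adm.unique {g g₀ g₁ : M → M} {D : Set M} {y₀ y₁ : M} {d₀ d₁ : ZMod 2} (hg : Continuous g)
    (hP : IsCompact (g ⁻¹' D))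
    (ψ : OpenPartialHomeomorph M (EuclideanSpace ℝ (Fin n))) (hD : D ⊆ ψ.source)
    (hy₀ : y₀ ∈ interior D) (hy₁ : y₁ ∈ interior D)
    (h₀ : Adm g ψ.source D y₀ g₀ d₀) (h₁ : Adm g ψ.source D y₁ g₁ d₁)
    (hfr : ∀ x ∈ frontier (g ⁻¹' D), ‖ψ y₀ - ψ y₁‖ < ‖ψ (g x) - ψ y₀‖) : d₀ = d₁ := by
  obtain ⟨c0, n0, e0⟩ := h₀.nice hg ψ hD hy₀
  obtain ⟨c1, n1, e1⟩ := h₁.nice hg ψ hD hy₁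
  rw [← e0, ← e1]
  refine cnt_eq_of_close hP c0 c1 n0 n1 fun x hx => ?_
  simp only [h₀.off x hx.2, h₁.off x hx.2]
  have := hfr x hx
  convert this using 2
  · abel
  · abel

theorem frontier_ne {g : M → M} {D : Set M} {y : M} (hg : Continuous g) (hy : y ∈ interior D)
    (hP : IsCompact (g ⁻¹' D))
    (ψ : OpenPartialHomeomorph M (EuclideanSpace ℝ (Fin n))) (hD : D ⊆ ψ.source) :
    ∃ m > 0, ∀ x ∈ frontier (g ⁻¹' D), m ≤ ‖ψ (g x) - ψ y‖ := by
  refine exists_lower_bound (frontier_compact hP) ?_ ?_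
  · refine (ψ.continuousOn.comp hg.continuousOn fun x hx => ?_).sub continuousOn_const
    exact hD (frontier_sub hP hx)
  · intro x hx h
    have h1 : g x = y := ψ.injOn (hD (frontier_sub hP hx)) (hD (interior_subset hy))
      (sub_eq_zero.1 h)
    refine hx.2 (preimage_interior_subset_interior_preimage hg ?_)
    rw [mem_preimage, h1]; exact hy

theorem exists_adm {g : M → M} {O D : Set M} {y : M} (hg : Continuous g)
    (hP : IsCompact (g ⁻¹' D)) (hDc : IsCompact D) (hO : IsOpen O)
    (ψ : OpenPartialHomeomorph M (EuclideanSpace ℝ (Fin n))) (hD : D ⊆ O) (hOs : O ⊆ ψ.source)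
    (hy : y ∈ interior D) : ∃ g' d, Adm g O D y g' d := by
  classical
  have hDs := hD.trans hOs
  have hys := hDs (interior_subset hy)
  obtain ⟨ε, hε, hthick⟩ := (hDc.image_of_continuousOn (ψ.continuousOn.mono hDs)).exists_thickening_subset_open
    (ψ.isOpen_image_of_subset_source hO hOs) (image_mono hD)
  obtain ⟨F', hF'c, hF'N, hF'off, hF'ε⟩ := exists_nice hP (F := fun x => ψ (g x) - ψ y)
    ((ψ.continuousOn.comp hg.continuousOn fun x hx => hDs hx).sub continuousOn_const)
    (fun x hx h => by
      have h1 : g x = y := ψ.injOn (hDs hx) hys (sub_eq_zero.1 h)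
      refine preimage_interior_subset_interior_preimage hg ?_
      rw [mem_preimage, h1]; exact hy) hε
  set P := g ⁻¹' D with hPdef
  have hin : ∀ x ∈ P, F' x + ψ y ∈ ψ '' O := by
    intro x hx
    refine hthick (Metric.mem_thickening_iff.2 ⟨ψ (g x), ⟨g x, hx, rfl⟩, ?_⟩)
    have := hF'ε x
    rw [dist_eq_norm]
    have e : F' x + ψ y - ψ (g x) = F' x - (ψ (g x) - ψ y) := by abel
    rw [e]; exact this
  have hOt : ψ '' O ⊆ ψ.target := by
    rintro _ ⟨x, hx, rfl⟩; exact ψ.map_source (hOs hx)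
  have hOO : ∀ v ∈ ψ '' O, ψ.symm v ∈ O := by
    rintro _ ⟨x, hx, rfl⟩; rw [ψ.left_inv (hOs hx)]; exact hx
  set g' : M → M := fun x => if x ∈ P then ψ.symm (F' x + ψ y) else g x with hg'
  have hg'P : ∀ x ∈ P, g' x = ψ.symm (F' x + ψ y) := fun x hx => by simp [hg', hx]
  have hoff : ∀ x ∉ interior P, g' x = g x := by
    intro x hx
    by_cases hxP : x ∈ P
    · rw [hg'P x hxP, hF'off x hx]
      simp only [sub_add_cancel]
      exact ψ.left_inv (hDs hxP)
    · simp [hg', hxP]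
  have hzero : ∀ x ∈ P, g' x = y → F' x = 0 := by
    intro x hx h
    rw [hg'P x hx] at h
    have := congrArg ψ h
    rw [ψ.right_inv (hOt (hin x hx))] at this
    simpa using this
  refine ⟨g', _, ⟨?_, hoff, ?_, ?_, ?_, rfl⟩⟩
  · have h1 : ContinuousOn g' P := by
      refine ContinuousOn.congr (f := fun x => ψ.symm (F' x + ψ y)) ?_ hg'P
      exact ψ.continuousOn_symm.comp (hF'c.add continuousOn_const) fun x hx => hOt (hin x hx)
    have h2 : ContinuousOn g' (interior P)ᶜ := hg.continuousOn.congr hoff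
    rw [← continuousOn_univ]
    have : (univ : Set M) = P ∪ (interior P)ᶜ := by
      symm; rw [eq_univ_iff_forall]; intro x
      by_cases hx : x ∈ P
      · exact Or.inl hx
      · exact Or.inr fun h => hx (interior_subset h)
    rw [this]
    exact h1.union_of_isClosed h2 hP.isClosed isOpen_interior.isClosed_compl
  · intro x hx
    rw [hg'P x hx]; exact hOO _ (hin x hx)
  · intro x hx
    have hxi : x ∈ interior P := Adm.mem_interior hg hoff hy hx
    have hxP := interior_subset hxi
    have h0 := hzero x hxP hx
    have h1 := (hF'N.2 x ⟨hxP, fun h => h⟩ h0).2.add_const (ψ y)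
    have h2 : LH (fun x => ψ.symm (F' x + ψ y)) x :=
      LH.comp h1 (LH.of_openPartialHomeomorph ψ.symm (hOt (hin x hxP)))
    refine h2.congr ?_
    filter_upwards [isOpen_interior.mem_nhds hxi] with z hz using hg'P z (interior_subset hz)
  · refine hF'N.1.subset fun x hx => ?_
    have hxP := interior_subset (Adm.mem_interior hg hoff hy hx)
    exact ⟨⟨hxP, fun h => h⟩, hzero x hxP hx⟩

/-- The local degree over `y`. -/
def HasDg (n : ℕ) {M : Type*} [TopologicalSpace M] (g : M → M) (S : Set M) (y : M) (d : ZMod 2) : Prop :=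
  ∃ (ψ : OpenPartialHomeomorph M (EuclideanSpace ℝ (Fin n))) (D : Set M), IsCompact D ∧
    D ⊆ ψ.source ∧ D ⊆ S ∧ y ∈ interior D ∧ ∃ g', Adm g ψ.source D y g' d

theorem exists_nbhd {S : Set M} (hS : IsOpen S) {y : M} (hy : y ∈ S) :
    ∃ (ψ : OpenPartialHomeomorph M (EuclideanSpace ℝ (Fin n))) (D : Set M), IsCompact D ∧
    D ⊆ ψ.source ∧ D ⊆ S ∧ y ∈ interior D := by
  obtain ⟨D, hD, hyD, hDS⟩ := exists_compact_between (isCompact_singleton (x := y))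
    ((chartAt (EuclideanSpace ℝ (Fin n)) y).open_source.inter hS)
    (singleton_subset_iff.2 ⟨mem_chart_source _ y, hy⟩)
  exact ⟨chartAt _ y, D, hD, fun x hx => (hDS hx).1, fun x hx => (hDS hx).2, by simpa using hyD⟩

theorem hasDg_unique {g : M → M} {S : Set M} (hg : Continuous g)
    (hprop : ∀ D ⊆ S, IsCompact D → IsCompact (g ⁻¹' D)) {y : M} {d d' : ZMod 2}
    (h : HasDg n g S y d) (h' : HasDg n g S y d') : d = d' := by
  obtain ⟨ψ, D, hD, hDψ, hDS, hyD, g', ha⟩ := h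
  obtain ⟨ψ', D', hD', hDψ', hDS', hyD', g'', ha'⟩ := h'
  obtain ⟨D₂, hD₂, hyD₂, hD₂s⟩ := exists_compact_between (isCompact_singleton (x := y))
    ((isOpen_interior (s := D)).inter (isOpen_interior (s := D'))) (singleton_subset_iff.2 ⟨hyD, hyD'⟩)
  have s1 : D₂ ⊆ D := fun x hx => interior_subset (hD₂s hx).1
  have s2 : D₂ ⊆ D' := fun x hx => interior_subset (hD₂s hx).2
  obtain ⟨g₂, d₂, h2⟩ := exists_adm (O := ψ.source ∩ ψ'.source) hg
    (hprop D₂ (s1.trans hDS) hD₂) hD₂ (ψ.open_source.inter ψ'.open_source) ψ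
    (subset_inter (s1.trans hDψ) (s2.trans hDψ')) inter_subset_left (by simpa using hyD₂)
  have e1 : d = d₂ := by
    refine Adm.unique hg (hprop D hDS hD) ψ hDψ hyD hyD ha (h2.mono inter_subset_left s1 hDψ) ?_
    obtain ⟨m, hm, hm2⟩ := frontier_ne hg hyD (hprop D hDS hD) ψ hDψ
    intro x hx
    simpa using hm.trans_le (hm2 x hx)
  have e2 : d' = d₂ := by
    refine Adm.unique hg (hprop D' hDS' hD') ψ' hDψ' hyD' hyD' ha'
      (h2.mono inter_subset_right s2 hDψ') ?_
    obtain ⟨m, hm, hm2⟩ := frontier_ne hg hyD' (hprop D' hDS' hD') ψ' hDψ'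
    intro x hx
    simpa using hm.trans_le (hm2 x hx)
  rw [e1, e2]

theorem hasDg_exists {g : M → M} {S : Set M} (hg : Continuous g) (hS : IsOpen S)
    (hprop : ∀ D ⊆ S, IsCompact D → IsCompact (g ⁻¹' D)) {y : M} (hy : y ∈ S) :
    ∃ d, HasDg n g S y d := by
  obtain ⟨ψ, D, hD, hDψ, hDS, hyD⟩ := exists_nbhd (n := n) hS hy
  obtain ⟨g', d, h⟩ := exists_adm hg (hprop D hDS hD) hD ψ.open_source ψ hDψ Subset.rfl hyD
  exact ⟨d, ψ, D, hD, hDψ, hDS, hyD, g', h⟩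

theorem hasDg_open {g : M → M} {S : Set M} (hg : Continuous g)
    (hprop : ∀ D ⊆ S, IsCompact D → IsCompact (g ⁻¹' D)) (d : ZMod 2) :
    IsOpen {y | HasDg n g S y d} := by
  rw [isOpen_iff_mem_nhds]
  rintro y ⟨ψ, D, hD, hDψ, hDS, hyD, g', ha⟩
  have hP := hprop D hDS hD
  obtain ⟨m, hm, hm2⟩ := frontier_ne hg hyD hP ψ hDψ
  have hc : ContinuousAt (fun y' => ‖ψ y - ψ y'‖) y :=
    (continuousAt_const.sub (ψ.continuousAt (hDψ (interior_subset hyD)))).norm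
  filter_upwards [isOpen_interior.mem_nhds hyD,
    hc.eventually_lt (continuousAt_const (y := m)) (by simpa using hm)] with y' hy' hlt
  obtain ⟨g'', d', h⟩ := exists_adm hg hP hD ψ.open_source ψ hDψ Subset.rfl hy'
  have : d = d' := Adm.unique hg hP ψ hDψ hyD hy' ha h fun x hx => hlt.trans_le (hm2 x hx)
  exact ⟨ψ, D, hD, hDψ, hDS, hy', g'', this ▸ h⟩

theorem hasDg_const {g : M → M} {S : Set M} (hg : Continuous g) (hS : IsOpen S)
    (hprop : ∀ D ⊆ S, IsCompact D → IsCompact (g ⁻¹' D)) (hconn : IsPreconnected S)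
    {y₀ y₁ : M} (hy₀ : y₀ ∈ S) (hy₁ : y₁ ∈ S) {d₀ d₁ : ZMod 2}
    (h₀ : HasDg n g S y₀ d₀) (h₁ : HasDg n g S y₁ d₁) : d₀ = d₁ := by
  by_contra hne
  obtain ⟨z, -, hz1, hz2⟩ := hconn {y | HasDg n g S y d₀}
    (⋃ d ∈ {d | d ≠ d₀}, {y | HasDg n g S y d}) (hasDg_open hg hprop d₀)
    (isOpen_biUnion fun d _ => hasDg_open hg hprop d) (by
      intro y hy
      obtain ⟨d, hd⟩ := hasDg_exists (n := n) hg hS hprop hy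
      by_cases h : d = d₀
      · exact Or.inl (h ▸ hd)
      · exact Or.inr (mem_biUnion (x := d) h hd)) ⟨y₀, hy₀, h₀⟩
      ⟨y₁, hy₁, mem_biUnion (x := d₁) (fun h => hne h.symm) h₁⟩
  obtain ⟨d, hd, hz3⟩ := mem_iUnion₂.1 hz2
  exact hd (hasDg_unique hg hprop hz3 hz1)

theorem hasDg_self {g : M → M} {S : Set M} (hg : Continuous g) (hS : IsOpen S) {y : M}
    (hy : y ∈ S) (hlh : ∀ x, g x = y → LH g x) (hfin : {x | g x = y}.Finite) :
    HasDg n g S y ({x | g x = y}.ncard : ZMod 2) := by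
  obtain ⟨ψ, D, hD, hDψ, hDS, hyD⟩ := exists_nbhd (n := n) hS hy
  exact ⟨ψ, D, hD, hDψ, hDS, hyD, g, hg, fun _ _ => rfl, fun x hx => hDψ hx, hlh, hfin, rfl⟩

end Manifold
end OneEnd

end Part6

section Part7

open Set Filter Topology MeasureTheory
open scoped ContDiff
namespace OneEnd

theorem compl_point_preconnected {n : ℕ} (hn : 2 ≤ n) {M : Type*} [TopologicalSpace M] [T2Space M]
    [ChartedSpace (EuclideanSpace ℝ (Fin n)) M] [ConnectedSpace M] (p : M) :
    IsPreconnected ({p}ᶜ : Set M) := by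
  set ψ := chartAt (EuclideanSpace ℝ (Fin n)) p with hψ
  have hp : p ∈ ψ.source := mem_chart_source _ p
  obtain ⟨r, hr, hrs⟩ := Metric.isOpen_iff.1 ψ.open_target (ψ p) (ψ.map_source hp)
  set b := OpenPartialHomeomorph.univBall (ψ p) r with hb
  have hrank : 1 < Module.rank ℝ (EuclideanSpace ℝ (Fin n)) := by
    rw [← Module.finrank_eq_rank, finrank_euclideanSpace_fin]
    exact_mod_cast hn
  have hbm : ∀ v, b v ∈ Metric.ball (ψ p) r := fun v => by
    rw [← OpenPartialHomeomorph.univBall_target (ψ p) hr]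
    exact b.map_source (by simp [hb])
  have hb0 : b 0 = ψ p := OpenPartialHomeomorph.univBall_apply_zero _ _
  have hbinj : ∀ v, b v = ψ p → v = 0 := fun v hv =>
    b.injOn (by simp [hb]) (by simp [hb]) (hv.trans hb0.symm)
  set P : Set M := (fun v => ψ.symm (b v)) '' {0}ᶜ with hP
  have hPc : IsPreconnected P := by
    refine (isConnected_compl_singleton_of_one_lt_rank hrank 0).isPreconnected.image _ ?_
    exact ψ.continuousOn_symm.comp (OpenPartialHomeomorph.continuous_univBall _ _).continuousOn
      fun v _ => hrs (hbm v)
  have hBo : ∃ B ∈ 𝓝 p, ∀ x ∈ B, x ≠ p → x ∈ P := by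
    refine ⟨ψ.source ∩ ψ ⁻¹' Metric.ball (ψ p) r,
      (ψ.isOpen_inter_preimage Metric.isOpen_ball).mem_nhds ⟨hp, Metric.mem_ball_self hr⟩, ?_⟩
    rintro x ⟨hx, hxb⟩ hxp
    have hxt : ψ x ∈ b.target := by
      rw [hb, OpenPartialHomeomorph.univBall_target (ψ p) hr]; exact hxb
    refine ⟨b.symm (ψ x), ?_, ?_⟩
    · intro h0
      have h0' : b.symm (ψ x) = 0 := h0
      have := b.right_inv hxt
      rw [h0', hb0] at this
      exact hxp (ψ.injOn hx hp this.symm)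
    · show ψ.symm (b (b.symm (ψ x))) = x
      rw [b.right_inv hxt, ψ.left_inv hx]
  have hPp : P ⊆ {p}ᶜ := by
    rintro _ ⟨v, hv, rfl⟩ h
    have h' : ψ.symm (b v) = p := h
    have := congrArg ψ h'
    rw [ψ.right_inv (hrs (hbm v))] at this
    exact hv (hbinj v this)
  obtain ⟨B, hB, hBP⟩ := hBo
  have key : ∀ u v : Set M, IsOpen u → IsOpen v → {p}ᶜ ⊆ u ∪ v → {p}ᶜ ∩ (u ∩ v) = ∅ → P ⊆ u →
      {p}ᶜ ⊆ u := by
    intro u v hu hv huv hd hPu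
    have hdis : ∀ x, x ≠ p → x ∈ u → x ∈ v → False := fun x h1 h2 h3 => by
      have : x ∈ ({p}ᶜ ∩ (u ∩ v) : Set M) := ⟨h1, h2, h3⟩
      rw [hd] at this; exact this
    have hcl : IsClopen (v ∩ {p}ᶜ) := by
      refine ⟨⟨?_⟩, hv.inter isOpen_compl_singleton⟩
      rw [isOpen_iff_mem_nhds]
      intro x hx
      by_cases hxp : x = p
      · subst hxp
        filter_upwards [hB] with z hz hz2
        exact hdis z hz2.2 (hPu (hBP z hz hz2.2)) hz2.1
      · have hxu : x ∈ u := (huv hxp).resolve_right fun h => hx ⟨h, hxp⟩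
        filter_upwards [hu.mem_nhds hxu] with z hz hz2
        exact hdis z hz2.2 hz hz2.1
    rcases isClopen_iff.1 hcl with h | h
    · intro x hx
      refine (huv hx).resolve_right fun hv => ?_
      have : x ∈ v ∩ {p}ᶜ := ⟨hv, hx⟩
      rw [h] at this; exact this
    · have : p ∈ v ∩ {p}ᶜ := by rw [h]; trivial
      exact absurd rfl this.2
  rw [isPreconnected_iff_subset_of_disjoint]
  intro u v hu hv huv hd
  rcases isPreconnected_iff_subset_of_disjoint.1 hPc u v hu hv (hPp.trans huv)
    (by rw [← subset_empty_iff, ← hd]; exact inter_subset_inter_left _ hPp) with h | h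
  · exact Or.inl (key u v hu hv huv hd h)
  · exact Or.inr (key v u hv hu (by rwa [union_comm]) (by rwa [inter_comm v u]) h)

theorem frontier_component {M : Type*} [TopologicalSpace M] [LocallyConnectedSpace M] {K : Set M}
    (hK : IsClosed K) (x : M) : frontier (connectedComponentIn Kᶜ x) ⊆ K := by
  intro z hz
  by_contra hzK
  have hzK' : z ∈ Kᶜ := hzK
  have ho : IsOpen (connectedComponentIn Kᶜ z) := hK.isOpen_compl.connectedComponentIn
  have ho' : IsOpen (connectedComponentIn Kᶜ x) := hK.isOpen_compl.connectedComponentIn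
  obtain ⟨w, hw1, hw2⟩ := mem_closure_iff.1 hz.1 _ ho (mem_connectedComponentIn hzK')
  have e := (connectedComponentIn_eq hw1).trans (connectedComponentIn_eq hw2).symm
  refine hz.2 ?_
  rw [ho'.interior_eq, ← e]
  exact mem_connectedComponentIn hzK'

theorem exists_unbounded {M : Type*} [TopologicalSpace M] [T2Space M] [LocallyCompactSpace M]
    [LocallyConnectedSpace M] [ConnectedSpace M] [NoncompactSpace M] {K : Set M}
    (hK : IsCompact K) : ∃ x ∈ Kᶜ, ¬ IsCompact (closure (connectedComponentIn Kᶜ x)) := by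
  by_contra! hcon
  obtain ⟨L, hL, hKL, -⟩ := exists_compact_between hK isOpen_univ (subset_univ K)
  have hKo := hK.isClosed.isOpen_compl
  have hfK : frontier L ⊆ Kᶜ := fun x hx h => hx.2 (hKL h)
  obtain ⟨t, ht, htc⟩ := (frontier_compact hL).elim_nhds_subcover
    (fun x => connectedComponentIn Kᶜ x)
    (fun x hx => (hKo.connectedComponentIn).mem_nhds (mem_connectedComponentIn (hfK hx)))
  have hR : IsCompact (L ∪ ⋃ x ∈ t, closure (connectedComponentIn Kᶜ x)) :=
    hL.union (t.finite_toSet.isCompact_biUnion fun x hx => hcon x (hfK (ht x hx)))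
  refine noncompact_univ M ?_
  convert hR
  symm
  rw [eq_univ_iff_forall]
  intro x
  by_contra hx
  have hxL : x ∉ L := fun h => hx (Or.inl h)
  have hxK : x ∈ Kᶜ := fun h => hxL (interior_subset (hKL h))
  set C := connectedComponentIn Kᶜ x with hC
  have hxC : x ∈ C := mem_connectedComponentIn hxK
  have hCf : ∀ z ∈ C, z ∉ frontier L := by
    intro z hz hzf
    obtain ⟨y, hy, hzy⟩ := mem_iUnion₂.1 (htc hzf)
    have e := (connectedComponentIn_eq hz).trans (connectedComponentIn_eq hzy).symm
    refine hx (Or.inr (mem_iUnion₂.2 ⟨y, hy, subset_closure ?_⟩))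
    rw [← e]; exact hxC
  have hCL : C ⊆ Lᶜ := by
    refine isPreconnected_connectedComponentIn.subset_left_of_subset_union
      hL.isClosed.isOpen_compl (isOpen_interior (s := L)) ?_ ?_ ⟨x, hxC, hxL⟩
    · exact disjoint_left.2 fun z h1 h2 => h1 (interior_subset h2)
    · intro z hz
      by_cases hzL : z ∈ L
      · right
        by_contra h
        exact hCf z hz ⟨subset_closure hzL, h⟩
      · exact Or.inl hzL
  have hfr : frontier C = ∅ := by
    rw [eq_empty_iff_forall_notMem]
    intro z hz
    have hzi : z ∈ interior L := hKL (frontier_component hK.isClosed x hz)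
    obtain ⟨w, hw1, hw2⟩ := mem_closure_iff.1 hz.1 _ isOpen_interior hzi
    exact hCL hw2 (interior_subset hw1)
  rcases frontier_eq_empty_iff.1 hfr with h | h
  · rw [h] at hxC; exact hxC
  · have := hcon x hxK
    rw [← hC, h, closure_univ] at this
    exact noncompact_univ M this

theorem exists_notMem {M : Type*} [TopologicalSpace M] [T2Space M] {A Q : Set M}
    (hA : ¬ IsCompact (closure A)) (hQ : IsCompact Q) : ∃ y ∈ A, y ∉ Q := by
  by_contra! h
  exact hA (hQ.of_isClosed_subset isClosed_closure (closure_minimal h hQ.isClosed))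

theorem unbounded_unique {n : ℕ} (hn : 2 ≤ n) {M : Type*} [TopologicalSpace M] [T2Space M]
    [LocallyCompactSpace M] [LocallyConnectedSpace M]
    [ChartedSpace (EuclideanSpace ℝ (Fin n)) M] [ConnectedSpace M] [ContractibleSpace M]
    {K : Set M} (hK : IsCompact K) {A B : Set M} (hAo : IsOpen A) (hAK : frontier A ⊆ K)
    (hAB : Disjoint A B) (hA : ¬ IsCompact (closure A)) (hB : ¬ IsCompact (closure B)) : False := by
  obtain ⟨L, hL, hKL, -⟩ := exists_compact_between hK isOpen_univ (subset_univ K)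
  obtain ⟨u, hu, hu1, hu0, huI⟩ := exists_bump hK (isOpen_interior (s := L)) hKL
  obtain ⟨p, ⟨H⟩⟩ := id_nullhomotopic M
  classical
  set φ : M → ℝ := fun x => if x ∈ A then u x else 1 with hφ
  have hφc : Continuous φ := by
    refine Continuous.if (fun a ha => hu1 a (hAK ha)) hu continuous_const
  have hφA : ∀ x ∈ A, φ x = u x := fun x hx => if_pos hx
  have hφA' : ∀ x ∉ A, φ x = 1 := fun x hx => if_neg hx
  set g : M → M := fun x => H (projIcc 0 1 zero_le_one (φ x), x) with hgdef
  have hg : Continuous g :=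
    H.continuous.comp ((continuous_projIcc.comp hφc).prodMk continuous_id)
  have hgA : ∀ x ∉ A, g x = p := by
    intro x hx
    have : projIcc (0:ℝ) 1 zero_le_one (φ x) = 1 := by rw [hφA' x hx]; exact projIcc_right zero_le_one
    simp only [hgdef, this]
    exact H.apply_one x
  have hgL : ∀ x ∈ A, x ∉ interior L → g x = x := by
    intro x hx hxL
    have : projIcc (0:ℝ) 1 zero_le_one (φ x) = 0 := by
      rw [hφA x hx, hu0 x hxL]; exact projIcc_left zero_le_one
    simp only [hgdef, this]
    exact H.apply_zero x
  have hprop : ∀ D ⊆ ({p}ᶜ : Set M), IsCompact D → IsCompact (g ⁻¹' D) := by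
    intro D hD hDc
    refine (hL.union hDc).of_isClosed_subset (hDc.isClosed.preimage hg) fun x hx => ?_
    by_cases hxL : x ∈ interior L
    · exact Or.inl (interior_subset hxL)
    · right
      have hxA : x ∈ A := by
        by_contra h
        have h2 : g x ∈ D := hx
        rw [hgA x h] at h2
        exact hD h2 rfl
      have h2 : g x ∈ D := hx
      rwa [hgL x hxA hxL] at h2
  have hQ : IsCompact (L ∪ g '' L ∪ {p}) := (hL.union (hL.image hg)).union isCompact_singleton
  obtain ⟨y₀, hy₀A, hy₀⟩ := exists_notMem hA hQ
  obtain ⟨y₁, hy₁B, hy₁⟩ := exists_notMem hB hQ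
  have hp0 : y₀ ≠ p := fun h => hy₀ (Or.inr h)
  have hp1 : y₁ ≠ p := fun h => hy₁ (Or.inr h)
  have hL0 : y₀ ∉ L := fun h => hy₀ (Or.inl (Or.inl h))
  have hfib : ∀ x y, y ∉ L ∪ g '' L ∪ {p} → g x = y → x ∈ A ∧ x = y := by
    intro x y hy hx
    have hxA : x ∈ A := by
      by_contra h
      rw [hgA x h] at hx
      exact hy (Or.inr hx.symm)
    have hxL : x ∉ L := fun h => hy (Or.inl (Or.inr ⟨x, h, hx⟩))
    exact ⟨hxA, by rw [← hx, hgL x hxA fun h => hxL (interior_subset h)]⟩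
  have hid : g =ᶠ[𝓝 y₀] id := by
    filter_upwards [hAo.mem_nhds hy₀A, hL.isClosed.isOpen_compl.mem_nhds hL0] with z h1 h2
    exact hgL z h1 fun h => h2 (interior_subset h)
  have hset0 : {x | g x = y₀} = {y₀} := by
    ext x
    exact ⟨fun hx => (hfib x y₀ hy₀ hx).2, fun hx => by
      have hx' : x = y₀ := hx
      subst hx'; exact hid.self_of_nhds⟩
  have hset1 : {x | g x = y₁} = ∅ := by
    rw [eq_empty_iff_forall_notMem]
    intro x hx
    obtain ⟨h1, h2⟩ := hfib x y₁ hy₁ hx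
    exact disjoint_left.1 hAB h1 (h2 ▸ hy₁B)
  have hS : IsOpen ({p}ᶜ : Set M) := isOpen_compl_singleton
  have d0 := hasDg_self (n := n) (y := y₀) hg hS hp0 (fun x hx => by
    obtain ⟨h1, h2⟩ := hfib x y₀ hy₀ hx
    subst h2
    exact (LH.of_openPartialHomeomorph (OpenPartialHomeomorph.refl M) (mem_univ _)).congr hid)
    (by rw [hset0]; exact finite_singleton _)
  have d1 := hasDg_self (n := n) (y := y₁) hg hS hp1 (fun x hx => by
    have : x ∈ {x | g x = y₁} := hx
    rw [hset1] at this; exact this.elim)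
    (by rw [hset1]; exact finite_empty)
  have := hasDg_const hg hS hprop (compl_point_preconnected hn p) hp0 hp1 d0 d1
  rw [hset0, hset1] at this
  simp at this

end OneEnd

end Part7

/-- **Lemma 2.1.** A connected, noncompact, contractible topological manifold (without
boundary) of dimension at least 2 has exactly one end. -/
theorem contractible_hasOneEnd
    (n : ℕ) (hn : 2 ≤ n) (M : Type*) [TopologicalSpace M] [T2Space M]
    [ChartedSpace (EuclideanSpace ℝ (Fin n)) M]
    [ConnectedSpace M] [NoncompactSpace M] [ContractibleSpace M] :
    HasOneEnd M := by
  have _ : LocallyCompactSpace M := ChartedSpace.locallyCompactSpace (EuclideanSpace ℝ (Fin n)) M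
  have _ : LocallyConnectedSpace M :=
    ChartedSpace.locallyConnectedSpace (EuclideanSpace ℝ (Fin n)) M
  intro K hK
  obtain ⟨x, hx, hxc⟩ := OneEnd.exists_unbounded hK
  refine ⟨_, ⟨⟨x, hx, rfl⟩, hxc⟩, ?_⟩
  rintro _ ⟨⟨y, hy, rfl⟩, hyc⟩
  by_contra hne
  refine OneEnd.unbounded_unique hn hK (hK.isClosed.isOpen_compl.connectedComponentIn)
    (OneEnd.frontier_component hK.isClosed y) ?_ hyc hxc
  refine Set.disjoint_left.2 fun z h1 h2 => hne ?_
  exact (connectedComponentIn_eq h1).trans (connectedComponentIn_eq h2).symm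
end

section
/- Let M be the interior of a handlebody of genus γ, and let Ω₁ ⋐ Ω₂ ⋐ ⋯ ⋐ M be a C¹ exhaustion of M such that each Ω_i and each complement M ∖ Ω_i is connected. Then for all sufficiently large i, the genus of the surface ∂Ω_i is at least γ. -/
/-- `A ⋐ B` : the closure of `A` is compact and contained in the interior of `B`. -/
def CptSub {M : Type*} [TopologicalSpace M] (A B : Set M) : Prop :=
  IsCompact (closure A) ∧ closure A ⊆ interior B

/-- The standard planar domain with `γ` holes: the open unit disk in `ℂ ≅ ℝ²` with `γ`
disjoint closed round disks removed.  It is a (non-compact) model for the interior of a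
disk with `γ` holes. -/
def planarDomain (γ : ℕ) : Set ℂ :=
  Metric.ball 0 1 \
    ⋃ k ∈ Finset.range γ, Metric.closedBall ((((2 * k + 1 : ℝ)) / γ - 1 : ℝ) : ℂ) (1 / (4 * γ))

/-- A concrete model of the interior of the handlebody of genus `γ` (the compact
orientable 3-manifold obtained by attaching `γ` one-handles to a closed 3-ball): since
the genus-`γ` handlebody is diffeomorphic to `P × [0,1]` where `P` is a closed disk with
`γ` holes, its interior is diffeomorphic to `planarDomain γ × ℝ`, realized here as an
open subset of `ℂ × ℝ ≅ ℝ³`. -/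
def openHandlebody (γ : ℕ) : Set (ℂ × ℝ) :=
  (planarDomain γ) ×ˢ (Set.univ : Set ℝ)

/-- A concrete model of the closed orientable surface of genus `γ` : the topological
boundary of the solid `P̄ × [0,1]`, where `P` is the standard planar domain with `γ`
holes.  (`P̄ × [0,1]` is a genus-`γ` handlebody, so its boundary is the genus-`γ`
surface.) -/
def genusSurface (γ : ℕ) : Set (ℂ × ℝ) :=
  frontier ((planarDomain γ) ×ˢ Set.Ioo (0 : ℝ) 1)

/-- `E` is a `C¹` domain in (an open subset of) `ℂ × ℝ ≅ ℝ³` : `E` is open and near each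
boundary point the boundary admits a `C¹` local defining function with nonvanishing
differential. -/
def IsC1DomainAmbient (E : Set (ℂ × ℝ)) : Prop :=
  IsOpen E ∧ ∀ x ∈ frontier E, ∃ U : Set (ℂ × ℝ), IsOpen U ∧ x ∈ U ∧
    ∃ f : ℂ × ℝ → ℝ, ContDiffOn ℝ 1 f U ∧ (∀ y ∈ U, fderiv ℝ f y ≠ 0) ∧
      E ∩ U = {y ∈ U | f y < 0}


namespace HBE

open Set Topology unitInterval

theorem lift_homotopy {A : Type*} [TopologicalSpace A] (f : I × A → ℂ) (hf : Continuous f)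
    (h0 : ∀ x, f x ≠ 0) (g0 : A → ℂ) (hg0 : Continuous g0)
    (hg : ∀ a, Complex.exp (g0 a) = f (0, a)) :
    ∃ g : I × A → ℂ, Continuous g ∧ (∀ x, Complex.exp (g x) = f x) ∧ ∀ a, g (0, a) = g0 a := by
  let H : C(I × A, {z : ℂ // z ≠ 0}) := ⟨fun x => ⟨f x, h0 x⟩, by fun_prop⟩
  have H0 : ∀ a, H (0, a) = (⟨_, (ContinuousMap.mk g0 hg0 a).exp_ne_zero⟩ : {z : ℂ // z ≠ 0}) :=
    fun a => Subtype.ext (hg a).symm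
  refine ⟨Complex.isCoveringMap_exp.liftHomotopy H ⟨g0, hg0⟩ H0, by fun_prop, fun x => ?_,
    fun a => ?_⟩
  · have := congr_fun (Complex.isCoveringMap_exp.liftHomotopy_lifts H ⟨g0, hg0⟩ H0) x
    exact congr_arg Subtype.val this
  · exact Complex.isCoveringMap_exp.liftHomotopy_zero H ⟨g0, hg0⟩ H0 a

theorem exists_log {E : Type*} [NormedAddCommGroup E] [NormedSpace ℝ E] (f : E → ℂ)
    (hf : Continuous f) (h0 : ∀ x, f x ≠ 0) :
    ∃ g : E → ℂ, Continuous g ∧ ∀ x, Complex.exp (g x) = f x := by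
  obtain ⟨g, hg, he, -⟩ := lift_homotopy (fun x : I × E => f ((x.1 : ℝ) • x.2)) (by fun_prop)
    (fun x => h0 _) (fun _ => Complex.log (f 0)) continuous_const
    (fun a => by simp [Complex.exp_log (h0 0)])
  exact ⟨fun x => g (1, x), by fun_prop, fun x => by simp [he]⟩

theorem exp_diff_const {X : Type*} [TopologicalSpace X] {S : Set X} (hS : IsPreconnected S)
    {u v : X → ℂ} (hu : ContinuousOn u S) (hv : ContinuousOn v S)
    (h : ∀ x ∈ S, Complex.exp (u x) = Complex.exp (v x)) {x y : X} (hx : x ∈ S) (hy : y ∈ S) :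
    u x - v x = u y - v y := by
  have := Complex.isCoveringMap_exp.eqOn_of_comp_eqOn hS hu
    (g₂ := fun z => v z + (u x - v x)) (hv.add continuousOn_const) (fun z hz => by
      apply Subtype.ext
      simp only [Function.comp_apply, Complex.exp_add, h z hz]
      rw [Complex.exp_sub, h x hx, div_self (Complex.exp_ne_zero _), mul_one]) hx (by simp)
  have h2 : u y = v y + (u x - v x) := this hy
  rw [h2]; ring

theorem exists_ext {X : Type*} [TopologicalSpace X] [NormalSpace X] {S : Set X} (hS : IsClosed S)
    {h : X → ℂ} (hh : ContinuousOn h S) : ∃ H : X → ℂ, Continuous H ∧ EqOn H h S := by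
  obtain ⟨g, hg⟩ := ContinuousMap.exists_restrict_eq hS ⟨S.domRestrict h, hh.domRestrict⟩
  refine ⟨g, g.continuous, fun x hx => ?_⟩
  exact congr_arg (fun k => k ⟨x, hx⟩) hg

theorem exists_contOn {X : Type*} [TopologicalSpace X] {S : Set X} {w : S → ℂ}
    (hw : Continuous w) : ∃ u : X → ℂ, ContinuousOn u S ∧ ∀ z : S, u z = w z := by
  have h : ∀ z : S, Function.extend Subtype.val w 0 z = w z :=
    fun z => Subtype.val_injective.extend_apply _ _ _
  refine ⟨Function.extend Subtype.val w 0, ?_, h⟩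
  rw [continuousOn_iff_continuous_domRestrict]
  exact hw.congr fun z => (h z).symm

theorem sphere_pre (c : ℂ) (r : ℝ) : IsPreconnected (Metric.sphere c r) :=
  isPreconnected_sphere (by rw [Complex.rank_real_complex]; norm_num) c r

noncomputable def loop (c : ℂ) (r : ℝ) (s : ℝ) : ℂ :=
  c + r * Complex.exp (2 * Real.pi * s * Complex.I)

theorem loop_mem (c : ℂ) {r : ℝ} (hr : 0 < r) (s : ℝ) : loop c r s ∈ Metric.sphere c r := by
  have : ‖Complex.exp (2 * Real.pi * s * Complex.I)‖ = 1 := by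
    have := Complex.norm_exp_ofReal_mul_I (2 * Real.pi * s)
    push_cast at this; exact this
  simp [loop, this, abs_of_pos hr]

theorem loop_cont (c : ℂ) (r : ℝ) : Continuous (loop c r) := by unfold loop; fun_prop

theorem loop_one (c : ℂ) (r : ℝ) : loop c r 1 = loop c r 0 := by
  simp [loop, Complex.exp_two_pi_mul_I]

theorem loop_zpow (c : ℂ) {r : ℝ} (hr : 0 < r) (s : ℝ) (n : ℤ) :
    (loop c r s - c) ^ n = Complex.exp (n * Real.log r + 2 * Real.pi * Complex.I * n * s) := by
  have h1 : (r : ℂ) = Complex.exp (Real.log r) := by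
    rw [← Complex.ofReal_exp, Real.exp_log hr]
  have : loop c r s - c = Complex.exp (Real.log r + 2 * Real.pi * s * Complex.I) := by
    rw [Complex.exp_add, ← h1]; simp [loop]
  rw [this, ← Complex.exp_int_mul]
  congr 1; ring

theorem winding_zero {c : ℂ} {r : ℝ} (hr : 0 < r) {n : ℤ} {u : ℂ → ℂ}
    (hu : ContinuousOn u (Metric.sphere c r))
    (h : ∀ z ∈ Metric.sphere c r, (z - c) ^ n = Complex.exp (u z)) : n = 0 := by
  have h1 := exp_diff_const (S := (univ : Set ℝ)) isPreconnected_univ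
    (u := fun s => u (loop c r s)) (v := fun s => n * Real.log r + 2 * Real.pi * Complex.I * n * s)
    ((hu.comp_continuous (loop_cont c r) (fun s => loop_mem c hr s)).continuousOn)
    (by fun_prop) (fun s _ => by rw [← h _ (loop_mem c hr s), loop_zpow c hr])
    (mem_univ 0) (mem_univ 1)
  simp only [loop_one] at h1
  have h2 : 2 * Real.pi * Complex.I * n = 0 := by
    push_cast at h1
    linear_combination h1
  simpa [Real.pi_ne_zero] using h2

theorem loop_surj (c : ℂ) {r : ℝ} {z : ℂ} (hz : z ∈ Metric.sphere c r) :
    ∃ s : I, loop c r s = z := by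
  have hz' : ‖z - c‖ = r := by simpa [dist_eq_norm] using hz
  let θ := toIcoMod Real.two_pi_pos 0 (Complex.arg (z - c))
  have hθ := toIcoMod_mem_Ico Real.two_pi_pos 0 (Complex.arg (z - c))
  have h2 : (2 * Real.pi) * (θ / (2 * Real.pi)) = θ := by field_simp
  refine ⟨⟨θ / (2 * Real.pi), ?_, ?_⟩, ?_⟩
  · exact div_nonneg hθ.1 Real.two_pi_pos.le
  · rw [div_le_one Real.two_pi_pos]; have := hθ.2.le; simpa using this
  · have h3 : (2 * Real.pi * ((θ / (2 * Real.pi) : ℝ) : ℂ)) = (θ : ℂ) := by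
      rw [← h2]; push_cast; simp
    simp only [loop, h3]
    have h4 : θ = Complex.arg (z - c) - toIcoDiv Real.two_pi_pos 0 (Complex.arg (z - c)) • (2 * Real.pi) := rfl
    have h5 : Complex.exp (θ * Complex.I) = Complex.exp (Complex.arg (z - c) * Complex.I) := by
      rw [Complex.exp_eq_exp_iff_exists_int]
      refine ⟨- toIcoDiv Real.two_pi_pos 0 (Complex.arg (z - c)), ?_⟩
      rw [h4]; push_cast; simp; ring
    rw [h5, ← hz', Complex.norm_mul_exp_arg_mul_I]; ring

theorem exists_winding (c : ℂ) {r : ℝ} (hr : 0 < r) {f : ℂ → ℂ}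
    (hf : ContinuousOn f (Metric.sphere c r)) (h0 : ∀ z ∈ Metric.sphere c r, f z ≠ 0) :
    ∃ (n : ℤ) (u : ℂ → ℂ), ContinuousOn u (Metric.sphere c r) ∧
      ∀ z ∈ Metric.sphere c r, f z = (z - c) ^ n * Complex.exp (u z) := by
  obtain ⟨g, hg, he⟩ := exists_log (fun s : ℝ => f (loop c r s))
    (hf.comp_continuous (loop_cont c r) (fun s => loop_mem c hr s))
    (fun s => h0 _ (loop_mem c hr s))
  have h1 : Complex.exp (g 1) = Complex.exp (g 0) := by rw [he, he, loop_one]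
  obtain ⟨n, hn⟩ := Complex.exp_eq_exp_iff_exists_int.1 h1
  let p : I → Metric.sphere c r := fun s => ⟨loop c r s, loop_mem c hr s⟩
  have hp : Continuous p := by
    have := loop_cont c r
    fun_prop
  have hps : Function.Surjective p := fun ⟨z, hz⟩ => by
    obtain ⟨s, hs⟩ := loop_surj c hz
    exact ⟨s, Subtype.ext hs⟩
  have hq : IsQuotientMap p := hp.isClosedMap.isQuotientMap hp hps
  let v : I → ℂ := fun s => g s - (n * Real.log r + 2 * Real.pi * Complex.I * n * (s : ℝ))
  have hv : Continuous v := by fun_prop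
  have hpv : ∀ s t : I, p s = p t → v s = v t := by
    have key : ∀ s t : I, (s : ℝ) ≤ t → p s = p t → v s = v t := by
      intro s t hst h
      have h' : loop c r s = loop c r t := congr_arg Subtype.val h
      have h'' : Complex.exp (2 * Real.pi * (t:ℝ) * Complex.I) =
          Complex.exp (2 * Real.pi * (s:ℝ) * Complex.I) := by
        have : (r : ℂ) ≠ 0 := by exact_mod_cast hr.ne'
        simpa [loop, this] using h'.symm
      obtain ⟨m, hm⟩ := Complex.exp_eq_exp_iff_exists_int.1 h''
      have hm' : (2 * Real.pi * Complex.I) * ((t : ℝ) - (s : ℝ) - m) = 0 := by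
        linear_combination hm
      have hm2 : ((t : ℝ) : ℂ) - (s : ℝ) - m = 0 := by
        simpa [Real.pi_ne_zero] using hm'
      have hm3 : (t : ℝ) - s - m = 0 := by exact_mod_cast hm2
      have m0 : (0 : ℝ) ≤ m := by linarith
      have m1 : (m : ℝ) ≤ 1 := by linarith [s.2.1, t.2.2]
      have m0' : 0 ≤ m := by exact_mod_cast m0
      have m1' : m ≤ 1 := by exact_mod_cast m1
      rcases (by omega : m = 0 ∨ m = 1) with rfl | rfl
      · have : s = t := Subtype.ext (by push_cast at hm3; linarith)
        rw [this]
      · have hs : (s : ℝ) = 0 := by push_cast at hm3; linarith [s.2.1, t.2.2]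
        have ht : (t : ℝ) = 1 := by push_cast at hm3; linarith [s.2.1, t.2.2]
        simp only [v, hs, ht, hn]; push_cast; ring
    intro s t h
    rcases le_total (s : ℝ) t with hst | hst
    · exact key s t hst h
    · exact (key t s hst h.symm).symm
  let w : Metric.sphere c r → ℂ := fun z => v (Function.surjInv hps z)
  have hwp : w ∘ p = v := by
    funext s
    exact hpv _ _ (Function.surjInv_eq hps (p s))
  have hw : Continuous w := hq.continuous_iff.2 (hwp ▸ hv)
  obtain ⟨u, hu, huw⟩ := exists_contOn hw
  refine ⟨n, u, hu, ?_⟩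
  · intro z hz
    obtain ⟨s, rfl⟩ := loop_surj c hz
    have hw' : w ⟨loop c r s, hz⟩ = v s := congr_fun hwp s
    rw [huw ⟨_, hz⟩, hw', loop_zpow c hr, ← Complex.exp_add]
    simp only [v]
    rw [← he]; congr 1; ring

/-- log of `z - a` on a ball not containing `a`. -/
theorem log_off {a c : ℂ} {r : ℝ} (h : r < dist c a) (hr : 0 ≤ r) :
    ∃ u : ℂ → ℂ, ContinuousOn u (Metric.sphere c r) ∧
      ∀ z ∈ Metric.sphere c r, z - a = Complex.exp (u z) := by
  have hca : c - a ≠ 0 := by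
    intro h'; rw [dist_eq_norm, h', norm_zero] at h; linarith
  have key : ∀ z ∈ Metric.sphere c r, (z - a) / (c - a) ∈ Complex.slitPlane := by
    intro z hz
    have : (z - a) / (c - a) = 1 + (z - c) / (c - a) := by field_simp; ring
    rw [this]
    apply Complex.mem_slitPlane_of_norm_lt_one
    rw [norm_div, div_lt_one (norm_pos_iff.2 hca), ← dist_eq_norm, ← dist_eq_norm]
    rw [Metric.mem_sphere] at hz; linarith
  refine ⟨fun z => Complex.log (c - a) + Complex.log ((z - a) / (c - a)), ?_, ?_⟩
  · refine continuousOn_const.add (ContinuousOn.clog ?_ key)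
    fun_prop
  · intro z hz
    rw [Complex.exp_add, Complex.exp_log hca, Complex.exp_log (Complex.slitPlane_ne_zero (key z hz))]
    field_simp

end HBE
namespace HBE

open Set Topology unitInterval

noncomputable def cc (γ k : ℕ) : ℂ := ((((2 * k + 1 : ℝ)) / γ - 1 : ℝ) : ℂ)
noncomputable def rr (γ : ℕ) : ℝ := 1 / (4 * γ)

theorem planar_eq (γ : ℕ) : planarDomain γ =
    Metric.ball 0 1 \ ⋃ k : Fin γ, Metric.closedBall (cc γ k) (rr γ) := by
  ext z
  simp only [planarDomain, mem_sdiff, mem_iUnion, Finset.mem_range, cc, rr, not_exists]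
  exact and_congr_right fun _ => ⟨fun h k => h k k.2, fun h k hk => h ⟨k, hk⟩⟩

variable {γ : ℕ}

theorem rr_pos (k : Fin γ) : 0 < rr γ := by
  have : 0 < (γ : ℝ) := by exact_mod_cast k.pos
  unfold rr; positivity

theorem norm_cc (k : Fin γ) : ‖cc γ k‖ ≤ 1 - 4 * rr γ := by
  have h : 0 < (γ : ℝ) := by exact_mod_cast k.pos
  have hk : (k : ℝ) + 1 ≤ γ := by exact_mod_cast k.2
  have hk0 : (0 : ℝ) ≤ k := by positivity
  rw [cc, Complex.norm_real, Real.norm_eq_abs, abs_le]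
  have e : 4 * rr γ = 1 / γ := by unfold rr; field_simp
  rw [e]
  constructor
  · rw [← sub_nonneg]; field_simp; linarith
  · rw [← sub_nonneg]; field_simp; linarith

theorem dist_cc {j k : Fin γ} (hjk : j ≠ k) : 8 * rr γ ≤ dist (cc γ j) (cc γ k) := by
  have h : 0 < (γ : ℝ) := by exact_mod_cast k.pos
  have e : cc γ j - cc γ k = ((8 * rr γ * ((j : ℝ) - k) : ℝ) : ℂ) := by
    unfold cc rr; push_cast; field_simp; ring
  have h1 : (1 : ℝ) ≤ |(j : ℝ) - k| := by
    have : (1 : ℤ) ≤ |(j : ℤ) - (k : ℤ)| := by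
      apply Int.one_le_abs
      have : (j : ℕ) ≠ k := fun h => hjk (Fin.ext h)
      omega
    exact_mod_cast this
  rw [dist_eq_norm, e, Complex.norm_real, Real.norm_eq_abs, abs_mul,
    abs_of_pos (by have := rr_pos k; positivity)]
  have := rr_pos k
  nlinarith

theorem planar_open : IsOpen (planarDomain γ) := by
  rw [planar_eq]
  exact Metric.isOpen_ball.sdiff (isClosed_iUnion_of_finite fun _ => Metric.isClosed_closedBall)

theorem not_ball {z : ℂ} (hz : z ∈ closure (planarDomain γ)) (k : Fin γ) :
    rr γ ≤ dist z (cc γ k) := by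
  have : closure (planarDomain γ) ⊆ (Metric.ball (cc γ k) (rr γ))ᶜ := by
    apply closure_minimal _ Metric.isOpen_ball.isClosed_compl
    rw [planar_eq]
    intro w hw hw'
    exact hw.2 (mem_iUnion.2 ⟨k, Metric.ball_subset_closedBall hw'⟩)
  simpa using this hz

theorem closure_le {z : ℂ} (hz : z ∈ closure (planarDomain γ)) : ‖z‖ ≤ 1 := by
  have : closure (planarDomain γ) ⊆ Metric.closedBall 0 1 := by
    apply closure_minimal _ Metric.isClosed_closedBall
    rw [planar_eq]
    exact fun w hw => Metric.ball_subset_closedBall hw.1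
  simpa using this hz

theorem sphere_sub (k : Fin γ) : Metric.sphere (cc γ k) (rr γ) ⊆ closure (planarDomain γ) := by
  intro z hz
  rw [Metric.mem_sphere] at hz
  have hr := rr_pos k
  let U := Metric.ball (0 : ℂ) 1 \ ⋃ j : {j : Fin γ // j ≠ k}, Metric.closedBall (cc γ j) (rr γ)
  have hU : IsOpen U :=
    Metric.isOpen_ball.sdiff (isClosed_iUnion_of_finite fun _ => Metric.isClosed_closedBall)
  have hUV : U ∩ (Metric.closedBall (cc γ k) (rr γ))ᶜ ⊆ planarDomain γ := by
    rw [planar_eq]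
    rintro w ⟨⟨h1, h2⟩, h3⟩
    refine ⟨h1, fun h => ?_⟩
    obtain ⟨j, hj⟩ := mem_iUnion.1 h
    by_cases hjk : j = k
    · exact h3 (hjk ▸ hj)
    · exact h2 (mem_iUnion.2 ⟨⟨j, hjk⟩, hj⟩)
  refine closure_mono hUV (hU.inter_closure ⟨⟨?_, ?_⟩, ?_⟩)
  · have := dist_triangle z (cc γ k) 0
    have h2 := norm_cc k
    rw [dist_zero_right, dist_zero_right] at this
    rw [mem_ball_zero_iff]; linarith
  · simp only [mem_iUnion, not_exists]
    rintro ⟨j, hj⟩ h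
    rw [Metric.mem_closedBall] at h
    have := dist_cc hj
    have h2 := dist_triangle_left (cc γ j) (cc γ k) z
    simp only at h
    linarith
  · rw [closure_compl, interior_closedBall _ hr.ne']
    simp [hz]

theorem unit_sub : Metric.sphere (0 : ℂ) 1 ⊆ closure (planarDomain γ) := by
  intro z hz
  let U := (⋃ j : Fin γ, Metric.closedBall (cc γ j) (rr γ))ᶜ
  have hU : IsOpen U := (isClosed_iUnion_of_finite fun _ => Metric.isClosed_closedBall).isOpen_compl
  have hUV : U ∩ Metric.ball 0 1 ⊆ planarDomain γ := by
    rw [planar_eq]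
    exact fun w hw => ⟨hw.2, hw.1⟩
  refine closure_mono hUV (hU.inter_closure ⟨?_, ?_⟩)
  · simp only [U, mem_compl_iff, mem_iUnion, not_exists]
    intro j h
    rw [Metric.mem_closedBall] at h
    have := dist_triangle z (cc γ j) 0
    have h2 := norm_cc j
    have hr := rr_pos j
    rw [Metric.mem_sphere] at hz
    rw [hz, dist_zero_right] at this
    linarith
  · rw [closure_ball _ one_ne_zero]
    exact Metric.sphere_subset_closedBall hz

theorem frontier_planar : frontier (planarDomain γ) =
    Metric.sphere 0 1 ∪ ⋃ k : Fin γ, Metric.sphere (cc γ k) (rr γ) := by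
  rw [planar_open.frontier_eq]
  apply Subset.antisymm
  · rintro z ⟨hz, hz'⟩
    rw [planar_eq] at hz'
    by_cases h1 : z ∈ Metric.ball (0 : ℂ) 1
    · right
      by_contra h2
      apply hz' ⟨h1, fun h => h2 ?_⟩
      obtain ⟨k, hk⟩ := mem_iUnion.1 h
      exact mem_iUnion.2 ⟨k, le_antisymm hk (not_ball hz k)⟩
    · left
      rw [mem_ball_zero_iff] at h1
      rw [mem_sphere_zero_iff_norm]
      exact le_antisymm (closure_le hz) (not_lt.1 h1)
  · rintro z (hz | hz)
    · refine ⟨unit_sub hz, fun h => ?_⟩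
      rw [planar_eq] at h
      have := h.1
      rw [mem_ball_zero_iff] at this
      rw [mem_sphere_zero_iff_norm] at hz
      linarith
    · obtain ⟨k, hk⟩ := mem_iUnion.1 hz
      refine ⟨sphere_sub k hk, fun h => ?_⟩
      rw [planar_eq] at h
      exact h.2 (mem_iUnion.2 ⟨k, Metric.sphere_subset_closedBall hk⟩)

theorem closedBall_sub : Metric.closedBall (0 : ℂ) 1 ⊆
    closure (planarDomain γ) ∪ ⋃ k : Fin γ, Metric.closedBall (cc γ k) (rr γ) := by
  intro z hz
  by_cases h : z ∈ ⋃ k : Fin γ, Metric.closedBall (cc γ k) (rr γ)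
  · exact Or.inr h
  · left
    by_cases h1 : z ∈ Metric.ball (0 : ℂ) 1
    · apply subset_closure
      rw [planar_eq]; exact ⟨h1, h⟩
    · apply unit_sub
      rw [Metric.mem_ball, not_lt] at h1
      exact le_antisymm hz h1

theorem glue {ι X : Type*} [Finite ι] [TopologicalSpace X] {S : ι → Set X}
    (hS : ∀ i, IsClosed (S i)) (hd : ∀ i j x, x ∈ S i → x ∈ S j → i = j) {u : ι → X → ℂ}
    (hu : ∀ i, ContinuousOn (u i) (S i)) :
    ∃ h : X → ℂ, ContinuousOn h (⋃ i, S i) ∧ ∀ i, EqOn h (u i) (S i) := by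
  classical
  let h : X → ℂ := fun x => if hx : ∃ i, x ∈ S i then u hx.choose x else 0
  have hh : ∀ i, EqOn h (u i) (S i) := by
    intro i x hx
    have hx' : ∃ i, x ∈ S i := ⟨i, hx⟩
    simp only [h, dif_pos hx']
    rw [hd _ _ x hx'.choose_spec hx]
  exact ⟨h, (locallyFinite_of_finite S).continuousOn_iUnion hS
    (fun i => (hu i).congr (hh i)), hh⟩

theorem log_planar {f : ℂ → ℂ} (hf : ContinuousOn f (closure (planarDomain γ)))
    (h0 : ∀ z ∈ closure (planarDomain γ), f z ≠ 0)
    (hlog : ∀ k : Fin γ, ∃ u : ℂ → ℂ, ContinuousOn u (Metric.sphere (cc γ k) (rr γ)) ∧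
      ∀ z ∈ Metric.sphere (cc γ k) (rr γ), Complex.exp (u z) = f z) :
    ∃ g : ℂ → ℂ, ContinuousOn g (closure (planarDomain γ)) ∧
      ∀ z ∈ closure (planarDomain γ), Complex.exp (g z) = f z := by
  choose u hu hue using hlog
  obtain ⟨h, hh, hhu⟩ := glue (fun k : Fin γ => Metric.isClosed_sphere (x := cc γ k) (ε := rr γ))
    (by
      intro i j x hi hj
      by_contra hij
      have := dist_cc hij
      have hr := rr_pos i
      rw [Metric.mem_sphere] at hi hj
      have := dist_triangle_left (cc γ i) (cc γ j) x
      linarith) hu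
  obtain ⟨H, hH, hHh⟩ := exists_ext (isClosed_iUnion_of_finite
    fun k : Fin γ => Metric.isClosed_sphere (x := cc γ k) (ε := rr γ)) hh
  classical
  let F : ℂ → ℂ := fun z => if z ∈ closure (planarDomain γ) then f z else Complex.exp (H z)
  have hF1 : EqOn F f (closure (planarDomain γ)) := fun z hz => if_pos hz
  have hF2 : EqOn F (fun z => Complex.exp (H z))
      (⋃ k : Fin γ, Metric.closedBall (cc γ k) (rr γ)) := by
    intro z hz
    obtain ⟨k, hk⟩ := mem_iUnion.1 hz
    by_cases hzP : z ∈ closure (planarDomain γ)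
    · have hzs : z ∈ Metric.sphere (cc γ k) (rr γ) := le_antisymm hk (not_ball hzP k)
      rw [hF1 hzP, ← hue k z hzs]
      simp only
      rw [hHh (mem_iUnion.2 ⟨k, hzs⟩), hhu k hzs]
    · exact if_neg hzP
  have hFc : ContinuousOn F (closure (planarDomain γ) ∪
      ⋃ k : Fin γ, Metric.closedBall (cc γ k) (rr γ)) := by
    apply ContinuousOn.union_of_isClosed
    · exact hf.congr hF1
    · exact (Continuous.continuousOn (by fun_prop)).congr hF2
    · exact isClosed_closure
    · exact isClosed_iUnion_of_finite fun _ => Metric.isClosed_closedBall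
  have hF0 : ∀ z, F z ≠ 0 := by
    intro z
    by_cases hz : z ∈ closure (planarDomain γ)
    · rw [hF1 hz]; exact h0 z hz
    · simp only [F, if_neg hz]; exact Complex.exp_ne_zero _
  have hm : ∀ z : ℂ, (max 1 ‖z‖) ≠ 0 := fun z => by positivity
  let ret : ℂ → ℂ := fun z => (max 1 ‖z‖)⁻¹ • z
  have hret : Continuous ret := by
    refine Continuous.smul (Continuous.inv₀ (by fun_prop) hm) continuous_id
  have hret2 : ∀ z, ret z ∈ Metric.closedBall (0 : ℂ) 1 := by
    intro z
    rw [mem_closedBall_zero_iff, norm_smul, norm_inv, Real.norm_eq_abs,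
      abs_of_pos (by positivity), inv_mul_le_one₀ (by positivity)]
    exact le_max_right _ _
  obtain ⟨g, hg, he⟩ := exists_log (fun z => F (ret z))
    (hFc.comp_continuous hret fun z => closedBall_sub (hret2 z)) (fun z => hF0 _)
  refine ⟨g, hg.continuousOn, fun z hz => ?_⟩
  have : ret z = z := by simp [ret, max_eq_left (closure_le hz)]
  rw [he, this, hF1 hz]

noncomputable def tau (γ : ℕ) (k : Fin γ) (z : ℂ) : ℝ := max 0 (2 - dist z (cc γ k) / rr γ)

noncomputable def psi (γ : ℕ) (k : Fin γ) (x : ℂ × ℝ) : ℂ :=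
  open Classical in
  if x.2 = 1 then Complex.exp (2 * Real.pi * Complex.I * tau γ k x.1) else 1

theorem psi_ne (k : Fin γ) (x) : psi γ k x ≠ 0 := by
  unfold psi; split_ifs
  · exact Complex.exp_ne_zero _
  · exact one_ne_zero

theorem tau_cont (k : Fin γ) : Continuous (tau γ k) := by unfold tau; fun_prop

theorem tau_self (k : Fin γ) {z : ℂ} (hz : z ∈ Metric.sphere (cc γ k) (rr γ)) :
    tau γ k z = 1 := by
  rw [Metric.mem_sphere] at hz
  rw [tau, hz, div_self (rr_pos k).ne']; norm_num

theorem tau_far (k : Fin γ) {z : ℂ} (hz : 2 * rr γ ≤ dist z (cc γ k)) :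
    tau γ k z = 0 := by
  rw [tau, max_eq_left]
  have := (le_div_iff₀ (rr_pos k)).2 hz
  linarith

theorem tau_other {j k : Fin γ} (hjk : j ≠ k) {z : ℂ} (hz : z ∈ Metric.sphere (cc γ k) (rr γ)) :
    tau γ j z = 0 := by
  apply tau_far
  have := dist_cc hjk
  have hr := rr_pos k
  rw [Metric.mem_sphere] at hz
  have h2 := dist_triangle_left (cc γ j) (cc γ k) z
  linarith

theorem tau_unit (j : Fin γ) {z : ℂ} (hz : z ∈ Metric.sphere (0 : ℂ) 1) :
    tau γ j z = 0 := by
  apply tau_far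
  have h2 := norm_cc j
  have hr := rr_pos j
  rw [Metric.mem_sphere] at hz
  have := dist_triangle z (cc γ j) 0
  rw [hz, dist_zero_right] at this
  linarith

end HBE
namespace HBE

open Set Topology unitInterval

variable {γ : ℕ}

theorem genus_eq (γ : ℕ) : genusSurface γ =
    (closure (planarDomain γ) ×ˢ {0} ∪ closure (planarDomain γ) ×ˢ {1}) ∪
      frontier (planarDomain γ) ×ˢ Icc (0 : ℝ) 1 := by
  rw [genusSurface, frontier_prod_eq, frontier_Ioo one_pos, closure_Ioo zero_ne_one]
  congr 1
  rw [← prod_union]; rfl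

theorem cc_ne {z : ℂ} (hz : z ∈ closure (planarDomain γ)) (k : Fin γ) : z - cc γ k ≠ 0 := by
  have h := not_ball hz k
  have := rr_pos k
  rw [← norm_pos_iff, ← dist_eq_norm]; linarith

theorem genus_fst {x : ℂ × ℝ} (hx : x ∈ genusSurface γ) : x.1 ∈ closure (planarDomain γ) := by
  rw [genus_eq] at hx
  rcases hx with (h | h) | h
  · exact h.1
  · exact h.1
  · exact frontier_subset_closure h.1

/-- The case with vanishing windings around the holes of the bottom. -/
theorem gen_aux {f : ℂ × ℝ → ℂ} (hf : ContinuousOn f (genusSurface γ))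
    (h0 : ∀ x ∈ genusSurface γ, f x ≠ 0)
    (hlog : ∀ k : Fin γ, ∃ u : ℂ → ℂ, ContinuousOn u (Metric.sphere (cc γ k) (rr γ)) ∧
      ∀ z ∈ Metric.sphere (cc γ k) (rr γ), Complex.exp (u z) = f (z, 0)) :
    ∃ (b : Fin γ → ℤ) (h : ℂ × ℝ → ℂ), ContinuousOn h (genusSurface γ) ∧
      ∀ x ∈ genusSurface γ, f x = (∏ k, psi γ k x ^ b k) * Complex.exp (h x) := by
  have hG := genus_eq γ
  have hbot : ∀ z ∈ closure (planarDomain γ), (z, (0 : ℝ)) ∈ genusSurface γ := fun z hz => by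
    rw [hG]; exact Or.inl (Or.inl ⟨hz, rfl⟩)
  have htop : ∀ z ∈ closure (planarDomain γ), (z, (1 : ℝ)) ∈ genusSurface γ := fun z hz => by
    rw [hG]; exact Or.inl (Or.inr ⟨hz, rfl⟩)
  have hwall : ∀ z ∈ frontier (planarDomain γ), ∀ t ∈ Icc (0 : ℝ) 1, (z, t) ∈ genusSurface γ :=
    fun z hz t ht => by rw [hG]; exact Or.inr ⟨hz, ht⟩
  have hsf : ∀ k : Fin γ, Metric.sphere (cc γ k) (rr γ) ⊆ frontier (planarDomain γ) := by
    intro k z hz; rw [frontier_planar]; exact Or.inr (mem_iUnion.2 ⟨k, hz⟩)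
  have huf : Metric.sphere (0 : ℂ) 1 ⊆ frontier (planarDomain γ) := by
    intro z hz; rw [frontier_planar]; exact Or.inl hz
  -- bottom
  obtain ⟨g0, hg0, he0⟩ := log_planar (f := fun z => f (z, 0))
    (hf.comp (by fun_prop) hbot) (fun z hz => h0 _ (hbot z hz)) hlog
  -- walls
  obtain ⟨g1, hg1, he1, hs1⟩ := lift_homotopy
    (fun p : I × frontier (planarDomain γ) => f ((p.2 : ℂ), (p.1 : ℝ)))
    (hf.comp_continuous (by fun_prop) fun p => hwall _ p.2.2 _ p.1.2)
    (fun p => h0 _ (hwall _ p.2.2 _ p.1.2)) (fun z => g0 z)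
    (hg0.comp_continuous (by fun_prop) fun z => frontier_subset_closure z.2)
    (fun z => he0 z (frontier_subset_closure z.2))
  obtain ⟨W, hW, hWe⟩ := exists_contOn (S := frontier (planarDomain γ) ×ˢ Icc (0 : ℝ) 1)
    (w := fun x => g1 (⟨x.1.2, x.2.2⟩, ⟨x.1.1, x.2.1⟩)) (by fun_prop)
  have hW1 : ContinuousOn (fun z => W (z, 1)) (frontier (planarDomain γ)) :=
    hW.comp (by fun_prop) fun z hz => ⟨hz, by simp⟩
  have hWexp : ∀ z ∈ frontier (planarDomain γ), ∀ t ∈ Icc (0 : ℝ) 1,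
      Complex.exp (W (z, t)) = f (z, t) := by
    intro z hz t ht
    rw [hWe ⟨(z, t), hz, ht⟩, he1]
  have hW0 : ∀ z ∈ frontier (planarDomain γ), W (z, 0) = g0 z := by
    intro z hz
    rw [hWe ⟨(z, 0), hz, by simp⟩]
    exact hs1 ⟨z, hz⟩
  -- top
  have one_mem : (1 : ℝ) ∈ Icc (0 : ℝ) 1 := by simp
  obtain ⟨g2, hg2, he2⟩ := log_planar (f := fun z => f (z, 1))
    (hf.comp (by fun_prop) htop) (fun z hz => h0 _ (htop z hz))
    (fun k => ⟨fun z => W (z, 1), hW1.mono (hsf k), fun z hz => hWexp z (hsf k hz) 1 one_mem⟩)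
  have hconst : ∀ S ⊆ frontier (planarDomain γ), IsPreconnected S →
      ∃ n : ℤ, ∀ z ∈ S, W (z, 1) = g2 z + n * (2 * Real.pi * Complex.I) := by
    intro S hS hSc
    rcases S.eq_empty_or_nonempty with rfl | ⟨z0, hz0⟩
    · exact ⟨0, by simp⟩
    have hee : ∀ z ∈ S, Complex.exp (W (z, 1)) = Complex.exp (g2 z) := fun z hz => by
      rw [hWexp z (hS hz) 1 one_mem, he2 z (frontier_subset_closure (hS hz))]
    obtain ⟨n, hn⟩ := Complex.exp_eq_exp_iff_exists_int.1 (hee z0 hz0)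
    refine ⟨n, fun z hz => ?_⟩
    have := exp_diff_const hSc (hW1.mono hS) (hg2.mono (hS.trans frontier_subset_closure)) hee hz hz0
    linear_combination this + hn
  obtain ⟨m, hm⟩ := hconst _ huf (sphere_pre 0 1)
  choose n hn using fun k => hconst _ (hsf k) (sphere_pre _ _)
  classical
  let T : ℂ → ℂ := fun z => g2 z + m * (2 * Real.pi * Complex.I) +
    ∑ k, (n k - m : ℤ) * (2 * Real.pi * Complex.I * tau γ k z)
  have hTc : ContinuousOn T (closure (planarDomain γ)) := by
    refine (hg2.add continuousOn_const).add (Continuous.continuousOn ?_)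
    have := fun k => tau_cont (γ := γ) k
    fun_prop
  have hTW : ∀ z ∈ frontier (planarDomain γ), T z = W (z, 1) := by
    intro z hz
    rw [frontier_planar] at hz
    rcases hz with hz | hz
    · simp only [T, hm z hz, tau_unit _ hz]; simp
    · obtain ⟨k, hk⟩ := mem_iUnion.1 hz
      simp only [T]
      rw [Finset.sum_eq_single k (fun j _ hj => by rw [tau_other hj hk]; simp) (by simp),
        tau_self k hk, hn k z hk]
      push_cast; ring
  let h : ℂ × ℝ → ℂ := fun x => if x.2 = 1 then T x.1 else if x.2 = 0 then g0 x.1 else W x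
  have hh1 : EqOn h (fun x => T x.1) (closure (planarDomain γ) ×ˢ {1}) := by
    rintro ⟨z, t⟩ ⟨hz, rfl⟩; simp [h]
  have hh0 : EqOn h (fun x => g0 x.1) (closure (planarDomain γ) ×ˢ {0}) := by
    rintro ⟨z, t⟩ ⟨hz, rfl⟩; simp [h]
  have hhW : EqOn h W (frontier (planarDomain γ) ×ˢ Icc (0 : ℝ) 1) := by
    rintro ⟨z, t⟩ ⟨hz, ht⟩
    simp only at hz ht
    by_cases h1 : t = 1
    · subst h1; simp [h, hTW z hz]
    by_cases h2 : t = 0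
    · subst h2; simp [h, hW0 z hz]
    simp [h, h1, h2]
  refine ⟨fun k => -(n k - m), h, ?_, ?_⟩
  · rw [hG]
    refine ContinuousOn.union_of_isClosed (ContinuousOn.union_of_isClosed ?_ ?_ ?_ ?_) ?_ ?_ ?_
    · exact (hg0.comp continuousOn_fst fun x hx => hx.1).congr hh0
    · exact (hTc.comp continuousOn_fst fun x hx => hx.1).congr hh1
    · exact isClosed_closure.prod isClosed_singleton
    · exact isClosed_closure.prod isClosed_singleton
    · exact hW.congr hhW
    · exact (isClosed_closure.prod isClosed_singleton).union
        (isClosed_closure.prod isClosed_singleton)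
    · exact isClosed_frontier.prod isClosed_Icc
  · have hnot1 : ∀ x : ℂ × ℝ, x.2 ≠ 1 → (∏ k, psi γ k x ^ (-(n k - m))) = 1 := by
      intro x hx; simp [psi, hx]
    have htopx : ∀ z ∈ closure (planarDomain γ),
        f (z, 1) = (∏ k, psi γ k (z, 1) ^ (-(n k - m))) * Complex.exp (h (z, 1)) := by
      intro z hz
      rw [hh1 (show ((z, 1) : ℂ × ℝ) ∈ _ from ⟨hz, rfl⟩)]
      simp only [T, psi, if_true, Complex.exp_add, Complex.exp_two_pi_mul_I, one_zpow, mul_one,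
        Complex.exp_sum, Complex.exp_int_mul, he2 z hz]
      rw [mul_left_comm, ← Finset.prod_mul_distrib, Finset.prod_eq_one, mul_one]
      intro k _
      rw [← zpow_add₀ (Complex.exp_ne_zero _)]; simp
    rintro ⟨z, t⟩ hx
    by_cases h1 : t = 1
    · subst h1; exact htopx z (genus_fst hx)
    rw [hnot1 _ h1, one_mul]
    rw [hG] at hx
    rcases hx with (hx | hx) | hx
    · rw [hh0 hx]; obtain ⟨hz, ht⟩ := hx
      simp only [mem_singleton_iff] at ht hz; subst ht; rw [he0 z hz]
    · exact absurd hx.2 h1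
    · rw [hhW hx, hWexp z hx.1 t hx.2]

theorem gen {f : ℂ × ℝ → ℂ} (hf : ContinuousOn f (genusSurface γ))
    (h0 : ∀ x ∈ genusSurface γ, f x ≠ 0) :
    ∃ (a b : Fin γ → ℤ) (h : ℂ × ℝ → ℂ), ContinuousOn h (genusSurface γ) ∧
      ∀ x ∈ genusSurface γ, f x = (∏ k : Fin γ, (x.1 - cc γ k) ^ a k) * (∏ k, psi γ k x ^ b k) *
        Complex.exp (h x) := by
  have hbot : ∀ z ∈ closure (planarDomain γ), (z, (0 : ℝ)) ∈ genusSurface γ := fun z hz => by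
    rw [genus_eq]; exact Or.inl (Or.inl ⟨hz, rfl⟩)
  choose a u hu hue using fun k : Fin γ => exists_winding (cc γ k) (rr_pos k)
    (f := fun z => f (z, 0)) (hf.comp (by fun_prop) fun z hz => hbot z (sphere_sub k hz))
    (fun z hz => h0 _ (hbot z (sphere_sub k hz)))
  have hne : ∀ x ∈ genusSurface γ, (∏ k : Fin γ, (x.1 - cc γ k) ^ a k) ≠ 0 := fun x hx =>
    Finset.prod_ne_zero_iff.2 fun k _ => zpow_ne_zero _ (cc_ne (genus_fst hx) k)
  obtain ⟨b, h, hh, he⟩ := gen_aux (γ := γ) (f := fun x => f x / ∏ k : Fin γ, (x.1 - cc γ k) ^ a k)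
    (hf.div (by
      refine continuousOn_finsetProd _ fun k _ => ContinuousOn.zpow₀ (by fun_prop) _ ?_
      exact fun x hx => Or.inl (cc_ne (genus_fst hx) k)) hne)
    (fun x hx => div_ne_zero (h0 x hx) (hne x hx))
    (by
      intro k
      have := fun j : {j : Fin γ // j ≠ k} => log_off (a := cc γ j) (c := cc γ k) (r := rr γ)
        (by have := dist_cc j.2.symm; have := rr_pos k; linarith) (rr_pos k).le
      choose v hv hve using this
      refine ⟨fun z => u k z - ∑ j : {j : Fin γ // j ≠ k}, a j * v j z, ?_, ?_⟩
      · refine (hu k).sub (continuousOn_finsetSum _ fun j _ => ?_)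
        exact continuousOn_const.mul (hv j)
      · intro z hz
        have hzne := cc_ne (sphere_sub k hz) k
        have hsplit : ∏ j : Fin γ, (z - cc γ j) ^ a j = (z - cc γ k) ^ a k *
            ∏ j : {j : Fin γ // j ≠ k}, (z - cc γ j) ^ a j :=
          (Fintype.prod_eq_mul_prod_subtype_ne _ k)
        rw [hue k z hz, hsplit, Complex.exp_sub, Complex.exp_sum, mul_div_mul_left _ _
          (zpow_ne_zero _ hzne)]
        congr 1
        refine Finset.prod_congr rfl fun j _ => ?_
        rw [hve j z hz, Complex.exp_int_mul])
  refine ⟨a, b, h, hh, fun x hx => ?_⟩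
  have := he x hx
  rw [div_eq_iff (hne x hx)] at this
  rw [this]; ring

end HBE
namespace HBE

open Set Topology unitInterval

variable {γ : ℕ}

noncomputable def phi (γ : ℕ) (k : Fin γ) (x : ℂ × ℝ) : ℂ :=
  ⟨dist x.1 (cc γ k) ^ 2 + x.2 ^ 2 - (2 * rr γ) ^ 2, 2 * (2 * rr γ) * x.2⟩

theorem phi_cont (k : Fin γ) : Continuous (phi γ k) := by
  have : phi γ k = fun x => ((dist x.1 (cc γ k) ^ 2 + x.2 ^ 2 - (2 * rr γ) ^ 2 : ℝ) : ℂ) +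
      ((2 * (2 * rr γ) * x.2 : ℝ) : ℂ) * Complex.I := by
    funext x
    rw [← Complex.mk_eq_add_mul_I]; rfl
  rw [this]
  fun_prop

theorem phi_zero {k : Fin γ} {x : ℂ × ℝ} (h : phi γ k x = 0) :
    x ∈ Metric.sphere (cc γ k) (2 * rr γ) ×ˢ ({0} : Set ℝ) := by
  have hr := rr_pos k
  have him : 2 * (2 * rr γ) * x.2 = 0 := congr_arg Complex.im h
  have hre : dist x.1 (cc γ k) ^ 2 + x.2 ^ 2 - (2 * rr γ) ^ 2 = 0 := congr_arg Complex.re h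
  have h2 : x.2 = 0 := by
    rcases mul_eq_zero.1 him with h | h
    · linarith
    · exact h
  refine ⟨?_, h2⟩
  rw [h2] at hre
  rw [Metric.mem_sphere]
  have : dist x.1 (cc γ k) ^ 2 = (2 * rr γ) ^ 2 := by linarith
  exact (pow_left_inj₀ dist_nonneg (by linarith) two_ne_zero).1 this

theorem cc_notMem (k : Fin γ) : cc γ k ∉ planarDomain γ := by
  intro h
  exact cc_ne (subset_closure h) k (sub_self _)

theorem big_sphere_sub (k : Fin γ) : Metric.sphere (cc γ k) (2 * rr γ) ⊆ planarDomain γ := by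
  intro z hz
  have hr := rr_pos k
  rw [Metric.mem_sphere] at hz
  rw [planar_eq]
  refine ⟨?_, ?_⟩
  · have := dist_triangle z (cc γ k) 0
    have h2 := norm_cc k
    rw [dist_zero_right, dist_zero_right] at this
    rw [mem_ball_zero_iff]; linarith
  · simp only [mem_iUnion, not_exists]
    intro j h
    rw [Metric.mem_closedBall] at h
    by_cases hj : j = k
    · subst hj; linarith
    have := dist_cc hj
    have h2 := dist_triangle_left (cc γ j) (cc γ k) z
    linarith

theorem lower {Ω : Set (ℂ × ℝ)} (hΩ : IsOpen Ω) {R : ℝ} (hR : ∀ x ∈ Ω, |x.2| ≤ R)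
    (hsub : closure Ω ⊆ openHandlebody γ)
    (hC : ∀ k : Fin γ, Metric.sphere (cc γ k) (2 * rr γ) ×ˢ ({0} : Set ℝ) ⊆ Ω)
    (a b : Fin γ → ℤ) {h : ℂ × ℝ → ℂ} (hh : ContinuousOn h (frontier Ω))
    (heq : ∀ x ∈ frontier Ω, (∏ k : Fin γ, (x.1 - cc γ k) ^ a k) * (∏ k, phi γ k x ^ b k) =
      Complex.exp (h x)) : (∀ k, a k = 0) ∧ ∀ k, b k = 0 := by
  obtain ⟨H, hH, hHh⟩ := exists_ext isClosed_frontier hh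
  have hphi : ∀ k : Fin γ, ∀ x ∈ Ωᶜ, phi γ k x ≠ 0 := fun k x hx h0 => hx (hC k (phi_zero h0))
  have hcc : ∀ k : Fin γ, ∀ x ∈ closure Ω, x.1 - cc γ k ≠ 0 := fun k x hx =>
    cc_ne (subset_closure (hsub hx).1) k
  classical
  let A : ℂ × ℝ → ℂ := fun x => (∏ k : Fin γ, (x.1 - cc γ k) ^ a k) * Complex.exp (-H x)
  let B : ℂ × ℝ → ℂ := fun x => ∏ k, phi γ k x ^ (-b k)
  let F : ℂ × ℝ → ℂ := fun x => if x ∈ Ω then A x else B x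
  have hFA : EqOn F A Ω := fun x hx => if_pos hx
  have hFB : EqOn F B Ωᶜ := fun x hx => if_neg hx
  have hF : Continuous F := by
    refine continuous_if (p := fun x => x ∈ Ω) ?_ ?_ ?_
    · intro x hx
      have hx' : x ∈ frontier Ω := hx
      have hxc : x ∈ Ωᶜ := by
        rw [hΩ.frontier_eq] at hx'; exact hx'.2
      have h1 := heq x hx'
      rw [← hHh hx'] at h1
      have h2 : (∏ k, phi γ k x ^ b k) ≠ 0 :=
        Finset.prod_ne_zero_iff.2 fun k _ => zpow_ne_zero _ (hphi k x hxc)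
      simp only [A, B, zpow_neg, Finset.prod_inv_distrib, Complex.exp_neg]
      rw [← h1]
      have h3 : (∏ k : Fin γ, (x.1 - cc γ k) ^ a k) ≠ 0 :=
        Finset.prod_ne_zero_iff.2 fun k _ =>
          zpow_ne_zero _ (hcc k x (frontier_subset_closure hx'))
      field_simp
    · refine ContinuousOn.mul (continuousOn_finsetProd _ fun k _ =>
        ContinuousOn.zpow₀ (by fun_prop) _ ?_) (by fun_prop)
      exact fun x hx => Or.inl (hcc k x hx)
    · have : closure {x | x ∉ Ω} = Ωᶜ := hΩ.isClosed_compl.closure_eq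
      rw [this]
      exact continuousOn_finsetProd _ fun k _ =>
        ContinuousOn.zpow₀ (phi_cont k).continuousOn _ fun x hx => Or.inl (hphi k x hx)
  have hF0 : ∀ x, F x ≠ 0 := by
    intro x
    by_cases hx : x ∈ Ω
    · rw [hFA hx]
      exact mul_ne_zero (Finset.prod_ne_zero_iff.2 fun k _ =>
          zpow_ne_zero _ (hcc k x (subset_closure hx))) (Complex.exp_ne_zero _)
    · rw [hFB hx]
      exact Finset.prod_ne_zero_iff.2 fun k _ => zpow_ne_zero _ (hphi k x hx)
  obtain ⟨G, hG, hGe⟩ := exists_log F hF hF0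
  refine ⟨fun k => ?_, fun k => ?_⟩
  · have hr := rr_pos k
    have := fun j : {j : Fin γ // j ≠ k} => log_off (a := cc γ j) (c := cc γ k) (r := 2 * rr γ)
        (by have := dist_cc j.2.symm; linarith) (by linarith)
    choose v hv hve using this
    refine winding_zero (c := cc γ k) (r := 2 * rr γ) (by linarith)
      (u := fun z => G (z, 0) + H (z, 0) - ∑ j : {j : Fin γ // j ≠ k}, a j * v j z) ?_ ?_
    · refine ContinuousOn.sub (by fun_prop) (continuousOn_finsetSum _ fun j _ => ?_)
      exact continuousOn_const.mul (hv j)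
    · intro z hz
      have hzΩ : (z, (0 : ℝ)) ∈ Ω := hC k ⟨hz, rfl⟩
      have hsplit : ∏ j : Fin γ, (z - cc γ j) ^ a j = (z - cc γ k) ^ a k *
          ∏ j : {j : Fin γ // j ≠ k}, (z - cc γ j) ^ a j :=
        (Fintype.prod_eq_mul_prod_subtype_ne _ k)
      have hv2 : ∏ j : {j : Fin γ // j ≠ k}, (z - cc γ j) ^ a j =
          Complex.exp (∑ j : {j : Fin γ // j ≠ k}, a j * v j z) := by
        rw [Complex.exp_sum]
        refine Finset.prod_congr rfl fun j _ => ?_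
        rw [hve j z hz, Complex.exp_int_mul]
      rw [Complex.exp_sub, Complex.exp_add, hGe, hFA hzΩ]
      simp only [A]
      rw [hsplit, hv2, Complex.exp_neg]
      have h1 := Complex.exp_ne_zero (∑ j : {j : Fin γ // j ≠ k}, a j * v j z)
      have h2 := Complex.exp_ne_zero (H (z, 0))
      field_simp
  · have hr := rr_pos k
    have hr1 : 4 * rr γ ≤ 1 := by
      have := norm_cc k
      have := norm_nonneg (cc γ k)
      linarith
    let T : ℝ := max R (2 * rr γ) + 1
    have hTR : R < T := by have := le_max_left R (2 * rr γ); simp only [T]; linarith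
    have hTr : 2 * rr γ < T := by have := le_max_right R (2 * rr γ); simp only [T]; linarith
    have hexpG : ∀ x ∈ Ωᶜ, ∀ l : Fin γ → ℂ, (∀ j, Complex.exp (l j) = phi γ j x) →
        Complex.exp (G x) = Complex.exp (-∑ j, b j * l j) := by
      intro x hx l hl
      rw [hGe, hFB hx, ← Finset.sum_neg_distrib, Complex.exp_sum]
      refine Finset.prod_congr rfl fun j _ => ?_
      rw [← hl j, Complex.exp_neg, Complex.exp_int_mul, zpow_neg]
    have slit : ∀ (j : Fin γ) (x : ℂ × ℝ), (2 * rr γ < dist x.1 (cc γ j) ∨ 2 * rr γ < |x.2|) →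
        0 < (phi γ j x).re := by
      intro j x hx
      change 0 < dist x.1 (cc γ j) ^ 2 + x.2 ^ 2 - (2 * rr γ) ^ 2
      rcases hx with hx | hx
      · nlinarith [sq_nonneg x.2]
      · rw [← sq_abs x.2]
        nlinarith [sq_nonneg (dist x.1 (cc γ j))]
    have slit' : ∀ (j : Fin γ) (x : ℂ × ℝ), (2 * rr γ < dist x.1 (cc γ j) ∨ 2 * rr γ < |x.2|) →
        phi γ j x ∈ Complex.slitPlane := fun j x hx => Or.inl (slit j x hx)
    -- first comparison, through infinity
    let K : Set (ℂ × ℝ) := ((univ : Set ℂ) ×ˢ {T} ∪ {2} ×ˢ (univ : Set ℝ)) ∪ (univ : Set ℂ) ×ˢ {-T}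
    have hK : IsPreconnected K := by
      refine IsPreconnected.union ((2 : ℂ), -T) (Or.inr ⟨rfl, trivial⟩) ⟨trivial, rfl⟩
        (IsPreconnected.union ((2 : ℂ), T) ⟨trivial, rfl⟩ ⟨rfl, trivial⟩ ?_ ?_) ?_
      · exact isPreconnected_univ.prod isPreconnected_singleton
      · exact isPreconnected_singleton.prod isPreconnected_univ
      · exact isPreconnected_univ.prod isPreconnected_singleton
    have hT0 : 0 < T := by linarith
    have hKabs : ∀ x ∈ K, x.1 = 2 ∨ |x.2| = T := by
      rintro x ((hx | hx) | hx)
      · right; rw [show x.2 = T from hx.2, abs_of_pos hT0]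
      · exact Or.inl hx.1
      · right; rw [show x.2 = -T from hx.2, abs_neg, abs_of_pos hT0]
    have hKΩ : ∀ x ∈ K, x ∈ Ωᶜ := by
      intro x hx hxΩ
      rcases hKabs x hx with h1 | h1
      · have h2 := closure_le (subset_closure (hsub (subset_closure hxΩ)).1)
        rw [h1] at h2
        norm_num at h2
      · have := hR x hxΩ
        linarith
    have hKslit : ∀ x ∈ K, ∀ j : Fin γ, (2 * rr γ < dist x.1 (cc γ j) ∨ 2 * rr γ < |x.2|) := by
      intro x hx j
      rcases hKabs x hx with h1 | h1
      · left
        have h2 := norm_cc j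
        have := dist_triangle (2 : ℂ) (cc γ j) 0
        rw [dist_zero_right, dist_zero_right] at this
        rw [h1]
        norm_num at this
        linarith
      · right; linarith
    have E1 := exp_diff_const hK (u := G)
      (v := fun x => -∑ j, b j * Complex.log (phi γ j x)) hG.continuousOn
      (by
        refine (continuousOn_finsetSum _ fun j _ => continuousOn_const.mul ?_).neg
        exact (phi_cont j).continuousOn.clog fun x hx => slit' j x (hKslit x hx j))
      (fun x hx => hexpG x (hKΩ x hx) _ fun j => Complex.exp_log
        (Complex.slitPlane_ne_zero (slit' j x (hKslit x hx j))))
      (x := (cc γ k, T)) (y := (cc γ k, -T)) (Or.inl (Or.inl ⟨trivial, rfl⟩))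
      (Or.inr ⟨trivial, rfl⟩)
    -- second comparison, along the axis
    let w : ℝ → ℂ := fun t => ⟨t, 2 * rr γ⟩
    have hwc : Continuous w := by
      have : w = fun t : ℝ => (t : ℂ) + ((2 * rr γ : ℝ) : ℂ) * Complex.I := by
        funext t; rw [← Complex.mk_eq_add_mul_I]
      rw [this]; fun_prop
    have hws : ∀ t, w t ∈ Complex.slitPlane := fun t =>
      Or.inr (by change 2 * rr γ ≠ 0; linarith)
    let l : Fin γ → ℝ → ℂ := fun j t =>
      if j = k then 2 * Complex.log (w t) else Complex.log (phi γ j (cc γ k, t))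
    have haxis : ∀ j, j ≠ k → ∀ t : ℝ, phi γ j (cc γ k, t) ∈ Complex.slitPlane := by
      intro j hj t
      refine slit' j _ (Or.inl ?_)
      have := dist_cc hj.symm
      change 2 * rr γ < dist (cc γ k) (cc γ j)
      linarith
    have hlc : ∀ j, Continuous (l j) := by
      intro j
      by_cases hj : j = k
      · simp only [l, if_pos hj]
        exact continuous_const.mul (hwc.clog hws)
      · simp only [l, if_neg hj]
        exact ((phi_cont j).comp (by fun_prop : Continuous fun t : ℝ => (cc γ k, t))).clog
          (haxis j hj)
    have hle : ∀ (t : ℝ) j, Complex.exp (l j t) = phi γ j (cc γ k, t) := by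
      intro t j
      by_cases hj : j = k
      · subst hj
        simp only [l, if_true]
        rw [two_mul, Complex.exp_add, Complex.exp_log (Complex.slitPlane_ne_zero (hws t))]
        apply Complex.ext
        · simp [w, phi]; ring
        · simp [w, phi]; ring
      · simp only [l, if_neg hj]
        exact Complex.exp_log (Complex.slitPlane_ne_zero (haxis j hj t))
    have E2 := exp_diff_const (S := (univ : Set ℝ)) isPreconnected_univ
      (u := fun t => G (cc γ k, t)) (v := fun t => -∑ j, b j * l j t)
      (by fun_prop) (by fun_prop)
      (fun t _ => hexpG (cc γ k, t) (fun hx => cc_notMem k (hsub (subset_closure hx)).1) _ (hle t))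
      (mem_univ T) (mem_univ (-T))
    have hsum : ∀ t : ℝ, (∑ j, b j * Complex.log (phi γ j (cc γ k, t))) - ∑ j, b j * l j t =
        b k * (Complex.log (phi γ k (cc γ k, t)) - 2 * Complex.log (w t)) := by
      intro t
      rw [← Finset.sum_sub_distrib, Finset.sum_eq_single k]
      · simp only [l, if_true]; ring
      · intro j _ hj
        simp only [l, if_neg hj, sub_self]
      · simp
    have hfin : (b k : ℂ) * ((Complex.log (phi γ k (cc γ k, T)) - 2 * Complex.log (w T)) -
        (Complex.log (phi γ k (cc γ k, -T)) - 2 * Complex.log (w (-T)))) = 0 := by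
      rw [mul_sub, ← hsum, ← hsum]
      linear_combination E1 - E2
    rcases mul_eq_zero.1 hfin with hb | hd
    · exact_mod_cast hb
    · exfalso
      have him := congr_arg Complex.im hd
      simp only [Complex.sub_im, Complex.mul_im, Complex.log_im, Complex.re_ofNat, Complex.im_ofNat,
        zero_mul, add_zero, Complex.zero_im] at him
      have a1 : 0 ≤ (phi γ k (cc γ k, T)).arg := by
        rw [Complex.arg_nonneg_iff]
        change 0 ≤ 2 * (2 * rr γ) * T
        positivity
      have a2 : (phi γ k (cc γ k, -T)).arg < 0 := by
        rw [Complex.arg_neg_iff]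
        change 2 * (2 * rr γ) * (-T) < 0
        have : 0 < 2 * (2 * rr γ) * T := by positivity
        linarith
      have b1 : |(w T).arg| < Real.pi / 2 := by
        rw [Complex.abs_arg_lt_pi_div_two_iff]
        exact Or.inl hT0
      have b2 : 0 ≤ (w (-T)).arg := by
        rw [Complex.arg_nonneg_iff]
        change 0 ≤ 2 * rr γ
        linarith
      have b3 : Real.pi / 2 < |(w (-T)).arg| := by
        rw [← not_le, Complex.abs_arg_le_pi_div_two_iff, not_le]
        change -T < 0
        linarith
      rw [abs_of_nonneg b2] at b3
      have := (abs_lt.1 b1).2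
      linarith

theorem relation {γ γ' : ℕ} (hlt : γ' < γ) {Y : Set (ℂ × ℝ)} (e : Y ≃ₜ genusSurface γ')
    (F : Fin γ ⊕ Fin γ → ℂ × ℝ → ℂ) (hF : ∀ s, Continuous (F s))
    (hF0 : ∀ s, ∀ x ∈ Y, F s x ≠ 0) :
    ∃ c : Fin γ ⊕ Fin γ → ℤ, (∃ s, c s ≠ 0) ∧ ∃ h : ℂ × ℝ → ℂ, ContinuousOn h Y ∧
      ∀ x ∈ Y, ∏ s, F s x ^ c s = Complex.exp (h x) := by
  let gg : Fin γ' ⊕ Fin γ' → ℂ × ℝ → ℂ := Sum.elim (fun k x => x.1 - cc γ' k) (psi γ')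
  have hgg : ∀ i, ∀ y ∈ genusSurface γ', gg i y ≠ 0 := by
    rintro (i | i) y hy
    · exact cc_ne (genus_fst hy) i
    · exact psi_ne i y
  have key : ∀ s, ∃ (v : Fin γ' ⊕ Fin γ' → ℤ) (h : ℂ × ℝ → ℂ), ContinuousOn h (genusSurface γ') ∧
      ∀ x : Y, F s x = (∏ i, gg i (e x) ^ v i) * Complex.exp (h (e x)) := by
    intro s
    obtain ⟨f, hf, hfe⟩ := exists_contOn (S := genusSurface γ')
      (w := fun y => F s (e.symm y)) (by have := hF s; fun_prop)
    obtain ⟨a, b, h, hh, he⟩ := gen hf (fun x hx => by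
      rw [hfe ⟨x, hx⟩]; exact hF0 s _ (e.symm _).2)
    refine ⟨Sum.elim a b, h, hh, fun x => ?_⟩
    have h1 := he (e x) (e x).2
    rw [hfe, e.symm_apply_apply] at h1
    rw [h1, Fintype.prod_sum_type]
    simp [gg]
  choose v h hh hv using key
  have hdep : ¬ LinearIndependent ℤ v := by
    intro hli
    have := hli.fintype_card_le_finrank
    simp at this
    omega
  obtain ⟨c, hc, s, hs⟩ := Fintype.not_linearIndependent_iff.1 hdep
  obtain ⟨u, hu, hue⟩ := exists_contOn (S := Y) (w := fun x => ∑ s, c s * h s (e x)) (by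
    refine continuous_finsetSum _ fun s _ => continuous_const.mul ?_
    exact (hh s).comp_continuous (by fun_prop) fun x => (e x).2)
  refine ⟨c, ⟨s, hs⟩, u, hu, fun x hx => ?_⟩
  rw [hue ⟨x, hx⟩, Complex.exp_sum]
  have : ∀ s, F s x ^ c s = (∏ i, gg i (e ⟨x, hx⟩) ^ (c s * v s i)) *
      Complex.exp (c s * h s (e ⟨x, hx⟩)) := by
    intro s
    rw [hv s ⟨x, hx⟩, mul_zpow, Complex.exp_int_mul, ← Finset.prod_zpow]
    congr 1
    refine Finset.prod_congr rfl fun i _ => ?_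
    rw [← zpow_mul, mul_comm]
  rw [Finset.prod_congr rfl fun s _ => this s, Finset.prod_mul_distrib, Finset.prod_comm]
  rw [Finset.prod_eq_one, one_mul]
  intro i _
  have hne := hgg i _ (e ⟨x, hx⟩).2
  have hsum : ∑ s, c s * v s i = 0 := by
    have := congr_fun hc i
    simpa using this
  have hz : ∀ (S : Finset (Fin γ ⊕ Fin γ)) (g : ℂ), g ≠ 0 →
      ∏ s ∈ S, g ^ (c s * v s i) = g ^ (∑ s ∈ S, c s * v s i) := by
    intro S g hg
    induction S using Finset.induction_on with
    | empty => simp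
    | insert j S hj ih => rw [Finset.prod_insert hj, Finset.sum_insert hj, zpow_add₀ hg, ih]
  rw [hz _ _ hne, hsum, zpow_zero]

end HBE

open HBE in
theorem handlebody_exhaustion_genus_lower_bound
    (γ : ℕ) (Ω : ℕ → Set (ℂ × ℝ))
    (hdom : ∀ i, IsC1DomainAmbient (Ω i))
    (hnest : ∀ i, CptSub (Ω i) (Ω (i + 1)))
    (hin : ∀ i, CptSub (Ω i) (openHandlebody γ))
    (hexh : (⋃ i, Ω i) = openHandlebody γ)
    (hconn : ∀ i, IsConnected (Ω i))
    (hcconn : ∀ i, IsConnected (openHandlebody γ \ Ω i)) :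
    ∃ N : ℕ, ∀ i ≥ N, ∀ γ' : ℕ,
      Nonempty ((frontier (Ω i)) ≃ₜ (genusSurface γ')) → γ ≤ γ' := by
  have hmono : Monotone Ω := monotone_nat_of_le_succ fun i =>
    subset_closure.trans ((hnest i).2.trans interior_subset)
  have hcpt : IsCompact (⋃ k : Fin γ, Metric.sphere (cc γ k) (2 * rr γ) ×ˢ ({0} : Set ℝ)) :=
    isCompact_iUnion fun k => (isCompact_sphere _ _).prod isCompact_singleton
  obtain ⟨N, hN⟩ := hcpt.elim_directed_cover Ω (fun i => (hdom i).1) (by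
    rw [hexh]
    refine Set.iUnion_subset fun k x hx => ⟨big_sphere_sub k hx.1, trivial⟩) hmono.directed_le
  refine ⟨N, fun i hi γ' => ?_⟩
  rintro ⟨e⟩
  by_contra hlt
  rw [not_le] at hlt
  have hopen := (hdom i).1
  have hsub : closure (Ω i) ⊆ openHandlebody γ := (hin i).2.trans interior_subset
  have hC : ∀ k : Fin γ, Metric.sphere (cc γ k) (2 * rr γ) ×ˢ ({0} : Set ℝ) ⊆ Ω i := fun k =>
    (Set.subset_iUnion (fun k : Fin γ => Metric.sphere (cc γ k) (2 * rr γ) ×ˢ ({0} : Set ℝ)) k).trans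
      (hN.trans (hmono hi))
  obtain ⟨R, hR⟩ := (hin i).1.isBounded.exists_norm_le
  obtain ⟨c, ⟨s, hs⟩, h, hh, he⟩ := relation hlt e
    (Sum.elim (fun k x => x.1 - cc γ k) (phi γ)) (by
      rintro (k | k)
      · simp only [Sum.elim_inl]; fun_prop
      · exact phi_cont k) (by
      rintro (k | k) x hx
      · exact cc_ne (subset_closure (hsub (frontier_subset_closure hx)).1) k
      · intro h0
        rw [hopen.frontier_eq] at hx
        exact hx.2 (hC k (phi_zero h0)))
  have := lower hopen (R := R) (fun x hx => (norm_snd_le x).trans (hR x (subset_closure hx)))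
    hsub hC (fun k => c (Sum.inl k)) (fun k => c (Sum.inr k)) hh (fun x hx => by
      rw [← he x hx, Fintype.prod_sum_type]; simp)
  rcases s with k | k
  · exact hs (this.1 k)
  · exact hs (this.2 k)
end

section
/- Let M be a connected noncompact manifold with exactly one end. Let E ⊂ M be a connected subset with E ≠ M, such that the topological boundary ∂E is compact and M ∖ E has noncompact closure. Then E has compact closure. -/
theorem inter_frontier_aux {X : Type*} [TopologicalSpace X] {U L : Set X}
    (hU : IsPreconnected U) (h1 : (U ∩ L).Nonempty) (h2 : (U \ L).Nonempty) :
    (U ∩ frontier L).Nonempty := by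
  by_contra hem
  have hd : ∀ y ∈ U, y ∉ frontier L := fun y hy hf => hem ⟨y, hy, hf⟩
  have key : ∀ y ∈ U, y ∈ L → y ∈ interior L := fun y hy hL => by
    by_contra h
    exact hd y hy ⟨subset_closure hL, h⟩
  have key2 : ∀ y ∈ U, y ∉ L → y ∈ (closure L)ᶜ := fun y hy hL h =>
    hd y hy ⟨h, fun h' => hL (interior_subset h')⟩
  obtain ⟨x, hxU, hxL⟩ := h1
  obtain ⟨y, hyU, hyL⟩ := h2
  obtain ⟨z, -, hz1, hz2⟩ := hU (interior L) (closure L)ᶜ isOpen_interior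
    isClosed_closure.isOpen_compl
    (fun w hw => (em (w ∈ L)).imp (key w hw) (key2 w hw))
    ⟨x, hxU, key x hxU hxL⟩ ⟨y, hyU, key2 y hyU hyL⟩
  exact hz2 (subset_closure (interior_subset hz1))

theorem closure_compact_aux {X : Type*} [TopologicalSpace X] [T2Space X]
    [ConnectedSpace X] [LocallyCompactSpace X] [LocallyConnectedSpace X]
    (K A : Set X) (hK : IsCompact K) (hA : A ≠ Set.univ) (hclA : closure A ⊆ A ∪ K)
    (hAK : A ⊆ Kᶜ) (hsub : ∀ x ∈ A, connectedComponentIn Kᶜ x ⊆ A)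
    (hcomp : ∀ x ∈ A, IsCompact (closure (connectedComponentIn Kᶜ x))) :
    IsCompact (closure A) := by
  obtain ⟨L, hL, hKL⟩ := exists_compact_superset hK
  have hLc : IsClosed L := hL.isClosed
  have hKo : IsOpen Kᶜ := hK.isClosed.isOpen_compl
  have hfr : IsCompact (frontier L) := hL.of_isClosed_subset isClosed_frontier hLc.frontier_subset
  have hfK : ∀ x ∈ frontier L, x ∉ K := fun x hx hxK => hx.2 (hKL hxK)
  have hS : IsCompact (closure A ∩ frontier L) := hfr.inter_left isClosed_closure
  have hSA : ∀ x ∈ closure A ∩ frontier L, x ∈ A := fun x hx =>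
    (hclA hx.1).resolve_right (hfK x hx.2)
  obtain ⟨t, htS, ht⟩ := hS.elim_nhds_subcover (fun x => connectedComponentIn Kᶜ x)
    (fun x hx => hKo.connectedComponentIn.mem_nhds
      (mem_connectedComponentIn (hfK x hx.2)))
  have hbig : IsCompact (L ∪ ⋃ x ∈ t, closure (connectedComponentIn Kᶜ x)) :=
    hL.union (t.isCompact_biUnion fun x hx => hcomp x (hSA x (htS x hx)))
  refine hbig.of_isClosed_subset isClosed_closure (closure_minimal ?_ hbig.isClosed)
  intro x hx
  by_cases hxL : x ∈ L
  · exact Or.inl hxL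
  right
  have hxU : x ∈ connectedComponentIn Kᶜ x := mem_connectedComponentIn (hAK hx)
  have hne : (connectedComponentIn Kᶜ x ∩ frontier L).Nonempty := by
    by_contra hem
    have hUL : connectedComponentIn Kᶜ x ⊆ Lᶜ := by
      intro y hy hyL
      exact hem (inter_frontier_aux isPreconnected_connectedComponentIn
        ⟨y, hy, hyL⟩ ⟨x, hxU, hxL⟩)
    have hcl : closure (connectedComponentIn Kᶜ x) ⊆ Kᶜ := by
      intro y hy hyK
      have h1 := closure_mono hUL hy
      rw [closure_compl] at h1
      exact h1 (hKL hyK)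
    have hcl2 : closure (connectedComponentIn Kᶜ x) ⊆ connectedComponentIn Kᶜ x :=
      isPreconnected_connectedComponentIn.closure.subset_connectedComponentIn
        (subset_closure hxU) hcl
    have hclopen : IsClopen (connectedComponentIn Kᶜ x) :=
      ⟨isClosed_of_closure_subset hcl2, hKo.connectedComponentIn⟩
    have := hclopen.eq_univ ⟨x, hxU⟩
    exact hA (Set.univ_subset_iff.1 (this ▸ hsub x hx))
  obtain ⟨y, hyU, hyL⟩ := hne
  have hy := ht ⟨subset_closure (hsub x hx hyU), hyL⟩
  simp only [Set.mem_iUnion] at hy ⊢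
  obtain ⟨z, hz, hyz⟩ := hy
  refine ⟨z, hz, subset_closure ?_⟩
  rw [connectedComponentIn_eq hyz, ← connectedComponentIn_eq hyU]
  exact hxU

theorem component_subset_aux {X : Type*} [TopologicalSpace X] (E : Set X) (x : X)
    (hx : x ∈ interior E) : connectedComponentIn (frontier E)ᶜ x ⊆ interior E := by
  have hxf : x ∈ (frontier E)ᶜ := fun h => h.2 hx
  intro y hy
  by_contra hyE
  have hyf := connectedComponentIn_subset _ _ hy
  have hyE' : y ∉ E := fun h => hyf ⟨subset_closure h, hyE⟩
  obtain ⟨z, hz, hzf⟩ := inter_frontier_aux isPreconnected_connectedComponentIn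
    ⟨x, mem_connectedComponentIn hxf, interior_subset hx⟩ ⟨y, hy, hyE'⟩
  exact connectedComponentIn_subset _ _ hz hzf

theorem closure_compact_of_comp {X : Type*} [TopologicalSpace X] [T2Space X]
    [ConnectedSpace X] [LocallyCompactSpace X] [LocallyConnectedSpace X]
    (E : Set X) (hE : E ≠ Set.univ) (hK : IsCompact (frontier E))
    (hcomp : ∀ x ∈ interior E, IsCompact (closure (connectedComponentIn (frontier E)ᶜ x))) :
    IsCompact (closure E) := by
  have h := closure_compact_aux (frontier E) (interior E) hK
    (fun h => hE (interior_eq_univ.1 h))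
    ((closure_mono interior_subset).trans (closure_eq_interior_union_frontier E).le)
    (fun x hx h => h.2 hx) (fun x hx => component_subset_aux E x hx) hcomp
  rw [closure_eq_interior_union_frontier]
  refine (h.union hK).of_isClosed_subset ?_ (Set.union_subset_union_left _ subset_closure)
  rw [← closure_eq_interior_union_frontier]
  exact isClosed_closure

/-- **Lemma 2.7.** Let `M` be a connected noncompact manifold with exactly one end, and
`E ⊆ M` a connected subset with `E ≠ M`, compact topological boundary `∂E`, and such that
`M \ E` has noncompact closure.  Then `E` has compact closure. -/
theorem subset_with_compact_boundary_is_precompact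
    (n : ℕ) (M : Type*) [TopologicalSpace M] [T2Space M]
    [ChartedSpace (EuclideanSpace ℝ (Fin n)) M]
    [ConnectedSpace M] [NoncompactSpace M]
    (hend : HasOneEnd M)
    (E : Set M) (hEconn : IsConnected E) (hEne : E ≠ Set.univ)
    (hbd : IsCompact (frontier E))
    (hcompl : ¬ IsCompact (closure Eᶜ)) :
    IsCompact (closure E) := by
  have : LocallyCompactSpace M := ChartedSpace.locallyCompactSpace (EuclideanSpace ℝ (Fin n)) M
  have : LocallyConnectedSpace M :=
    ChartedSpace.locallyConnectedSpace (EuclideanSpace ℝ (Fin n)) M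
  obtain ⟨C, -, huniq⟩ := hend (frontier E) hbd
  by_contra hcE
  have h1 : ∃ x ∈ interior E, ¬ IsCompact (closure (connectedComponentIn (frontier E)ᶜ x)) := by
    by_contra! h
    exact hcE (closure_compact_of_comp E hEne hbd h)
  have h2 : ∃ x ∈ interior Eᶜ, ¬ IsCompact (closure (connectedComponentIn (frontier E)ᶜ x)) := by
    by_contra! h
    refine hcompl (closure_compact_of_comp Eᶜ ?_ ?_ ?_)
    · intro h0
      obtain ⟨x, hx⟩ := hEconn.nonempty
      exact (h0 ▸ Set.mem_univ x : x ∈ Eᶜ) hx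
    · rwa [frontier_compl]
    · rwa [frontier_compl]
  obtain ⟨x, hx, hxc⟩ := h1
  obtain ⟨y, hy, hyc⟩ := h2
  have hxf : x ∈ (frontier E)ᶜ := fun h => h.2 hx
  have hyf : y ∈ (frontier E)ᶜ := by
    rw [← frontier_compl]
    exact fun h => h.2 hy
  have e : connectedComponentIn (frontier E)ᶜ x = connectedComponentIn (frontier E)ᶜ y :=
    (huniq _ ⟨⟨x, hxf, rfl⟩, hxc⟩).trans (huniq _ ⟨⟨y, hyf, rfl⟩, hyc⟩).symm
  have hyE : y ∈ interior E := component_subset_aux E x hx (e ▸ mem_connectedComponentIn hyf)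
  exact interior_subset hy (interior_subset hyE)
end
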